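/- Let n ≥ 3 and let h₊, h₋ be nonnegative continuous functions on the unit ball B₁(0) ⊂ ℝⁿ with h₊ · h₋ ≡ 0 on B₁(0), and suppose each h₊ and h₋ is harmonic on the open set where it is positive. Then the functional φ(r) = r^{−4} · (∫_{B_r(0) ∩ {h₊>0}} |∇h₊(x)|² |x|^{2−n} dx) · (∫_{B_r(0) ∩ {h₋>0}} |∇h₋(x)|² |x|^{2−n} dx), with values in [0, ∞], is monotone nondecreasing in r on (0, 1): φ(r₁) ≤ φ(r₂) whenever 0 < r₁ ≤ r₂ < 1. -/

import Mathlib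

/-!
The Alt–Caffarelli–Friedman functional is monotone because each of the two factors, written in polar
coordinates as `A(r) = ∫₀ʳ s S(s) ds` with `S(s)` the integral of `|∇u|²` over the positive part of
the sphere of radius `s`, satisfies `s A'(s) ≥ 2 α(s) A(s)`. Here `α(s) ≥ 0` is the
characteristic exponent of the slice `u(s ·)` on the unit sphere, defined by `α (α + n - 2) = E / Q`
with `E` the tangential Dirichlet energy and `Q` the squared norm of the slice. The two slices have
disjoint positivity sets, so the exponents satisfy `α₊ + α₋ ≥ 2` (Friedland–Hayman). Hence
`s (A₊ A₋)' ≥ 4 A₊ A₋` almost everywhere, and since `A₊`, `A₋` are absolutely continuous where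
finite, `A₊ A₋ / s⁴` does not decrease (`quotient_mono`).

*The bound on `A`* (`radEnergy_le`, `exists_exponent`). On the positivity set the Laplacian of
`u² / 2` is `|∇u|²`. Replacing `t² / 2` by the `C²` truncation `(t - ε)₊³ / (2 * t)` gives functions
which are `C²` on the whole ball, subharmonic, and whose Laplacians increase to `|∇u|²`. Green's
formula with weight `|x|^(2-n)` then bounds `A(r)` by boundary terms on the sphere of radius `r`.
The formula itself rests on the fact that derivatives along infinitesimal rotations have zero mean
over spheres, so that only the radial part of the Laplacian survives. Splitting `S` into radial and
tangential parts and using the Cauchy–Schwarz inequality yields `s A' ≥ 2 α A`.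

*The Friedland–Hayman inequality* (`friedland_hayman`). It is deduced from a Gaussian statement:
for functions `F`, `G` with disjoint positivity sets, the Rayleigh quotients
`Λ(F) = ∫ |∇F|² dγ / ∫ F² dγ` satisfy `Λ(F) + Λ(G) ≥ 2` (`gauss_two_phase_pos`). Applied to
`|x|^α exp(-δ|x|²) v(x/|x|)`, whose Gaussian Rayleigh quotient is at most `α + O(δ²)`, it gives
`α + β ≥ 2`.

*The Gaussian inequality* (`gauss_two_phase`). A bound `u(a) v(b) ≤ (B |a - b|)²` is contracted by
the Mehler operator `P_θ u(x) = E[u(x cos θ + Z sin θ)]`: at points a fixed distance apart the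
constant improves by the factor `cos θ + O(θ⁴)`. This is the Prékopa–Leindler inequality for
the Gaussian measure, applied after reflecting `v` in the hyperplane bisecting the two points
(`ou_two_point`). Iterating `P_θ` with Dirichlet conditions on the two supports and comparing growth
rates gives `⟨P_θ F, F⟩ ⟨P_θ G, G⟩ ≤ (cos θ + O(θ⁴))² ‖F‖² ‖G‖²`; together with
`‖F‖² - ⟨P_θ F, F⟩ ≤ (θ²/2) ∫ |∇F|² dγ` the limit `θ → 0` yields the claim.
-/

open Metric Set MeasureTheory
open scoped ENNReal

noncomputable def lapl {n : ℕ} (f : EuclideanSpace ℝ (Fin n) → ℝ)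
    (x : EuclideanSpace ℝ (Fin n)) : ℝ :=
  ∑ i : Fin n, fderiv ℝ (fun y => fderiv ℝ f y (EuclideanSpace.single i (1:ℝ))) x
    (EuclideanSpace.single i (1:ℝ))

def IsHarmonicOn {n : ℕ} (f : EuclideanSpace ℝ (Fin n) → ℝ)
    (U : Set (EuclideanSpace ℝ (Fin n))) : Prop :=
  ContDiffOn ℝ 2 f U ∧ ∀ x ∈ U, lapl f x = 0

/-- The Alt–Caffarelli–Friedman functional
`φ(r) = r⁻⁴ ∫_{B_r ∩ {h₊>0}} |∇h₊|²|x|^{2-n} ∫_{B_r ∩ {h₋>0}} |∇h₋|²|x|^{2-n}`,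
with values in `[0,∞]`. -/
noncomputable def acfPhi (n : ℕ) (hp hm : EuclideanSpace ℝ (Fin n) → ℝ) (r : ℝ) : ℝ≥0∞ :=
  (ENNReal.ofReal (r ^ 4))⁻¹ *
    (∫⁻ x in ball (0 : EuclideanSpace ℝ (Fin n)) r ∩ {x | 0 < hp x},
      ENNReal.ofReal (‖fderiv ℝ hp x‖ ^ 2 * ‖x‖ ^ ((2:ℝ) - (n:ℝ)))) *
    (∫⁻ x in ball (0 : EuclideanSpace ℝ (Fin n)) r ∩ {x | 0 < hm x},
      ENNReal.ofReal (‖fderiv ℝ hm x‖ ^ 2 * ‖x‖ ^ ((2:ℝ) - (n:ℝ))))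

/-! ### The Prékopa–Leindler inequality -/

open scoped Pointwise in
/-- One-dimensional Brunn–Minkowski for compact sets: `A + B` contains the translates
`A + min B` and `max A + B`, which meet in one point. -/
lemma vol_add_le_compact {A B : Set ℝ} (hA : IsCompact A) (hB : IsCompact B)
    (hA' : A.Nonempty) (hB' : B.Nonempty) : volume A + volume B ≤ volume (A + B) := by
  obtain ⟨a, ha, hamax⟩ := hA.exists_isGreatest hA'
  obtain ⟨b, hb, hbmin⟩ := hB.exists_isLeast hB'
  have h1 : (fun x => x + b) '' A ⊆ A + B := by
    rintro _ ⟨x, hx, rfl⟩; exact Set.add_mem_add hx hb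
  have h2 : (fun x => a + x) '' B ⊆ A + B := by
    rintro _ ⟨x, hx, rfl⟩; exact Set.add_mem_add ha hx
  have hd : volume (((fun x => x + b) '' A) ∩ ((fun x => a + x) '' B)) = 0 := by
    refine measure_mono_null (t := {a + b}) ?_ (by simp)
    rintro _ ⟨⟨x, hx, rfl⟩, ⟨y, hy, hxy⟩⟩
    have := hamax hx
    have := hbmin hy
    simp only [mem_singleton_iff] at *
    linarith
  have hm : MeasurableSet ((fun x => a + x) '' B) :=
    (hB.image (by fun_prop)).isClosed.measurableSet
  calc volume A + volume B
      = volume ((fun x => x + b) '' A) + volume ((fun x => a + x) '' B) := by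
        simp
    _ = volume (((fun x => x + b) '' A) ∪ ((fun x => a + x) '' B)) := by
        have := measure_union_add_inter ((fun x => x + b) '' A) hm (μ := volume)
        rw [hd, add_zero] at this
        exact this.symm
    _ ≤ _ := measure_mono (union_subset h1 h2)

open scoped Pointwise in
/-- One-dimensional Brunn–Minkowski; the sumset is measured by the outer measure. -/
lemma vol_add_le {A B : Set ℝ} (hA : MeasurableSet A) (hB : MeasurableSet B)
    (hA' : A.Nonempty) (hB' : B.Nonempty) : volume A + volume B ≤ volume (A + B) := by
  obtain ⟨a0, ha0⟩ := hA'
  obtain ⟨b0, hb0⟩ := hB'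
  rw [hA.measure_eq_iSup_isCompact, hB.measure_eq_iSup_isCompact]
  simp only [iSup_and']
  refine ENNReal.biSup_add_biSup_le' ⟨∅, by simp⟩ ⟨∅, by simp⟩ ?_
  rintro K ⟨hKA, hK⟩ L ⟨hLB, hL⟩
  -- adding one point keeps the compact sets inside and makes them nonempty
  calc volume K + volume L ≤ volume (insert a0 K) + volume (insert b0 L) :=
        add_le_add (measure_mono (subset_insert _ _)) (measure_mono (subset_insert _ _))
    _ ≤ volume (insert a0 K + insert b0 L) :=
        vol_add_le_compact (hK.insert _) (hL.insert _) (insert_nonempty _ _) (insert_nonempty _ _)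
    _ ≤ _ := measure_mono (add_subset_add (insert_subset ha0 hKA) (insert_subset hb0 hLB))

/-- Layer-cake step of Prékopa–Leindler for functions with supremum one. -/
lemma pl_core (f g h : ℝ → ℝ) (hf : Measurable f) (hg : Measurable g) (hh : Measurable h)
    (hf0 : ∀ x, 0 ≤ f x) (hg0 : ∀ x, 0 ≤ g x) (hh0 : ∀ x, 0 ≤ h x)
    (hf1 : ∀ x, f x ≤ 1) (hg1 : ∀ x, g x ≤ 1)
    (hfs : ∀ t < 1, ∃ x, t < f x) (hgs : ∀ t < 1, ∃ x, t < g x)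
    (H : ∀ x y t, 0 ≤ t → t < f x → t < g y → t < h ((x + y) / 2)) :
    (∫⁻ x, ENNReal.ofReal (f x)) + (∫⁻ x, ENNReal.ofReal (g x))
      ≤ 2 * ∫⁻ x, ENNReal.ofReal (h x) := by
  rw [lintegral_eq_lintegral_meas_lt volume (.of_forall hf0) hf.aemeasurable,
    lintegral_eq_lintegral_meas_lt volume (.of_forall hg0) hg.aemeasurable,
    lintegral_eq_lintegral_meas_lt volume (.of_forall hh0) hh.aemeasurable,
    ← lintegral_const_mul' _ _ (by simp)]
  refine (le_lintegral_add _ _).trans (setLIntegral_mono' measurableSet_Ioi ?_)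
  intro t ht
  have ht0 : (0:ℝ) < t := ht
  rcases lt_or_ge t 1 with h1 | h1
  · open scoped Pointwise in
    calc _ ≤ volume ({a | t < f a} + {a | t < g a}) :=
          vol_add_le (measurableSet_lt measurable_const hf)
            (measurableSet_lt measurable_const hg) (hfs t h1) (hgs t h1)
      _ ≤ volume ((2:ℝ) • {a | t < h a}) := by
          refine measure_mono ?_
          rintro _ ⟨x, hx, y, hy, rfl⟩
          refine ⟨(x + y) / 2, H x y t ht0.le hx hy, ?_⟩
          simp only [smul_eq_mul]; ring
      _ = 2 * volume {a | t < h a} := by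
          rw [Measure.addHaar_smul]; simp
  · have e1 : {a | t < f a} = ∅ := by
      ext x; simp only [mem_ofPred_eq, mem_empty_iff_false, iff_false, not_lt]
      exact (hf1 x).trans h1
    have e2 : {a | t < g a} = ∅ := by
      ext x; simp only [mem_ofPred_eq, mem_empty_iff_false, iff_false, not_lt]
      exact (hg1 x).trans h1
    rw [e1, e2]; simp

lemma ennreal_amgm {P Q R : ℝ≥0∞} (h : P + Q ≤ 2 * R) : P * Q ≤ R ^ 2 := by
  rcases eq_or_ne R ∞ with rfl | hR
  · simp
  have hPQ : P + Q ≠ ∞ := ne_top_of_le_ne_top (ENNReal.mul_ne_top (by simp) hR) h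
  have hP : P ≠ ∞ := fun h => hPQ (by simp [h])
  have hQ : Q ≠ ∞ := fun h => hPQ (by simp [h])
  lift P to NNReal using hP
  lift Q to NNReal using hQ
  lift R to NNReal using hR
  norm_cast at h ⊢
  rw [← NNReal.coe_le_coe] at h ⊢
  push_cast at h ⊢
  nlinarith [sq_nonneg ((P:ℝ) - Q), P.2, Q.2, R.2, mul_self_le_mul_self (by positivity) h]

/-- The one-dimensional Prékopa–Leindler inequality for bounded functions, by normalising the
suprema to one. -/
lemma pl_bdd (f g h : ℝ → ℝ≥0∞) (hf : Measurable f) (hg : Measurable g) (hh : Measurable h)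
    (k : ℝ≥0∞) (hk : k ≠ ∞) (hfk : ∀ x, f x ≤ k) (hgk : ∀ x, g x ≤ k)
    (H : ∀ x y, f x * g y ≤ h ((x + y) / 2) ^ 2) :
    (∫⁻ x, f x) * (∫⁻ x, g x) ≤ (∫⁻ x, h x) ^ 2 := by
  set a := ⨆ x, f x with ha
  set b := ⨆ x, g x with hb
  have hfa : ∀ x, f x ≤ a := le_iSup f
  have hgb : ∀ x, g x ≤ b := le_iSup g
  have hat : a ≠ ∞ := ne_top_of_le_ne_top hk (iSup_le hfk)
  have hbt : b ≠ ∞ := ne_top_of_le_ne_top hk (iSup_le hgk)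
  rcases eq_or_ne a 0 with ha0 | ha0
  · have : ∀ x, f x = 0 := fun x => le_antisymm (ha0 ▸ hfa x) bot_le
    simp [this]
  rcases eq_or_ne b 0 with hb0 | hb0
  · have : ∀ x, g x = 0 := fun x => le_antisymm (hb0 ▸ hgb x) bot_le
    simp [this]
  -- normalise by the suprema; `h` is normalised by their geometric mean and truncated at one
  set c := ENNReal.ofReal (Real.sqrt (a.toReal * b.toReal)) with hc
  have hapos := ENNReal.toReal_pos ha0 hat
  have hbpos := ENNReal.toReal_pos hb0 hbt
  have hc0 : c ≠ 0 := by simp only [hc, ne_eq, ENNReal.ofReal_eq_zero, not_le]; positivity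
  have hct : c ≠ ∞ := ENNReal.ofReal_ne_top
  have hc2 : c ^ 2 = a * b := by
    rw [hc, ← ENNReal.ofReal_pow (by positivity), Real.sq_sqrt (by positivity),
      ENNReal.ofReal_mul hapos.le, ENNReal.ofReal_toReal hat, ENNReal.ofReal_toReal hbt]
  have key := pl_core (fun x => (f x / a).toReal) (fun x => (g x / b).toReal)
    (fun x => (min (h x / c) 1).toReal) (by fun_prop) (by fun_prop) (by fun_prop)
    (fun _ => ENNReal.toReal_nonneg) (fun _ => ENNReal.toReal_nonneg)
    (fun _ => ENNReal.toReal_nonneg)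
    (fun x => ENNReal.toReal_le_of_le_ofReal zero_le_one
      (by simpa using ENNReal.div_le_of_le_mul (by simpa using hfa x)))
    (fun x => ENNReal.toReal_le_of_le_ofReal zero_le_one
      (by simpa using ENNReal.div_le_of_le_mul (by simpa using hgb x))) ?_ ?_ ?_
  · have e1 : ∀ x, ENNReal.ofReal ((f x / a).toReal) = f x / a := fun x =>
      ENNReal.ofReal_toReal (ENNReal.div_ne_top (ne_top_of_le_ne_top hat (hfa x)) ha0)
    have e2 : ∀ x, ENNReal.ofReal ((g x / b).toReal) = g x / b := fun x =>
      ENNReal.ofReal_toReal (ENNReal.div_ne_top (ne_top_of_le_ne_top hbt (hgb x)) hb0)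
    have e3 : ∀ x, ENNReal.ofReal ((min (h x / c) 1).toReal) ≤ h x / c := fun x =>
      ENNReal.ofReal_toReal_le.trans (min_le_left _ _)
    simp only [e1, e2] at key
    have key2 := key.trans (mul_le_mul_right (lintegral_mono e3) 2)
    simp only [div_eq_mul_inv] at key2
    rw [lintegral_mul_const _ hf, lintegral_mul_const _ hg, lintegral_mul_const _ hh] at key2
    have key3 := ennreal_amgm key2
    have e4 : (a⁻¹ * b⁻¹) * (a * b) = 1 := by
      rw [mul_mul_mul_comm, ENNReal.inv_mul_cancel ha0 hat, ENNReal.inv_mul_cancel hb0 hbt, one_mul]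
    have e5 : (c⁻¹) ^ 2 * (a * b) = 1 := by
      rw [← hc2, ← mul_pow, ENNReal.inv_mul_cancel hc0 hct, one_pow]
    calc (∫⁻ x, f x) * (∫⁻ x, g x)
        = ((∫⁻ x, f x) * a⁻¹ * ((∫⁻ x, g x) * b⁻¹)) * (a * b) := by
          rw [mul_mul_mul_comm _ a⁻¹, mul_assoc _ (a⁻¹ * b⁻¹), e4, mul_one]
      _ ≤ ((∫⁻ x, h x) * c⁻¹) ^ 2 * (a * b) := mul_le_mul_left key3 _
      _ = _ := by rw [mul_pow, mul_assoc, e5, mul_one]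
  · intro t ht
    rcases lt_or_ge t 0 with h0 | h0
    · exact ⟨0, h0.trans_le ENNReal.toReal_nonneg⟩
    have : ENNReal.ofReal t * a < a := by
      conv_rhs => rw [← one_mul a]
      exact ENNReal.mul_lt_mul_left ha0 hat (by simpa using ht)
    obtain ⟨x, hx⟩ := lt_iSup_iff.1 this
    refine ⟨x, (ENNReal.ofReal_lt_iff_lt_toReal h0
      (ENNReal.div_ne_top (ne_top_of_le_ne_top hat (hfa x)) ha0)).1 ?_⟩
    exact (ENNReal.lt_div_iff_mul_lt (Or.inl ha0) (Or.inl hat)).2 hx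
  · intro t ht
    rcases lt_or_ge t 0 with h0 | h0
    · exact ⟨0, h0.trans_le ENNReal.toReal_nonneg⟩
    have : ENNReal.ofReal t * b < b := by
      conv_rhs => rw [← one_mul b]
      exact ENNReal.mul_lt_mul_left hb0 hbt (by simpa using ht)
    obtain ⟨x, hx⟩ := lt_iSup_iff.1 this
    refine ⟨x, (ENNReal.ofReal_lt_iff_lt_toReal h0
      (ENNReal.div_ne_top (ne_top_of_le_ne_top hbt (hgb x)) hb0)).1 ?_⟩
    exact (ENNReal.lt_div_iff_mul_lt (Or.inl hb0) (Or.inl hbt)).2 hx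
  · intro x y t ht hx hy
    have hx1 : (f x / a).toReal ≤ 1 := ENNReal.toReal_le_of_le_ofReal zero_le_one
      (by simpa using ENNReal.div_le_of_le_mul (by simpa using hfa x))
    rw [← ENNReal.ofReal_lt_iff_lt_toReal ht
      (ENNReal.div_ne_top (ne_top_of_le_ne_top hat (hfa x)) ha0)] at hx
    rw [← ENNReal.ofReal_lt_iff_lt_toReal ht
      (ENNReal.div_ne_top (ne_top_of_le_ne_top hbt (hgb y)) hb0)] at hy
    rw [← ENNReal.ofReal_lt_iff_lt_toReal ht (by simp), lt_min_iff]
    constructor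
    · have h1 := ENNReal.mul_lt_mul hx hy
      have h2 : f x / a * (g y / b) ≤ (h ((x + y) / 2) / c) ^ 2 := by
        rw [div_eq_mul_inv, div_eq_mul_inv, div_eq_mul_inv, mul_mul_mul_comm, mul_pow,
          ← ENNReal.inv_pow, hc2, ENNReal.mul_inv (Or.inl ha0) (Or.inl hat)]
        exact mul_le_mul_left (H x y) _
      have h3 := h1.trans_le h2
      rw [← sq] at h3
      exact (ENNReal.pow_right_strictMono two_ne_zero).lt_iff_lt.1 h3
    · refine hx.trans_le ?_
      exact ENNReal.div_le_of_le_mul (by simpa using hfa x)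

/-- The one-dimensional Prékopa–Leindler inequality (midpoint case). -/
lemma pl_one (f g h : ℝ → ℝ≥0∞) (hf : Measurable f) (hg : Measurable g) (hh : Measurable h)
    (H : ∀ x y, f x * g y ≤ h ((x + y) / 2) ^ 2) :
    (∫⁻ x, f x) * (∫⁻ x, g x) ≤ (∫⁻ x, h x) ^ 2 := by
  have aux : ∀ f : ℝ → ℝ≥0∞, Measurable f →
      ∫⁻ x, f x = ⨆ k : ℕ, ∫⁻ x, min (f x) k := by
    intro f hf
    rw [← lintegral_iSup (fun k => by fun_prop)]
    · congr with x
      rw [← inf_iSup_eq, ENNReal.iSup_natCast, inf_top_eq]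
    · intro i j hij x
      exact min_le_min_left _ (by exact_mod_cast hij)
  rw [aux f hf, aux g hg, ENNReal.iSup_mul]
  refine iSup_le fun i => ?_
  rw [ENNReal.mul_iSup]
  refine iSup_le fun j => ?_
  refine pl_bdd _ _ h (by fun_prop) (by fun_prop) hh (i + j) (by simp)
    (fun _ => (min_le_right _ _).trans le_self_add)
    (fun _ => (min_le_right _ _).trans le_add_self) fun x y => ?_
  exact (mul_le_mul' (min_le_left _ _) (min_le_left _ _)).trans (H x y)

/-- Prékopa–Leindler on `ℝⁿ` by induction on the dimension, integrating out one coordinate. -/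
lemma pl_pi (n : ℕ) : ∀ (f g h : (Fin n → ℝ) → ℝ≥0∞), Measurable f → Measurable g →
    Measurable h → (∀ x y, f x * g y ≤ h ((2:ℝ)⁻¹ • (x + y)) ^ 2) →
    (∫⁻ x, f x) * (∫⁻ x, g x) ≤ (∫⁻ x, h x) ^ 2 := by
  induction n with
  | zero =>
    intro f g h _ _ _ H
    have := H default default
    rw [Subsingleton.elim ((2:ℝ)⁻¹ • (default + default)) (default : Fin 0 → ℝ)] at this
    simp only [lintegral_unique, Measure.volume_pi_eq_dirac (0 : Fin 0 → ℝ), measure_univ, mul_one]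
    convert this
  | succ n ih =>
    intro f g h hf hg hh H
    have split : ∀ f : (Fin (n+1) → ℝ) → ℝ≥0∞, Measurable f →
        ∫⁻ x, f x = ∫⁻ s : ℝ, ∫⁻ y : Fin n → ℝ, f (Fin.cons s y) := by
      intro f hf
      rw [← (volume_preserving_piFinSuccAbove (fun _ : Fin (n+1) => ℝ) 0).symm.lintegral_comp hf,
        Measure.volume_eq_prod]
      refine (lintegral_prod (fun a : ℝ × (Fin n → ℝ) =>
        f ((MeasurableEquiv.piFinSuccAbove (fun _ => ℝ) 0).symm a))
        (hf.comp (MeasurableEquiv.measurable _)).aemeasurable).trans ?_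
      simp [MeasurableEquiv.piFinSuccAbove, Fin.insertNthEquiv]
    have hcons : Measurable (fun p : ℝ × (Fin n → ℝ) => (Fin.cons p.1 p.2 : Fin (n+1) → ℝ)) := by
      refine measurable_pi_lambda _ fun i => ?_
      refine Fin.cases ?_ (fun j => ?_) i
      · simpa using measurable_fst
      · simp only [Fin.cons_succ]; fun_prop
    have hcons' : ∀ s : ℝ, Measurable (fun y : Fin n → ℝ => (Fin.cons s y : Fin (n+1) → ℝ)) :=
      fun s => hcons.comp measurable_prodMk_left
    rw [split f hf, split g hg, split h hh]
    refine pl_one _ _ _ (hf.comp hcons).lintegral_prod_right' (hg.comp hcons).lintegral_prod_right'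
      (hh.comp hcons).lintegral_prod_right' fun s t => ?_
    refine ih _ _ _ (hf.comp (hcons' s)) (hg.comp (hcons' t)) (hh.comp (hcons' _)) fun x y => ?_
    convert H (Fin.cons s x) (Fin.cons t y) using 3
    funext i
    refine Fin.cases ?_ (fun j => ?_) i
    · simp; ring
    · simp; ring

/-- The Prékopa–Leindler inequality on Euclidean space (midpoint case). -/
lemma pl_euclidean {n : ℕ} (f g h : EuclideanSpace ℝ (Fin n) → ℝ≥0∞) (hf : Measurable f)
    (hg : Measurable g) (hh : Measurable h)
    (H : ∀ x y, f x * g y ≤ h ((2:ℝ)⁻¹ • (x + y)) ^ 2) :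
    (∫⁻ x, f x) * (∫⁻ x, g x) ≤ (∫⁻ x, h x) ^ 2 := by
  have e := PiLp.volume_preserving_toLp (Fin n)
  rw [← e.lintegral_comp hf, ← e.lintegral_comp hg, ← e.lintegral_comp hh]
  refine pl_pi n _ _ _ (hf.comp e.measurable) (hg.comp e.measurable) (hh.comp e.measurable) ?_
  intro x y
  exact H _ _

/-! ### Prékopa–Leindler for the Gaussian measure -/

open ProbabilityTheory in
/-- The standard Gaussian measure has density proportional to `exp (-‖x‖² / 2)`. -/
lemma stdGaussian_density (n : ℕ) : ∃ κ : ℝ≥0∞, κ ≠ 0 ∧ κ ≠ ∞ ∧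
    stdGaussian (EuclideanSpace ℝ (Fin n)) = κ • (volume.withDensity
      fun x : EuclideanSpace ℝ (Fin n) => ENNReal.ofReal (Real.exp (-‖x‖ ^ 2 / 2))) := by
  have hb : (0:ℝ) < 1/2 := by norm_num
  have hI := GaussianFourier.integral_rexp_neg_mul_sq_norm (V := EuclideanSpace ℝ (Fin n)) hb
  set C : ℝ := (Real.pi / (1/2)) ^ (Module.finrank ℝ (EuclideanSpace ℝ (Fin n)) / 2 : ℝ) with hC
  have hCpos : 0 < C := by positivity
  refine ⟨ENNReal.ofReal C⁻¹, by simpa using hCpos, by simp, ?_⟩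
  have hint : Integrable (fun x : EuclideanSpace ℝ (Fin n) => Real.exp (-‖x‖ ^ 2 / 2)) := by
    by_contra hcon
    have : ∫ x : EuclideanSpace ℝ (Fin n), Real.exp (-(1/2) * ‖x‖ ^ 2) = 0 := by
      refine integral_undef ?_
      convert hcon using 4
      ring
    rw [hI] at this
    exact hCpos.ne' this
  have hfin : IsFiniteMeasure (ENNReal.ofReal C⁻¹ • (volume.withDensity
      fun x : EuclideanSpace ℝ (Fin n) => ENNReal.ofReal (Real.exp (-‖x‖ ^ 2 / 2)))) := by
    have : IsFiniteMeasure (volume.withDensity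
      fun x : EuclideanSpace ℝ (Fin n) => ENNReal.ofReal (Real.exp (-‖x‖ ^ 2 / 2))) :=
      isFiniteMeasure_withDensity_ofReal hint.2
    exact Measure.smul_finite _ (by simp)
  apply Measure.ext_of_charFun
  ext t
  rw [charFun_stdGaussian, charFun_apply, integral_smul_measure,
    integral_withDensity_eq_integral_toReal_smul (by fun_prop) (by simp)]
  have hF := GaussianFourier.integral_cexp_neg_mul_sq_norm_add
    (V := EuclideanSpace ℝ (Fin n)) (b := (1/2 : ℂ)) (by norm_num) Complex.I t
  have h2 : ∫ x : EuclideanSpace ℝ (Fin n),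
      (ENNReal.ofReal (Real.exp (-‖x‖ ^ 2 / 2))).toReal • Complex.exp (inner ℝ x t * Complex.I)
      = (C:ℂ) * Complex.exp (- ‖t‖ ^ 2 / 2) := by
    rw [hC]
    convert hF using 1
    · refine integral_congr_ae (.of_forall fun x => ?_)
      simp only
      rw [ENNReal.toReal_ofReal (by positivity), Complex.real_smul, Complex.ofReal_exp,
        ← Complex.exp_add, real_inner_comm]
      congr 1
      push_cast
      ring
    · congr 1
      · rw [Complex.ofReal_cpow (by positivity)]
        push_cast
        rfl
      · congr 1
        simp only [Complex.I_sq]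
        ring
  rw [h2, ENNReal.toReal_ofReal (by positivity), Complex.real_smul, ← mul_assoc,
    ← Complex.ofReal_mul, inv_mul_cancel₀ hCpos.ne']
  simp

/-- Prékopa–Leindler with respect to the standard Gaussian measure: the Gaussian density
contributes the factor `exp (-‖x - y‖² / 4)`. -/
lemma pl_gaussian {n : ℕ} (f g h : EuclideanSpace ℝ (Fin n) → ℝ≥0∞) (hf : Measurable f)
    (hg : Measurable g) (hh : Measurable h)
    (H : ∀ x y, f x * g y * ENNReal.ofReal (Real.exp (-‖x - y‖ ^ 2 / 4))
      ≤ h ((2:ℝ)⁻¹ • (x + y)) ^ 2) :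
    (∫⁻ x, f x ∂(ProbabilityTheory.stdGaussian _)) * (∫⁻ x, g x ∂(ProbabilityTheory.stdGaussian _))
      ≤ (∫⁻ x, h x ∂(ProbabilityTheory.stdGaussian _)) ^ 2 := by
  obtain ⟨κ, h0, ht, hκ⟩ := stdGaussian_density n
  rw [hκ]
  simp only [lintegral_smul_measure, smul_eq_mul]
  rw [lintegral_withDensity_eq_lintegral_mul _ (by fun_prop) hf,
    lintegral_withDensity_eq_lintegral_mul _ (by fun_prop) hg,
    lintegral_withDensity_eq_lintegral_mul _ (by fun_prop) hh, mul_mul_mul_comm, mul_pow, ← sq]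
  refine mul_le_mul_right (pl_euclidean _ _ _ (by fun_prop) (by fun_prop) (by fun_prop) ?_) _
  intro x y
  simp only [Pi.mul_apply]
  have hpar := parallelogram_law_with_norm ℝ x y
  calc _ = f x * g y * (ENNReal.ofReal (Real.exp (-‖x‖ ^ 2 / 2)) *
        ENNReal.ofReal (Real.exp (-‖y‖ ^ 2 / 2))) := by ring
    _ = (f x * g y * ENNReal.ofReal (Real.exp (-‖x - y‖ ^ 2 / 4))) *
        ENNReal.ofReal (Real.exp (-‖(2:ℝ)⁻¹ • (x + y)‖ ^ 2 / 2)) ^ 2 := by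
        rw [mul_assoc (f x * g y) (ENNReal.ofReal _) (_ ^ 2)]
        congr 1
        rw [← ENNReal.ofReal_pow (by positivity), ← ENNReal.ofReal_mul (by positivity),
          ← ENNReal.ofReal_mul (by positivity), ← Real.exp_add, ← Real.exp_nat_mul,
          ← Real.exp_add, norm_smul]
        congr 2
        simp only [norm_inv, Real.norm_ofNat]
        push_cast
        linear_combination (1/4) * hpar
    _ ≤ _ := by
        rw [mul_pow, mul_comm]
        exact mul_le_mul_right (H x y) _

/-! ### Contraction of two-point bounds under Gaussian averaging -/

open ProbabilityTheory in
/-- The Ornstein–Uhlenbeck averaging operator `u ↦ E[u(c x + s Z)]`, `Z` standard Gaussian; for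
`c = cos θ`, `s = sin θ` this is the Mehler semigroup at time `-log (cos θ)`. -/
noncomputable def ouAvg {n : ℕ} (c s : ℝ) (u : EuclideanSpace ℝ (Fin n) → ℝ≥0∞)
    (x : EuclideanSpace ℝ (Fin n)) : ℝ≥0∞ :=
  ∫⁻ z, u (c • x + s • z) ∂(stdGaussian (EuclideanSpace ℝ (Fin n)))

/-- The fourth moment of the standard Gaussian measure. -/
noncomputable def gaussM4 (n : ℕ) : ℝ :=
  ∫ z, ‖z‖ ^ 4 ∂(ProbabilityTheory.stdGaussian (EuclideanSpace ℝ (Fin n)))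

lemma integrable_norm_pow_four (n : ℕ) : Integrable (fun z => ‖z‖ ^ 4)
    (ProbabilityTheory.stdGaussian (EuclideanSpace ℝ (Fin n))) := by
  have := (ProbabilityTheory.IsGaussian.memLp_id
    (ProbabilityTheory.stdGaussian (EuclideanSpace ℝ (Fin n))) 4 (by simp)).integrable_norm_pow (p := 4) (by simp)
  simpa using this

lemma gaussM4_nonneg (n : ℕ) : 0 ≤ gaussM4 n := integral_nonneg fun _ => by positivity

/-- Reflecting one of the points in the hyperplane orthogonal to `e` makes the distance depend, up
to a term in `z - w`, only on the midpoint of `z` and `w`. -/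
lemma mirror_norm_sq {n : ℕ} (e z w : EuclideanSpace ℝ (Fin n)) (he : ‖e‖ = 1) (A s : ℝ) :
    ‖A • e + s • (z - (w - (2 * inner ℝ e w) • e))‖ ^ 2 ≤
      (A + 2 * s * inner ℝ e ((2:ℝ)⁻¹ • (z + w))) ^ 2 + s ^ 2 * ‖z - w‖ ^ 2 := by
  have h1 : A • e + s • (z - (w - (2 * inner ℝ e w) • e)) =
      (A + 2 * s * inner ℝ e w) • e + s • (z - w) := by
    module
  rw [h1, norm_add_sq_real, norm_smul, norm_smul, he, real_inner_smul_left, real_inner_smul_right,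
    real_inner_smul_right, inner_add_right, inner_sub_right, mul_one, mul_pow]
  simp only [Real.norm_eq_abs, sq_abs]
  nlinarith [sq_nonneg (s * (inner ℝ e z - inner ℝ e w))]

/-- The Gaussian factor produced by `pl_gaussian` absorbs the term in the difference of the points. -/
lemma max_sq_exp_bound (X s t : ℝ) (hs : 0 ≤ s) :
    (X ^ 2 + s ^ 2 * t ^ 2) * Real.exp (-t ^ 2 / 4) ≤ (max |X| (2 * s)) ^ 2 := by
  set m := max |X| (2 * s)
  have h1 : X ^ 2 ≤ m ^ 2 := by
    rw [← sq_abs X]; exact pow_le_pow_left₀ (abs_nonneg _) (le_max_left _ _) 2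
  have h2 : (2 * s) ^ 2 ≤ m ^ 2 := pow_le_pow_left₀ (by positivity) (le_max_right _ _) 2
  have h3 : t ^ 2 / 4 + 1 ≤ Real.exp (t ^ 2 / 4) := Real.add_one_le_exp _
  have h4 : -t ^ 2 / 4 = -(t ^ 2 / 4) := by ring
  rw [h4, Real.exp_neg, ← div_eq_mul_inv, div_le_iff₀ (Real.exp_pos _)]
  calc X ^ 2 + s ^ 2 * t ^ 2 ≤ m ^ 2 * (t ^ 2 / 4 + 1) := by nlinarith [sq_nonneg t]
    _ ≤ _ := by gcongr

/-- When the noise `2 s m` is small compared with `A`, replacing `A + 2 s m` by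
`max |A + 2 s m| (2 s)` costs only a fourth-order term. -/
lemma max_quartic_bound (A s m N : ℝ) (hs : 0 ≤ s) (hA : 0 < A) (hsA : 4 * s ≤ A) (hm : |m| ≤ N) :
    max |A + 2 * s * m| (2 * s) ≤ A + 2 * s * m + 256 * s ^ 4 / A ^ 3 * N ^ 4 := by
  have hN : 0 ≤ N := (abs_nonneg _).trans hm
  have hpos : 0 ≤ 256 * s ^ 4 / A ^ 3 * N ^ 4 := by positivity
  rcases le_or_gt (2 * s) (A + 2 * s * m) with h | h
  · rw [abs_of_nonneg (by linarith), max_eq_left h]; linarith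
  · have hab := abs_le.1 hm
    have h1 : A ≤ 4 * (s * N) := by nlinarith
    have h2 : 4 * (s * N) ≤ 256 * s ^ 4 / A ^ 3 * N ^ 4 := by
      have : 256 * s ^ 4 / A ^ 3 * N ^ 4 = 4 * (s * N) * ((4 * (s * N)) ^ 3 / A ^ 3) := by
        field_simp; ring
      rw [this]
      have h3 : 1 ≤ (4 * (s * N)) ^ 3 / A ^ 3 := by
        rw [one_le_div (by positivity)]; gcongr
      nlinarith [mul_nonneg hs hN]
    have h4 : s * m ≥ - (s * N) := by nlinarith
    have h5 : s ≤ s * N := by nlinarith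
    refine max_le ?_ (by linarith)
    rcases abs_cases (A + 2 * s * m) with ⟨h6, h7⟩ | ⟨h6, h7⟩ <;> rw [h6] <;> linarith

open ProbabilityTheory in
/-- Contraction of the two-point bound `u(a) v(b) ≤ (B |a - b|)²` under Gaussian averaging.
This is Prékopa–Leindler applied after reflecting `v` in the hyperplane bisecting `x` and `y`. -/
lemma ou_two_point {n : ℕ} (u v : EuclideanSpace ℝ (Fin n) → ℝ≥0∞) (hu : Measurable u)
    (hv : Measurable v) (B c s d : ℝ) (hB : 0 ≤ B) (hc : 1 / 2 ≤ c) (hs : 0 ≤ s) (hd : 0 < d)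
    (hsd : 8 * s ≤ d)
    (H : ∀ a b, u a * v b ≤ ENNReal.ofReal (B * ‖a - b‖) ^ 2)
    (x y : EuclideanSpace ℝ (Fin n)) (hxy : d ≤ ‖x - y‖) :
    ouAvg c s u x * ouAvg c s v y ≤
      ENNReal.ofReal (B * (c + 2048 * gaussM4 n * s ^ 4 / d ^ 4) * ‖x - y‖) ^ 2 := by
  set r := ‖x - y‖ with hr
  have hr0 : 0 < r := hd.trans_le hxy
  set e : EuclideanSpace ℝ (Fin n) := r⁻¹ • (x - y) with he
  have he1 : ‖e‖ = 1 := by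
    rw [he, norm_smul, ← hr, norm_inv, Real.norm_of_nonneg hr0.le, inv_mul_cancel₀ hr0.ne']
  have hre : r • e = x - y := by rw [he, smul_inv_smul₀ hr0.ne']
  let R : EuclideanSpace ℝ (Fin n) ≃ₗᵢ[ℝ] EuclideanSpace ℝ (Fin n) :=
    (Submodule.span ℝ {e})ᗮ.reflection
  have hR : ∀ z, R z = z - (2 * inner ℝ e z) • e := by
    intro z
    simp only [R, Submodule.reflection_orthogonal_apply, Submodule.reflection_singleton_apply, he1]
    simp only [RCLike.ofReal_one, one_pow, div_one]
    rw [mul_smul]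
    module
  have hvR : ouAvg c s v y = ∫⁻ z, v (c • y + s • R z) ∂(stdGaussian _) := by
    have hmap := stdGaussian_map R
    unfold ouAvg
    conv_lhs => rw [← hmap]
    rw [lintegral_map (by fun_prop) R.continuous.measurable]
  set A := c * r with hA
  have hA0 : 0 < A := by positivity
  have hAd : d / 2 ≤ A := by nlinarith
  let h : EuclideanSpace ℝ (Fin n) → ℝ≥0∞ := fun m =>
    ENNReal.ofReal (B * max |A + 2 * s * inner ℝ e m| (2 * s))
  have hhm : Measurable h := by
    refine ENNReal.measurable_ofReal.comp (Continuous.measurable ?_)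
    fun_prop
  have hPL := pl_gaussian (fun z => u (c • x + s • z)) (fun z => v (c • y + s • R z)) h
    (hu.comp (by fun_prop)) (hv.comp (by fun_prop)) hhm ?_
  · rw [hvR]
    refine hPL.trans ?_
    gcongr
    have hint1 : Integrable (fun m : EuclideanSpace ℝ (Fin n) => (inner ℝ e m : ℝ))
        (stdGaussian (EuclideanSpace ℝ (Fin n))) :=
      (IsGaussian.integrable_id (μ := stdGaussian (EuclideanSpace ℝ (Fin n)))).const_inner e
    have hz : ∫ m, (inner ℝ e m : ℝ) ∂(stdGaussian (EuclideanSpace ℝ (Fin n))) = 0 :=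
      integral_strongDual_stdGaussian (innerSL ℝ e)
    calc ∫⁻ m, h m ∂(stdGaussian _)
        ≤ ∫⁻ m, ENNReal.ofReal (B * (A + 2 * s * inner ℝ e m + 256 * s ^ 4 / A ^ 3 * ‖m‖ ^ 4))
          ∂(stdGaussian _) := by
          refine lintegral_mono fun m => ENNReal.ofReal_le_ofReal ?_
          refine mul_le_mul_of_nonneg_left (max_quartic_bound A s _ _ hs hA0 (by linarith) ?_) hB
          simpa [he1] using abs_real_inner_le_norm e m
      _ = ENNReal.ofReal (∫ m, (B * (A + 2 * s * inner ℝ e m + 256 * s ^ 4 / A ^ 3 * ‖m‖ ^ 4))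
          ∂(stdGaussian _)) := by
          refine (ofReal_integral_eq_lintegral_ofReal ?_ (.of_forall fun m => ?_)).symm
          · exact (((integrable_const _).add (hint1.const_mul _)).add
              ((integrable_norm_pow_four n).const_mul _)).const_mul _
          · refine mul_nonneg hB (le_trans ?_ (max_quartic_bound A s _ _ hs hA0 (by linarith)
              (by simpa [he1] using abs_real_inner_le_norm e m)))
            positivity
      _ = ENNReal.ofReal (B * (A + 256 * s ^ 4 / A ^ 3 * gaussM4 n)) := by
          congr 1
          have e1 : ∫ m, (A + 2 * s * inner ℝ e m + 256 * s ^ 4 / A ^ 3 * ‖m‖ ^ 4)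
              ∂(stdGaussian (EuclideanSpace ℝ (Fin n))) =
              ∫ m, (A + 2 * s * inner ℝ e m) ∂(stdGaussian (EuclideanSpace ℝ (Fin n))) +
              ∫ m, (256 * s ^ 4 / A ^ 3 * ‖m‖ ^ 4) ∂(stdGaussian (EuclideanSpace ℝ (Fin n))) :=
            integral_add ((integrable_const _).add (hint1.const_mul _))
              ((integrable_norm_pow_four n).const_mul _)
          rw [integral_const_mul, e1, integral_add (integrable_const _) (hint1.const_mul _),
            integral_const_mul (2 * s), hz, integral_const_mul (256 * s ^ 4 / A ^ 3)]
          simp only [gaussM4, integral_const, probReal_univ, one_smul, mul_zero, add_zero]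
      _ ≤ _ := by
          refine ENNReal.ofReal_le_ofReal ?_
          rw [mul_assoc B]
          refine mul_le_mul_of_nonneg_left ?_ hB
          have hM := gaussM4_nonneg n
          have h1 : 256 * s ^ 4 / A ^ 3 ≤ 2048 * s ^ 4 / d ^ 4 * r := by
            rw [div_mul_eq_mul_div, div_le_div_iff₀ (by positivity) (by positivity)]
            have h2 : d ^ 4 ≤ 8 * (r * A ^ 3) := by
              calc d ^ 4 = 8 * (d * (d / 2) ^ 3) := by ring
                _ ≤ 8 * (r * A ^ 3) := by gcongr
            calc 256 * s ^ 4 * d ^ 4 ≤ 256 * s ^ 4 * (8 * (r * A ^ 3)) := by gcongr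
              _ = _ := by ring
          calc A + 256 * s ^ 4 / A ^ 3 * gaussM4 n
              ≤ A + 2048 * s ^ 4 / d ^ 4 * r * gaussM4 n := by gcongr
            _ = _ := by rw [hA]; ring
  · intro z z'
    have key : c • x + s • z - (c • y + s • R z') =
        A • e + s • (z - (z' - (2 * inner ℝ e z') • e)) := by
      have h0 : A • e = c • (x - y) := by rw [hA, mul_smul, hre]
      rw [hR, h0]; module
    have h1 := mirror_norm_sq e z z' he1 A s
    rw [← key] at h1
    have h2 := max_sq_exp_bound (A + 2 * s * inner ℝ e ((2:ℝ)⁻¹ • (z + z'))) s ‖z - z'‖ hs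
    calc u (c • x + s • z) * v (c • y + s • R z') * ENNReal.ofReal (Real.exp (-‖z - z'‖ ^ 2 / 4))
        ≤ ENNReal.ofReal (B * ‖c • x + s • z - (c • y + s • R z')‖) ^ 2 *
          ENNReal.ofReal (Real.exp (-‖z - z'‖ ^ 2 / 4)) := mul_le_mul_left (H _ _) _
      _ = ENNReal.ofReal (B ^ 2 * (‖c • x + s • z - (c • y + s • R z')‖ ^ 2 *
          Real.exp (-‖z - z'‖ ^ 2 / 4))) := by
          rw [← ENNReal.ofReal_pow (by positivity), ← ENNReal.ofReal_mul (by positivity)]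
          congr 1; ring
      _ ≤ ENNReal.ofReal (B ^ 2 * (max |A + 2 * s * inner ℝ e ((2:ℝ)⁻¹ • (z + z'))| (2 * s)) ^ 2) := by
          refine ENNReal.ofReal_le_ofReal (mul_le_mul_of_nonneg_left ?_ (by positivity))
          exact (mul_le_mul_of_nonneg_right h1 (Real.exp_pos _).le).trans h2
      _ = _ := by
          rw [← mul_pow, ENNReal.ofReal_pow (by positivity)]

/-! ### Iterates of the Mehler operator and its Dirichlet form -/

lemma lintegral_cauchy_schwarz {α : Type*} [MeasurableSpace α] (μ : Measure α) (f g : α → ℝ≥0∞)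
    (hf : AEMeasurable f μ) (hg : AEMeasurable g μ) :
    (∫⁻ a, f a * g a ∂μ) ^ 2 ≤ (∫⁻ a, f a ^ 2 ∂μ) * ∫⁻ a, g a ^ 2 ∂μ := by
  have h := ENNReal.lintegral_mul_le_Lp_mul_Lq μ
    (show (2:ℝ).HolderConjugate 2 from Real.HolderConjugate.two_two) hf hg
  simp only [Pi.mul_apply, ENNReal.rpow_ofNat] at h
  calc _ ≤ _ := pow_le_pow_left' h 2
    _ = _ := by
      rw [mul_pow, ← ENNReal.rpow_natCast, ← ENNReal.rpow_natCast, ← ENNReal.rpow_mul,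
        ← ENNReal.rpow_mul]
      norm_num

section
open ProbabilityTheory

/-- Rotation invariance of the product of two standard Gaussians. -/
lemma gauss_rotation {n : ℕ} (θ : ℝ)
    (g : EuclideanSpace ℝ (Fin n) → EuclideanSpace ℝ (Fin n) → ℝ≥0∞)
    (hg : Measurable (fun p : EuclideanSpace ℝ (Fin n) × EuclideanSpace ℝ (Fin n) => g p.1 p.2)) :
    ∫⁻ x, ∫⁻ z, g (Real.cos θ • x + Real.sin θ • z) (-Real.sin θ • x + Real.cos θ • z)
      ∂(stdGaussian (EuclideanSpace ℝ (Fin n))) ∂(stdGaussian (EuclideanSpace ℝ (Fin n))) =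
    ∫⁻ x, ∫⁻ z, g x z
      ∂(stdGaussian (EuclideanSpace ℝ (Fin n))) ∂(stdGaussian (EuclideanSpace ℝ (Fin n))) := by
  have h := IsGaussian.map_rotation_eq_self_of_forall_strongDual_eq_zero
    (μ := stdGaussian (EuclideanSpace ℝ (Fin n)))
    (fun L => integral_strongDual_stdGaussian L) θ
  have hr : Measurable (ContinuousLinearMap.rotation θ :
      EuclideanSpace ℝ (Fin n) × EuclideanSpace ℝ (Fin n) →L[ℝ] _) :=
    (ContinuousLinearMap.continuous _).measurable
  have h1 : ∫⁻ p, g p.1 p.2 ∂((stdGaussian (EuclideanSpace ℝ (Fin n))).prod (stdGaussian _)) =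
      ∫⁻ p, g (ContinuousLinearMap.rotation θ p).1 (ContinuousLinearMap.rotation θ p).2
        ∂((stdGaussian (EuclideanSpace ℝ (Fin n))).prod (stdGaussian _)) := by
    conv_lhs => rw [← h]
    rw [lintegral_map hg hr]
  have hgr : Measurable fun p : EuclideanSpace ℝ (Fin n) × EuclideanSpace ℝ (Fin n) =>
      g (ContinuousLinearMap.rotation θ p).1 (ContinuousLinearMap.rotation θ p).2 := hg.comp hr
  rw [lintegral_prod _ hg.aemeasurable, lintegral_prod _ hgr.aemeasurable] at h1
  simpa [ContinuousLinearMap.rotation_apply] using h1.symm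

lemma measurable_ouAvg {n : ℕ} (c s : ℝ) (u : EuclideanSpace ℝ (Fin n) → ℝ≥0∞)
    (hu : Measurable u) : Measurable (ouAvg c s u) := by
  unfold ouAvg
  refine Measurable.lintegral_prod_right' (f := fun p : EuclideanSpace ℝ (Fin n) ×
    EuclideanSpace ℝ (Fin n) => u (c • p.1 + s • p.2)) ?_
  exact hu.comp (by fun_prop)

/-- The Mehler operator is symmetric with respect to the Gaussian measure. -/
lemma ouAvg_symm {n : ℕ} (θ : ℝ) (u v : EuclideanSpace ℝ (Fin n) → ℝ≥0∞)
    (hu : Measurable u) (hv : Measurable v) :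
    ∫⁻ x, u x * ouAvg (Real.cos θ) (Real.sin θ) v x ∂(stdGaussian (EuclideanSpace ℝ (Fin n))) =
    ∫⁻ x, ouAvg (Real.cos θ) (Real.sin θ) u x * v x
      ∂(stdGaussian (EuclideanSpace ℝ (Fin n))) := by
  have hneg : ∀ x, ouAvg (Real.cos θ) (Real.sin θ) v x =
      ∫⁻ z, v (Real.cos θ • x - Real.sin θ • z) ∂(stdGaussian (EuclideanSpace ℝ (Fin n))) := by
    intro x
    unfold ouAvg
    have hmap := stdGaussian_map (LinearIsometryEquiv.neg ℝ (E := EuclideanSpace ℝ (Fin n)))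
    conv_lhs => rw [← hmap]
    rw [lintegral_map (by fun_prop) (LinearIsometryEquiv.continuous _).measurable]
    simp [sub_eq_add_neg]
  have h := gauss_rotation θ (fun x z => u x * v (Real.cos θ • x - Real.sin θ • z))
    (by
      have h1 : Measurable (fun p : EuclideanSpace ℝ (Fin n) × EuclideanSpace ℝ (Fin n) =>
        Real.cos θ • p.1 - Real.sin θ • p.2) := by fun_prop
      exact (hu.comp measurable_fst).mul (hv.comp h1))
  calc _ = ∫⁻ x, ∫⁻ z, u x * v (Real.cos θ • x - Real.sin θ • z) ∂(stdGaussian _)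
        ∂(stdGaussian (EuclideanSpace ℝ (Fin n))) := by
        refine lintegral_congr fun x => ?_
        rw [hneg, lintegral_const_mul _ (by fun_prop)]
    _ = _ := h.symm
    _ = _ := by
        refine lintegral_congr fun x => ?_
        unfold ouAvg
        rw [← lintegral_mul_const _ (by fun_prop)]
        refine lintegral_congr fun z => ?_
        congr 2
        have := Real.sin_sq_add_cos_sq θ
        calc _ = (Real.sin θ ^ 2 + Real.cos θ ^ 2) • x := by module
          _ = x := by rw [this, one_smul]

/-- The iterates of the Mehler operator with Dirichlet condition outside `K`. -/
noncomputable def ouIter {n : ℕ} (θ : ℝ) (K : Set (EuclideanSpace ℝ (Fin n)))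
    (u : EuclideanSpace ℝ (Fin n) → ℝ≥0∞) : ℕ → EuclideanSpace ℝ (Fin n) → ℝ≥0∞
  | 0 => u
  | k + 1 => K.indicator (ouAvg (Real.cos θ) (Real.sin θ) (ouIter θ K u k))

lemma measurable_ouIter {n : ℕ} (θ : ℝ) (K : Set (EuclideanSpace ℝ (Fin n)))
    (hK : MeasurableSet K) (u : EuclideanSpace ℝ (Fin n) → ℝ≥0∞) (hu : Measurable u) (k : ℕ) :
    Measurable (ouIter θ K u k) := by
  induction k with
  | zero => exact hu
  | succ k ih => exact (measurable_ouAvg _ _ _ ih).indicator hK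

lemma ouIter_zero_off {n : ℕ} (θ : ℝ) (K : Set (EuclideanSpace ℝ (Fin n)))
    (u : EuclideanSpace ℝ (Fin n) → ℝ≥0∞) (hu : ∀ x ∉ K, u x = 0) (k : ℕ) :
    ∀ x ∉ K, ouIter θ K u k x = 0 := by
  cases k with
  | zero => exact hu
  | succ k => intro x hx; exact indicator_of_notMem hx _

/-- The iterated operator is symmetric with respect to the Gaussian measure. -/
lemma ouIter_shift {n : ℕ} (θ : ℝ) (K : Set (EuclideanSpace ℝ (Fin n)))
    (hK : MeasurableSet K) (u : EuclideanSpace ℝ (Fin n) → ℝ≥0∞) (hu : Measurable u)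
    (h0 : ∀ x ∉ K, u x = 0) (j k : ℕ) :
    ∫⁻ x, ouIter θ K u j x * ouIter θ K u (k + 1) x ∂(stdGaussian (EuclideanSpace ℝ (Fin n))) =
    ∫⁻ x, ouIter θ K u (j + 1) x * ouIter θ K u k x ∂(stdGaussian _) := by
  have h := ouAvg_symm θ (ouIter θ K u j) (ouIter θ K u k) (measurable_ouIter θ K hK u hu j)
    (measurable_ouIter θ K hK u hu k)
  calc _ = _ := lintegral_congr fun x => ?_
    _ = _ := h
    _ = _ := lintegral_congr fun x => ?_
  · by_cases hx : x ∈ K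
    · simp [ouIter, hx]
    · simp [ouIter_zero_off θ K u h0 j x hx]
  · by_cases hx : x ∈ K
    · simp [ouIter, hx]
    · simp [ouIter_zero_off θ K u h0 k x hx]

lemma ouIter_shift' {n : ℕ} (θ : ℝ) (K : Set (EuclideanSpace ℝ (Fin n)))
    (hK : MeasurableSet K) (u : EuclideanSpace ℝ (Fin n) → ℝ≥0∞) (hu : Measurable u)
    (h0 : ∀ x ∉ K, u x = 0) (j k : ℕ) :
    ∫⁻ x, ouIter θ K u j x * ouIter θ K u k x ∂(stdGaussian (EuclideanSpace ℝ (Fin n))) =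
    ∫⁻ x, ouIter θ K u (j + k) x * u x ∂(stdGaussian _) := by
  induction k generalizing j with
  | zero => rfl
  | succ k ih =>
    rw [ouIter_shift θ K hK u hu h0, ih]
    congr! 4
    ring

/-- Spectral lower bound: `⟨T^N u, u⟩ / ⟨u, u⟩ ≥ (⟨T u, u⟩ / ⟨u, u⟩)^N` for `N = 2^m`. -/
lemma ouIter_lower {n : ℕ} (θ : ℝ) (K : Set (EuclideanSpace ℝ (Fin n)))
    (hK : MeasurableSet K) (u : EuclideanSpace ℝ (Fin n) → ℝ≥0∞) (hu : Measurable u)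
    (h0 : ∀ x ∉ K, u x = 0) (a : ℕ → ℝ≥0∞)
    (ha : ∀ k, a k = ∫⁻ x, ouIter θ K u k x * u x ∂(stdGaussian _))
    (ha0 : a 0 ≠ 0) (ha_top : a 0 ≠ ∞) (m : ℕ) :
    (a 1) ^ (2 ^ m) * a 0 ≤ a (2 ^ m) * (a 0) ^ (2 ^ m) := by
  induction m with
  | zero => simp
  | succ m ih =>
    have hcs : a (2 ^ m) ^ 2 ≤ a (2 ^ (m + 1)) * a 0 := by
      rw [ha, ha, ha, pow_succ 2 m, mul_two, ← ouIter_shift' θ K hK u hu h0]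
      have := lintegral_cauchy_schwarz (stdGaussian _) (ouIter θ K u (2 ^ m)) u
        (measurable_ouIter θ K hK u hu _).aemeasurable hu.aemeasurable
      simpa [sq, ouIter] using this
    have h1 : (a 1 ^ (2 ^ (m + 1)) * a 0) * a 0 ≤
        (a (2 ^ (m + 1)) * a 0 ^ (2 ^ (m + 1))) * a 0 := by
      calc (a 1 ^ (2 ^ (m + 1)) * a 0) * a 0 = (a 1 ^ (2 ^ m) * a 0) ^ 2 := by
            rw [mul_pow, ← pow_mul, pow_succ 2 m, sq, mul_assoc]
        _ ≤ (a (2 ^ m) * a 0 ^ (2 ^ m)) ^ 2 := pow_le_pow_left' ih 2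
        _ = a (2 ^ m) ^ 2 * a 0 ^ (2 ^ (m + 1)) := by rw [mul_pow, ← pow_mul, pow_succ 2 m]
        _ ≤ a (2 ^ (m + 1)) * a 0 * a 0 ^ (2 ^ (m + 1)) := mul_le_mul_left hcs _
        _ = _ := by ring
    exact (ENNReal.mul_le_mul_iff_left ha0 ha_top).1 h1

/-- The two-point bound propagates along the iteration. -/
lemma ouIter_upper {n : ℕ} (θ : ℝ) (K L : Set (EuclideanSpace ℝ (Fin n)))
    (hK : MeasurableSet K) (hL : MeasurableSet L)
    (u v : EuclideanSpace ℝ (Fin n) → ℝ≥0∞) (hu : Measurable u) (hv : Measurable v)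
    (B d : ℝ) (hB : 0 ≤ B) (hd : 0 < d) (hc : 1 / 2 ≤ Real.cos θ) (hs : 0 ≤ Real.sin θ)
    (hsd : 8 * Real.sin θ ≤ d) (hKL : ∀ x ∈ K, ∀ y ∈ L, d ≤ ‖x - y‖)
    (H : ∀ a b, u a * v b ≤ ENNReal.ofReal (B * ‖a - b‖) ^ 2) (k : ℕ) :
    ∀ a b, ouIter θ K u k a * ouIter θ L v k b ≤
      ENNReal.ofReal (B * (Real.cos θ + 2048 * gaussM4 n * Real.sin θ ^ 4 / d ^ 4) ^ k *
        ‖a - b‖) ^ 2 := by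
  have hM := gaussM4_nonneg n
  induction k with
  | zero => simpa [ouIter] using H
  | succ k ih =>
    intro x y
    by_cases hx : x ∈ K
    · by_cases hy : y ∈ L
      · simp only [ouIter, indicator_of_mem hx, indicator_of_mem hy]
        have := ou_two_point _ _ (measurable_ouIter θ K hK u hu k) (measurable_ouIter θ L hL v hv k)
          _ (Real.cos θ) (Real.sin θ) d (by positivity) hc hs hd hsd ih x y (hKL x hx y hy)
        simpa only [pow_succ, mul_assoc] using this
      · simp [ouIter, hy]
    · simp [ouIter, hx]

lemma le_of_pow_bound (X Y c C : ℝ) (hY : 0 ≤ Y) (hc : 0 < c)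
    (h : ∀ m : ℕ, X ^ (2 ^ m) * c ≤ C * Y ^ (2 ^ m)) : X ≤ Y := by
  by_contra! hXY
  rcases hY.eq_or_lt with rfl | hY
  · have := h 0
    simp at this
    nlinarith [mul_pos hXY hc]
  · have h1 : 1 < X / Y := by rwa [one_lt_div hY]
    obtain ⟨N, hN⟩ := pow_unbounded_of_one_lt (C / c) h1
    have h2 : (X / Y) ^ N ≤ (X / Y) ^ (2 ^ N) :=
      pow_le_pow_right₀ h1.le Nat.lt_two_pow_self.le
    have h3 := h N
    have h4 := hN.trans_le h2
    rw [div_pow, div_lt_div_iff₀ hc (by positivity)] at h4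
    linarith

set_option maxHeartbeats 1000000 in
/-- One step of the Dirichlet form: `‖F‖² - ⟨P_θ F, F⟩ ≤ (θ²/2) ∫ |∇F|² dγ`. -/
lemma ou_energy {n : ℕ} (F : EuclideanSpace ℝ (Fin n) → ℝ) (hF : ContDiff ℝ 1 F)
    (hF0 : ∀ x, 0 ≤ F x) (θ : ℝ) (hθ : 0 ≤ θ) :
    2 * ∫⁻ x, ENNReal.ofReal (F x) ^ 2 ∂(stdGaussian (EuclideanSpace ℝ (Fin n))) ≤
    2 * ∫⁻ x, ENNReal.ofReal (F x) * ouAvg (Real.cos θ) (Real.sin θ)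
      (fun y => ENNReal.ofReal (F y)) x ∂(stdGaussian (EuclideanSpace ℝ (Fin n))) +
    ENNReal.ofReal (θ ^ 2) * ∫⁻ x, ENNReal.ofReal (‖fderiv ℝ F x‖ ^ 2)
      ∂(stdGaussian (EuclideanSpace ℝ (Fin n))) := by
  set γ := stdGaussian (EuclideanSpace ℝ (Fin n)) with hγ
  have hFc : Continuous F := hF.continuous
  have hDc : Continuous (fderiv ℝ F) := hF.continuous_fderiv one_ne_zero
  let X : ℝ → EuclideanSpace ℝ (Fin n) → EuclideanSpace ℝ (Fin n) → EuclideanSpace ℝ (Fin n) :=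
    fun t x z => Real.cos t • x + Real.sin t • z
  let V : ℝ → EuclideanSpace ℝ (Fin n) → EuclideanSpace ℝ (Fin n) → EuclideanSpace ℝ (Fin n) :=
    fun t x z => -Real.sin t • x + Real.cos t • z
  have hXd : ∀ t x z, HasDerivAt (fun t => X t x z) (V t x z) t := fun t x z =>
    ((Real.hasDerivAt_cos t).smul_const x).add ((Real.hasDerivAt_sin t).smul_const z)
  have hFd : ∀ t x z, HasDerivAt (fun t => F (X t x z)) (fderiv ℝ F (X t x z) (V t x z)) t :=
    fun t x z => ((hF.differentiable one_ne_zero _).hasFDerivAt).comp_hasDerivAt t (hXd t x z)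
  have hvar : ∀ x, ∫⁻ z, ENNReal.ofReal ((fderiv ℝ F x z) ^ 2) ∂γ =
      ENNReal.ofReal (‖fderiv ℝ F x‖ ^ 2) := by
    intro x
    have h1 := variance_dual_stdGaussian (fderiv ℝ F x)
    have hL2 : MemLp (fderiv ℝ F x) 2 γ := IsGaussian.memLp_dual γ _ 2 (by simp)
    rw [variance_of_integral_eq_zero hL2.1.aemeasurable (integral_strongDual_stdGaussian _)] at h1
    rw [← h1, ofReal_integral_eq_lintegral_ofReal hL2.integrable_sq
      (.of_forall fun _ => sq_nonneg _)]
  have hpt : ∀ x z, ENNReal.ofReal ((F (X θ x z) - F x) ^ 2) ≤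
      ENNReal.ofReal θ * ∫⁻ t in Ioc 0 θ, ENNReal.ofReal ((fderiv ℝ F (X t x z) (V t x z)) ^ 2) := by
    intro x z
    have hcont : Continuous fun t => fderiv ℝ F (X t x z) (V t x z) := by
      have h1 : Continuous fun t => X t x z := by fun_prop
      have h2 : Continuous fun t => V t x z := by fun_prop
      exact (hDc.comp h1).clm_apply h2
    have h1 : ∫ t in (0:ℝ)..θ, fderiv ℝ F (X t x z) (V t x z) = F (X θ x z) - F x := by
      rw [intervalIntegral.integral_eq_sub_of_hasDerivAt (fun t _ => hFd t x z)
        (hcont.intervalIntegrable _ _)]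
      simp [X]
    rw [intervalIntegral.integral_of_le hθ] at h1
    have h2 := enorm_integral_le_lintegral_enorm (μ := volume.restrict (Ioc 0 θ))
      (fun t => fderiv ℝ F (X t x z) (V t x z))
    rw [h1] at h2
    have h3 := lintegral_cauchy_schwarz (volume.restrict (Ioc 0 θ))
      (fun t => ‖fderiv ℝ F (X t x z) (V t x z)‖ₑ) (fun _ => 1)
      (hcont.measurable.enorm.aemeasurable) aemeasurable_const
    simp only [mul_one, one_pow, lintegral_const, MeasurableSet.univ, Measure.restrict_apply,
      univ_inter, Real.volume_Ioc, sub_zero, one_mul] at h3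
    have hsq : ∀ y : ℝ, ENNReal.ofReal (y ^ 2) = ‖y‖ₑ ^ 2 := by
      intro y
      rw [Real.enorm_eq_ofReal_abs, ← ENNReal.ofReal_pow (abs_nonneg _), sq_abs]
    simp only [hsq]
    rw [mul_comm]
    exact (pow_le_pow_left' h2 2).trans h3
  have hXm : Measurable fun p : EuclideanSpace ℝ (Fin n) × EuclideanSpace ℝ (Fin n) =>
      X θ p.1 p.2 := by fun_prop
  -- the Dirichlet form along the rotation
  have hD : ∫⁻ x, ∫⁻ z, ENNReal.ofReal ((F (X θ x z) - F x) ^ 2) ∂γ ∂γ ≤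
      ENNReal.ofReal (θ ^ 2) * ∫⁻ x, ENNReal.ofReal (‖fderiv ℝ F x‖ ^ 2) ∂γ := by
    have hmeas : Measurable fun q : (EuclideanSpace ℝ (Fin n) × EuclideanSpace ℝ (Fin n)) × ℝ =>
        ENNReal.ofReal ((fderiv ℝ F (X q.2 q.1.1 q.1.2) (V q.2 q.1.1 q.1.2)) ^ 2) := by
      refine ENNReal.measurable_ofReal.comp (Continuous.measurable (Continuous.pow ?_ 2))
      refine (hDc.comp ?_).clm_apply ?_ <;> fun_prop
    have hmeas2 : Measurable fun p : EuclideanSpace ℝ (Fin n) × EuclideanSpace ℝ (Fin n) =>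
        ENNReal.ofReal ((F (X θ p.1 p.2) - F p.1) ^ 2) :=
      ENNReal.measurable_ofReal.comp
        ((((hFc.measurable.comp hXm).sub (hFc.measurable.comp measurable_fst))).pow_const 2)
    calc _ = ∫⁻ p, ENNReal.ofReal ((F (X θ p.1 p.2) - F p.1) ^ 2) ∂(γ.prod γ) := by
          rw [lintegral_prod _ hmeas2.aemeasurable]
      _ ≤ ∫⁻ p, ENNReal.ofReal θ * (∫⁻ t in Ioc 0 θ,
            ENNReal.ofReal ((fderiv ℝ F (X t p.1 p.2) (V t p.1 p.2)) ^ 2)) ∂(γ.prod γ) :=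
          lintegral_mono fun p => hpt p.1 p.2
      _ = ENNReal.ofReal θ * ∫⁻ p, (∫⁻ t in Ioc 0 θ,
            ENNReal.ofReal ((fderiv ℝ F (X t p.1 p.2) (V t p.1 p.2)) ^ 2)) ∂(γ.prod γ) :=
          lintegral_const_mul _ hmeas.lintegral_prod_right'
      _ = ENNReal.ofReal θ * ∫⁻ t in Ioc 0 θ, ∫⁻ p,
            ENNReal.ofReal ((fderiv ℝ F (X t p.1 p.2) (V t p.1 p.2)) ^ 2) ∂(γ.prod γ) := by
          congr 1
          exact lintegral_lintegral_swap hmeas.aemeasurable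
      _ = ENNReal.ofReal θ * ∫⁻ t in Ioc 0 θ, ∫⁻ x, ENNReal.ofReal (‖fderiv ℝ F x‖ ^ 2) ∂γ := by
          congr 1
          refine lintegral_congr fun t => ?_
          have hg : Measurable fun p : EuclideanSpace ℝ (Fin n) × EuclideanSpace ℝ (Fin n) =>
              ENNReal.ofReal ((fderiv ℝ F p.1 p.2) ^ 2) :=
            ENNReal.measurable_ofReal.comp (Continuous.measurable
              (((hDc.comp continuous_fst).clm_apply continuous_snd).pow 2))
          have hmt : Measurable fun p : EuclideanSpace ℝ (Fin n) × EuclideanSpace ℝ (Fin n) =>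
              ENNReal.ofReal ((fderiv ℝ F (X t p.1 p.2) (V t p.1 p.2)) ^ 2) := by
            refine ENNReal.measurable_ofReal.comp (Continuous.measurable (Continuous.pow ?_ 2))
            refine (hDc.comp ?_).clm_apply ?_ <;> fun_prop
          rw [lintegral_prod _ hmt.aemeasurable]
          have h1 := gauss_rotation t (fun x z => ENNReal.ofReal ((fderiv ℝ F x z) ^ 2)) hg
          refine Eq.trans ?_ (h1.trans (lintegral_congr hvar))
          rfl
      _ = _ := by
          rw [lintegral_const, Measure.restrict_apply MeasurableSet.univ, univ_inter,
            Real.volume_Ioc, sub_zero, mul_comm _ (ENNReal.ofReal θ), ← mul_assoc,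
            ← ENNReal.ofReal_mul hθ, sq]
  have hFm : Measurable fun y => ENNReal.ofReal (F y) := ENNReal.measurable_ofReal.comp hFc.measurable
  have hrot : ∫⁻ x, ∫⁻ z, ENNReal.ofReal (F (X θ x z)) ^ 2 ∂γ ∂γ =
      ∫⁻ x, ENNReal.ofReal (F x) ^ 2 ∂γ := by
    rw [gauss_rotation θ (fun x _ => ENNReal.ofReal (F x) ^ 2)
      ((hFm.comp measurable_fst).pow_const 2)]
    simp [γ]
  have hexp : ∀ a b : ℝ, 0 ≤ a → 0 ≤ b → ENNReal.ofReal a ^ 2 + ENNReal.ofReal b ^ 2 =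
      2 * (ENNReal.ofReal b * ENNReal.ofReal a) + ENNReal.ofReal ((a - b) ^ 2) := by
    intro a b ha hb
    rw [← ENNReal.ofReal_pow ha, ← ENNReal.ofReal_pow hb, ← ENNReal.ofReal_mul hb,
      ← ENNReal.ofReal_add (by positivity) (by positivity),
      show (2:ℝ≥0∞) = ENNReal.ofReal 2 by simp, ← ENNReal.ofReal_mul (by norm_num),
      ← ENNReal.ofReal_add (by positivity) (by positivity)]
    congr 1; ring
  have hFX : ∀ x, Measurable fun z => ENNReal.ofReal (F (X θ x z)) := fun x =>
    hFm.comp (by fun_prop)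
  calc 2 * ∫⁻ x, ENNReal.ofReal (F x) ^ 2 ∂γ
      = ∫⁻ x, ∫⁻ z, ENNReal.ofReal (F (X θ x z)) ^ 2 ∂γ ∂γ + ∫⁻ x, ENNReal.ofReal (F x) ^ 2 ∂γ := by
        rw [hrot, two_mul]
    _ = ∫⁻ x, (∫⁻ z, ENNReal.ofReal (F (X θ x z)) ^ 2 ∂γ) + ENNReal.ofReal (F x) ^ 2 ∂γ := by
        rw [lintegral_add_right _ (hFm.pow_const 2)]
    _ = ∫⁻ x, (2 * (ENNReal.ofReal (F x) * ouAvg (Real.cos θ) (Real.sin θ)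
          (fun y => ENNReal.ofReal (F y)) x)) +
          ∫⁻ z, ENNReal.ofReal ((F (X θ x z) - F x) ^ 2) ∂γ ∂γ := by
        refine lintegral_congr fun x => ?_
        have : ENNReal.ofReal (F x) ^ 2 = ∫⁻ z, ENNReal.ofReal (F x) ^ 2 ∂γ := by simp
        conv_lhs => rw [this]
        rw [← lintegral_add_left ((hFX x).pow_const 2)]
        unfold ouAvg
        rw [← lintegral_const_mul _ (hFX x), ← lintegral_const_mul _ ((hFX x).const_mul _),
          ← lintegral_add_left (((hFX x).const_mul _).const_mul _)]
        exact lintegral_congr fun z => hexp _ _ (hF0 _) (hF0 _)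
    _ = 2 * ∫⁻ x, (ENNReal.ofReal (F x) * ouAvg (Real.cos θ) (Real.sin θ)
          (fun y => ENNReal.ofReal (F y)) x) ∂γ +
          ∫⁻ x, ∫⁻ z, ENNReal.ofReal ((F (X θ x z) - F x) ^ 2) ∂γ ∂γ := by
        have hm : Measurable fun x => ENNReal.ofReal (F x) * ouAvg (Real.cos θ) (Real.sin θ)
            (fun y => ENNReal.ofReal (F y)) x := hFm.mul (measurable_ouAvg (Real.cos θ) (Real.sin θ) _ hFm)
        rw [lintegral_add_left (hm.const_mul 2), lintegral_const_mul _ hm]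
    _ ≤ _ := by gcongr
end

/-! ### The two-phase Gaussian inequality -/

section
open ProbabilityTheory

/-- Two-phase contraction: for separated phases the product of the one-step correlations is at most
`q²`, where `q = cos θ + O(θ⁴)`. -/
lemma ou_product_contraction {n : ℕ} (K L : Set (EuclideanSpace ℝ (Fin n)))
    (hK : MeasurableSet K) (hL : MeasurableSet L)
    (u v : EuclideanSpace ℝ (Fin n) → ℝ≥0∞) (hu : Measurable u) (hv : Measurable v)
    (hu0 : ∀ x ∉ K, u x = 0) (hv0 : ∀ x ∉ L, v x = 0) (M R d θ : ℝ) (hM : 0 ≤ M) (hR : 0 ≤ R)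
    (huM : ∀ x, u x ≤ ENNReal.ofReal M) (hvM : ∀ x, v x ≤ ENNReal.ofReal M)
    (hKR : ∀ x ∈ K, ∀ y ∈ L, ‖x - y‖ ≤ R) (hd : 0 < d)
    (hKL : ∀ x ∈ K, ∀ y ∈ L, d ≤ ‖x - y‖)
    (hc : 1 / 2 ≤ Real.cos θ) (hs : 0 ≤ Real.sin θ) (hsd : 8 * Real.sin θ ≤ d)
    (hu1 : ∫⁻ x, u x ^ 2 ∂(stdGaussian (EuclideanSpace ℝ (Fin n))) ≠ 0)
    (hv1 : ∫⁻ x, v x ^ 2 ∂(stdGaussian (EuclideanSpace ℝ (Fin n))) ≠ 0) :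
    (∫⁻ x, u x * ouAvg (Real.cos θ) (Real.sin θ) u x ∂(stdGaussian _)) *
      (∫⁻ x, v x * ouAvg (Real.cos θ) (Real.sin θ) v x ∂(stdGaussian _)) ≤
    ENNReal.ofReal ((Real.cos θ + 2048 * gaussM4 n * Real.sin θ ^ 4 / d ^ 4) ^ 2) *
      ((∫⁻ x, u x ^ 2 ∂(stdGaussian _)) * ∫⁻ x, v x ^ 2 ∂(stdGaussian _)) := by
  set γ := stdGaussian (EuclideanSpace ℝ (Fin n)) with hγ
  set q := Real.cos θ + 2048 * gaussM4 n * Real.sin θ ^ 4 / d ^ 4 with hq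
  have hM4 := gaussM4_nonneg n
  have hq0 : 0 ≤ q := by positivity
  let a : ℕ → ℝ≥0∞ := fun k => ∫⁻ x, ouIter θ K u k x * u x ∂γ
  let b : ℕ → ℝ≥0∞ := fun k => ∫⁻ x, ouIter θ L v k x * v x ∂γ
  have ha0 : a 0 = ∫⁻ x, u x ^ 2 ∂γ := by simp only [a, ouIter, sq]
  have hb0 : b 0 = ∫⁻ x, v x ^ 2 ∂γ := by simp only [b, ouIter, sq]
  have ha1 : a 1 = ∫⁻ x, u x * ouAvg (Real.cos θ) (Real.sin θ) u x ∂γ := by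
    refine lintegral_congr fun x => ?_
    by_cases hx : x ∈ K
    · simp [ouIter, hx, mul_comm]
    · simp [hu0 x hx]
  have hb1 : b 1 = ∫⁻ x, v x * ouAvg (Real.cos θ) (Real.sin θ) v x ∂γ := by
    refine lintegral_congr fun x => ?_
    by_cases hx : x ∈ L
    · simp [ouIter, hx, mul_comm]
    · simp [hv0 x hx]
  rw [← ha0, ← hb0, ← ha1, ← hb1]
  rw [← ha0] at hu1
  rw [← hb0] at hv1
  have hfin : ∀ w : EuclideanSpace ℝ (Fin n) → ℝ≥0∞, (∀ x, w x ≤ ENNReal.ofReal M) →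
      ∫⁻ x, w x ^ 2 ∂γ ≠ ∞ := by
    intro w hw
    refine ((lintegral_mono fun x => pow_le_pow_left' (hw x) 2).trans_lt ?_).ne
    simp [γ]
  have ha0' : a 0 ≠ ∞ := ha0 ▸ hfin u huM
  have hb_top : b 0 ≠ ∞ := hb0 ▸ hfin v hvM
  -- the trivial two-point bound with slope `M / d`
  have H0 : ∀ x y, u x * v y ≤ ENNReal.ofReal (M / d * ‖x - y‖) ^ 2 := by
    intro x y
    by_cases hx : x ∈ K
    · by_cases hy : y ∈ L
      · have h1 : M ≤ M / d * ‖x - y‖ := by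
          rw [div_mul_eq_mul_div, le_div_iff₀ hd]
          exact mul_le_mul_of_nonneg_left (hKL x hx y hy) hM
        calc u x * v y ≤ ENNReal.ofReal M * ENNReal.ofReal M := mul_le_mul' (huM x) (hvM y)
          _ ≤ _ := by rw [← sq]; gcongr
      · simp [hv0 y hy]
    · simp [hu0 x hx]
  have hup := ouIter_upper θ K L hK hL u v hu hv (M / d) d (by positivity) hd hc hs hsd hKL H0
  have hab : ∀ k, a k * b k ≤ ENNReal.ofReal ((M / d * q ^ k * R * M) ^ 2) := by
    intro k
    have hum := measurable_ouIter θ K hK u hu k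
    have hvm := measurable_ouIter θ L hL v hv k
    calc a k * b k = ∫⁻ x, ∫⁻ y, (ouIter θ K u k x * u x) * (ouIter θ L v k y * v y) ∂γ ∂γ := by
          have e1 : a k * b k = ∫⁻ x, (ouIter θ K u k x * u x) * b k ∂γ :=
            (lintegral_mul_const _ (hum.mul hu)).symm
          rw [e1]
          exact lintegral_congr fun x => (lintegral_const_mul _ (hvm.mul hv)).symm
      _ ≤ ∫⁻ _, ∫⁻ _, ENNReal.ofReal ((M / d * q ^ k * R * M) ^ 2) ∂γ ∂γ := by
          refine lintegral_mono fun x => lintegral_mono fun y => ?_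
          by_cases hx : x ∈ K
          · by_cases hy : y ∈ L
            · calc _ = (ouIter θ K u k x * ouIter θ L v k y) * (u x * v y) := by ring
                _ ≤ ENNReal.ofReal (M / d * q ^ k * ‖x - y‖) ^ 2 *
                    (ENNReal.ofReal M * ENNReal.ofReal M) :=
                  mul_le_mul' (hup k x y) (mul_le_mul' (huM x) (hvM y))
                _ ≤ ENNReal.ofReal (M / d * q ^ k * R) ^ 2 *
                    (ENNReal.ofReal M * ENNReal.ofReal M) := by
                  have := hKR x hx y hy
                  gcongr
                _ = _ := by
                  rw [← sq, ← mul_pow, ← ENNReal.ofReal_mul (by positivity),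
                    ENNReal.ofReal_pow (by positivity)]
            · simp [hv0 y hy]
          · simp [hu0 x hx]
      _ = _ := by simp [γ]
  have hla := ouIter_lower θ K hK u hu hu0 a (fun _ => rfl) hu1 ha0'
  have hlb := ouIter_lower θ L hL v hv hv0 b (fun _ => rfl) hv1 hb_top
  -- the one-step correlations are finite since the zeroth and second ones are
  have hfin1 : a 1 ≠ ∞ ∧ b 1 ≠ ∞ := by
    have hou : ∀ w : EuclideanSpace ℝ (Fin n) → ℝ≥0∞, (∀ x, w x ≤ ENNReal.ofReal M) →
      ∫⁻ x, w x * ouAvg (Real.cos θ) (Real.sin θ) w x ∂γ ≠ ∞ := by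
      intro w hw
      have h1 : ∀ x, ouAvg (Real.cos θ) (Real.sin θ) w x ≤ ENNReal.ofReal M := fun x =>
        (lintegral_mono fun z => hw _).trans (by simp)
      refine ((lintegral_mono fun x => mul_le_mul' (hw x) (h1 x)).trans_lt ?_).ne
      simp [ENNReal.mul_lt_top, γ]
    exact ⟨ha1 ▸ hou u huM, hb1 ▸ hou v hvM⟩
  have key : (a 1 * b 1).toReal ≤ q ^ 2 * (a 0 * b 0).toReal := by
    refine le_of_pow_bound _ _ (a 0 * b 0).toReal ((M / d * R * M) ^ 2) (by positivity)
      (ENNReal.toReal_pos (mul_ne_zero hu1 hv1) (ENNReal.mul_ne_top ha0' hb_top)) fun m => ?_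
    have h1 : (a 1 * b 1) ^ (2 ^ m) * (a 0 * b 0) ≤
        ENNReal.ofReal ((M / d * q ^ (2 ^ m) * R * M) ^ 2) * (a 0 * b 0) ^ (2 ^ m) := by
      calc _ = (a 1 ^ (2 ^ m) * a 0) * (b 1 ^ (2 ^ m) * b 0) := by rw [mul_pow]; ring
        _ ≤ _ := mul_le_mul' (hla m) (hlb m)
        _ = (a (2 ^ m) * b (2 ^ m)) * (a 0 * b 0) ^ (2 ^ m) := by rw [mul_pow]; ring
        _ ≤ _ := mul_le_mul_left (hab _) _
    have h2 := ENNReal.toReal_mono (ENNReal.mul_ne_top ENNReal.ofReal_ne_top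
      (ENNReal.pow_ne_top (ENNReal.mul_ne_top ha0' hb_top))) h1
    rw [ENNReal.toReal_mul, ENNReal.toReal_pow, ENNReal.toReal_mul (b := (a 0 * b 0) ^ 2 ^ m), ENNReal.toReal_pow,
      ENNReal.toReal_ofReal (by positivity)] at h2
    refine h2.trans (le_of_eq ?_)
    rw [mul_pow (q ^ 2), ← pow_mul q, mul_comm 2, pow_mul q]
    ring
  have hne := ENNReal.mul_ne_top ha0' hb_top
  rw [← ENNReal.ofReal_toReal (ENNReal.mul_ne_top hfin1.1 hfin1.2)]
  conv_rhs => rw [← ENNReal.ofReal_toReal hne]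
  rw [← ENNReal.ofReal_mul (by positivity)]
  exact ENNReal.ofReal_le_ofReal key

/-- Passage to the limit `θ → 0` in the two-phase contraction. -/
lemma two_phase_limit (a b EF EG C θ₀ : ℝ) (ha : 0 < a) (hb : 0 < b) (hEF : 0 ≤ EF) (hEG : 0 ≤ EG)
    (hC : 0 ≤ C) (hθ₀ : 0 < θ₀)
    (H : ∀ θ, 0 < θ → θ < θ₀ → ∃ a₁ b₁, 0 ≤ a₁ ∧ 0 ≤ b₁ ∧ 2 * a ≤ 2 * a₁ + θ ^ 2 * EF ∧
      2 * b ≤ 2 * b₁ + θ ^ 2 * EG ∧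
      a₁ * b₁ ≤ (Real.cos θ + C * Real.sin θ ^ 4) ^ 2 * (a * b)) :
    2 * (a * b) ≤ EF * b + EG * a := by
  have hlim : Filter.Tendsto (fun θ : ℝ => 2 * (a * b) * ((Real.sin θ / θ) ^ 2 -
      (2 * C + C ^ 2) * (Real.sin θ / θ) ^ 2 * Real.sin θ ^ 2)) (nhdsWithin 0 (Ioi 0))
      (nhds (2 * (a * b) * (1 ^ 2 - (2 * C + C ^ 2) * 1 ^ 2 * 0 ^ 2))) := by
    have h1 : Filter.Tendsto (fun θ : ℝ => Real.sin θ / θ) (nhdsWithin 0 (Ioi 0)) (nhds 1) := by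
      have := (Real.hasDerivAt_sin 0).tendsto_slope_zero_right
      simp only [zero_add, Real.sin_zero, sub_zero, smul_eq_mul, Real.cos_zero] at this
      refine this.congr fun t => ?_
      rw [div_eq_inv_mul]
    have h2 : Filter.Tendsto (fun θ : ℝ => Real.sin θ) (nhdsWithin 0 (Ioi 0)) (nhds 0) := by
      have := Real.continuous_sin.tendsto 0
      rw [Real.sin_zero] at this
      exact this.mono_left nhdsWithin_le_nhds
    exact ((h1.pow 2).sub (((h1.pow 2).const_mul _).mul (h2.pow 2))).const_mul _
  have h3 : 2 * (a * b) = 2 * (a * b) * (1 ^ 2 - (2 * C + C ^ 2) * 1 ^ 2 * 0 ^ 2) := by ring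
  rw [h3]
  refine le_of_tendsto hlim ?_
  have hsmall : ∀ᶠ θ : ℝ in nhdsWithin 0 (Ioi 0), θ < θ₀ ∧ θ ^ 2 * EF < 2 * a ∧ θ ^ 2 * EG < 2 * b := by
    have h0 : ∀ E : ℝ, Filter.Tendsto (fun θ : ℝ => θ ^ 2 * E) (nhds 0) (nhds 0) := fun E => by
      have : Continuous (fun θ : ℝ => θ ^ 2 * E) := by fun_prop
      simpa using this.tendsto 0
    refine nhdsWithin_le_nhds ?_
    filter_upwards [Iio_mem_nhds hθ₀, (h0 EF).eventually (gt_mem_nhds (by linarith : 0 < 2 * a)),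
      (h0 EG).eventually (gt_mem_nhds (by linarith : 0 < 2 * b))] with θ h1 h2 h3
    exact ⟨h1, h2, h3⟩
  filter_upwards [hsmall, self_mem_nhdsWithin] with θ ⟨h1, h2, h3⟩ (hθ : 0 < θ)
  obtain ⟨a₁, b₁, ha₁, hb₁, h4, h5, h6⟩ := H θ hθ h1
  have h7 : (2 * a - θ ^ 2 * EF) * (2 * b - θ ^ 2 * EG) ≤ 4 * (a₁ * b₁) := by
    calc _ ≤ (2 * a₁) * (2 * b₁) := by
          apply mul_le_mul <;> linarith
      _ = _ := by ring
  have h8 : 0 ≤ (θ ^ 2 * EF) * (θ ^ 2 * EG) := by positivity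
  set s := Real.sin θ
  have hcs : Real.cos θ ^ 2 = 1 - s ^ 2 := by have := Real.sin_sq_add_cos_sq θ; linarith
  have hs1 : s ^ 2 ≤ 1 := Real.sin_sq_le_one θ
  have hc1 := Real.cos_le_one θ
  have h9 : (Real.cos θ + C * s ^ 4) ^ 2 ≤ 1 - s ^ 2 + (2 * C + C ^ 2) * s ^ 4 := by
    have e : (Real.cos θ + C * s ^ 4) ^ 2 = Real.cos θ ^ 2 + 2 * C * (s ^ 4 * Real.cos θ) +
      C ^ 2 * (s ^ 4 * (s ^ 2 * s ^ 2)) := by ring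
    rw [e, hcs]
    have e1 : s ^ 4 * Real.cos θ ≤ s ^ 4 := mul_le_of_le_one_right (by positivity) hc1
    have e2 : s ^ 4 * (s ^ 2 * s ^ 2) ≤ s ^ 4 := mul_le_of_le_one_right (by positivity)
      (mul_le_one₀ hs1 (by positivity) hs1)
    nlinarith [mul_le_mul_of_nonneg_left e1 (by positivity : 0 ≤ 2 * C),
      mul_le_mul_of_nonneg_left e2 (by positivity : 0 ≤ C ^ 2)]
  have h10 := h6.trans (mul_le_mul_of_nonneg_right h9 (by positivity : 0 ≤ a * b))
  have h11 : 2 * (a * b) * (s ^ 2 - (2 * C + C ^ 2) * s ^ 4) ≤ θ ^ 2 * (EF * b + EG * a) := by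
    nlinarith
  have h12 : 2 * (a * b) * ((s / θ) ^ 2 - (2 * C + C ^ 2) * (s / θ) ^ 2 * s ^ 2) =
    2 * (a * b) * (s ^ 2 - (2 * C + C ^ 2) * s ^ 4) / θ ^ 2 := by
    field_simp
  rw [h12, div_le_iff₀ (by positivity)]
  linarith

/-- The two-phase Gaussian inequality `Λ(F) + Λ(G) ≥ 2` for the Gaussian Rayleigh quotients of
functions with disjoint compact supports. -/
lemma gauss_two_phase {n : ℕ} (F G : EuclideanSpace ℝ (Fin n) → ℝ) (hF : ContDiff ℝ 1 F)
    (hG : ContDiff ℝ 1 G) (hF0 : ∀ x, 0 ≤ F x) (hG0 : ∀ x, 0 ≤ G x)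
    (hFs : HasCompactSupport F) (hGs : HasCompactSupport G)
    (hdisj : Disjoint (tsupport F) (tsupport G)) :
    2 * ((∫⁻ x, ENNReal.ofReal (F x) ^ 2 ∂(stdGaussian (EuclideanSpace ℝ (Fin n)))) *
      ∫⁻ x, ENNReal.ofReal (G x) ^ 2 ∂(stdGaussian (EuclideanSpace ℝ (Fin n)))) ≤
    (∫⁻ x, ENNReal.ofReal (‖fderiv ℝ F x‖ ^ 2) ∂(stdGaussian (EuclideanSpace ℝ (Fin n)))) *
      (∫⁻ x, ENNReal.ofReal (G x) ^ 2 ∂(stdGaussian (EuclideanSpace ℝ (Fin n)))) +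
    (∫⁻ x, ENNReal.ofReal (‖fderiv ℝ G x‖ ^ 2) ∂(stdGaussian (EuclideanSpace ℝ (Fin n)))) *
      (∫⁻ x, ENNReal.ofReal (F x) ^ 2 ∂(stdGaussian (EuclideanSpace ℝ (Fin n)))) := by
  set γ := stdGaussian (EuclideanSpace ℝ (Fin n)) with hγ
  obtain ⟨d, hd, hdd⟩ := hdisj.exists_thickenings hFs.isCompact (isClosed_tsupport G)
  have hKL : ∀ x ∈ tsupport F, ∀ y ∈ tsupport G, d ≤ ‖x - y‖ := by
    intro x hx y hy
    by_contra! h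
    refine Set.disjoint_left.1 hdd (self_subset_thickening hd _ hx) ?_
    exact mem_thickening_iff.2 ⟨y, hy, by rwa [dist_eq_norm]⟩
  obtain ⟨M₁, hM₁⟩ := hFs.exists_bound_of_continuous hF.continuous
  obtain ⟨M₂, hM₂⟩ := hGs.exists_bound_of_continuous hG.continuous
  obtain ⟨E₁, hE₁⟩ := (hFs.fderiv ℝ).exists_bound_of_continuous (hF.continuous_fderiv one_ne_zero)
  obtain ⟨E₂, hE₂⟩ := (hGs.fderiv ℝ).exists_bound_of_continuous (hG.continuous_fderiv one_ne_zero)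
  obtain ⟨R, hR⟩ := (hFs.isCompact.isBounded.union hGs.isCompact.isBounded).exists_norm_le
  have hKR : ∀ x ∈ tsupport F, ∀ y ∈ tsupport G, ‖x - y‖ ≤ 2 * |R| := by
    intro x hx y hy
    have h1 := hR x (Or.inl hx)
    have h2 := hR y (Or.inr hy)
    linarith [norm_sub_le x y, le_abs_self R]
  have hfm : ∀ f : EuclideanSpace ℝ (Fin n) → ℝ, ContDiff ℝ 1 f →
      Measurable fun x => ENNReal.ofReal (f x) := fun f hf =>
    ENNReal.measurable_ofReal.comp hf.continuous.measurable
  by_cases ha : ∫⁻ x, ENNReal.ofReal (F x) ^ 2 ∂γ = 0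
  · simp [ha]
  by_cases hb : ∫⁻ x, ENNReal.ofReal (G x) ^ 2 ∂γ = 0
  · simp [hb]
  have hfin : ∀ (f : EuclideanSpace ℝ (Fin n) → ℝ≥0∞) (C : ℝ), (∀ x, f x ≤ ENNReal.ofReal C) →
      ∫⁻ x, f x ∂γ ≠ ∞ := fun f C h => by
    refine ((lintegral_mono h).trans_lt ?_).ne
    simp [γ]
  have hFM : ∀ x, ENNReal.ofReal (F x) ≤ ENNReal.ofReal (max M₁ M₂) := fun x =>
    ENNReal.ofReal_le_ofReal (((le_abs_self _).trans (hM₁ x)).trans (le_max_left _ _))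
  have hGM : ∀ x, ENNReal.ofReal (G x) ≤ ENNReal.ofReal (max M₁ M₂) := fun x =>
    ENNReal.ofReal_le_ofReal (((le_abs_self _).trans (hM₂ x)).trans (le_max_right _ _))
  have hM : 0 ≤ max M₁ M₂ := le_max_of_le_left ((norm_nonneg _).trans (hM₁ 0))
  have ha' : ∫⁻ x, ENNReal.ofReal (F x) ^ 2 ∂γ ≠ ∞ := hfin _ (max M₁ M₂ ^ 2) fun x => by
    rw [ENNReal.ofReal_pow hM]; exact pow_le_pow_left' (hFM x) 2
  have hb' : ∫⁻ x, ENNReal.ofReal (G x) ^ 2 ∂γ ≠ ∞ := hfin _ (max M₁ M₂ ^ 2) fun x => by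
    rw [ENNReal.ofReal_pow hM]; exact pow_le_pow_left' (hGM x) 2
  have hEF : ∫⁻ x, ENNReal.ofReal (‖fderiv ℝ F x‖ ^ 2) ∂γ ≠ ∞ := hfin _ (E₁ ^ 2) fun x =>
    ENNReal.ofReal_le_ofReal (pow_le_pow_left₀ (norm_nonneg _) (hE₁ x) 2)
  have hEG : ∫⁻ x, ENNReal.ofReal (‖fderiv ℝ G x‖ ^ 2) ∂γ ≠ ∞ := hfin _ (E₂ ^ 2) fun x =>
    ENNReal.ofReal_le_ofReal (pow_le_pow_left₀ (norm_nonneg _) (hE₂ x) 2)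
  have hou : ∀ w : EuclideanSpace ℝ (Fin n) → ℝ≥0∞, (∀ x, w x ≤ ENNReal.ofReal (max M₁ M₂)) →
      ∀ c s : ℝ, ∫⁻ x, w x * ouAvg c s w x ∂γ ≠ ∞ := by
    intro w hw c s
    have h1 : ∀ x, ouAvg c s w x ≤ ENNReal.ofReal (max M₁ M₂) := fun x =>
      (lintegral_mono fun z => hw _).trans (by simp)
    refine hfin _ (max M₁ M₂ * max M₁ M₂) fun x => ?_
    rw [ENNReal.ofReal_mul hM]
    exact mul_le_mul' (hw x) (h1 x)
  have hdd' : ∀ a b EF EG : ℝ≥0∞, a ≠ ∞ → b ≠ ∞ → EF ≠ ∞ → EG ≠ ∞ →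
      2 * (a.toReal * b.toReal) ≤ EF.toReal * b.toReal + EG.toReal * a.toReal →
      2 * (a * b) ≤ EF * b + EG * a := by
    intro a b EF EG ha hb hEF hEG h
    rw [← ENNReal.toReal_le_toReal (ENNReal.mul_ne_top (by simp) (ENNReal.mul_ne_top ha hb))
      (ENNReal.add_ne_top.2 ⟨ENNReal.mul_ne_top hEF hb, ENNReal.mul_ne_top hEG ha⟩),
      ENNReal.toReal_add (ENNReal.mul_ne_top hEF hb) (ENNReal.mul_ne_top hEG ha)]
    simpa [ENNReal.toReal_mul] using h
  refine hdd' _ _ _ _ ha' hb' hEF hEG ?_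
  refine two_phase_limit _ _ _ _ (2048 * gaussM4 n / d ^ 4) (min 1 (d / 8))
    (ENNReal.toReal_pos ha ha') (ENNReal.toReal_pos hb hb') ENNReal.toReal_nonneg
    ENNReal.toReal_nonneg (by have := gaussM4_nonneg n; positivity) (by positivity) ?_
  intro θ hθ hθ'
  have hθ1 : θ < 1 := hθ'.trans_le (min_le_left _ _)
  have hs : 0 ≤ Real.sin θ := Real.sin_nonneg_of_nonneg_of_le_pi hθ.le
    (by linarith [Real.pi_gt_three])
  have hsd : 8 * Real.sin θ ≤ d := by
    have := Real.sin_le hθ.le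
    have := hθ'.trans_le (min_le_right _ _)
    linarith
  have hc : 1 / 2 ≤ Real.cos θ := by
    have := Real.one_sub_sq_div_two_le_cos (x := θ)
    nlinarith
  have hstep : ∀ f : EuclideanSpace ℝ (Fin n) → ℝ, ContDiff ℝ 1 f → (∀ x, 0 ≤ f x) →
      ∫⁻ x, ENNReal.ofReal (‖fderiv ℝ f x‖ ^ 2) ∂γ ≠ ∞ →
      (∀ x, ENNReal.ofReal (f x) ≤ ENNReal.ofReal (max M₁ M₂)) →
      2 * (∫⁻ x, ENNReal.ofReal (f x) ^ 2 ∂γ).toReal ≤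
        2 * (∫⁻ x, ENNReal.ofReal (f x) * ouAvg (Real.cos θ) (Real.sin θ)
          (fun y => ENNReal.ofReal (f y)) x ∂γ).toReal +
        θ ^ 2 * (∫⁻ x, ENNReal.ofReal (‖fderiv ℝ f x‖ ^ 2) ∂γ).toReal := by
    intro f hf hf0 hE hfM
    have h1 := ou_energy f hf hf0 θ hθ.le
    have h2 := hou _ hfM (Real.cos θ) (Real.sin θ)
    have h4 : 2 * ∫⁻ x, ENNReal.ofReal (f x) * ouAvg (Real.cos θ) (Real.sin θ)
          (fun y => ENNReal.ofReal (f y)) x ∂γ ≠ ∞ := ENNReal.mul_ne_top (by simp) h2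
    have h5 : ENNReal.ofReal (θ ^ 2) * ∫⁻ x, ENNReal.ofReal (‖fderiv ℝ f x‖ ^ 2) ∂γ ≠ ∞ :=
      ENNReal.mul_ne_top ENNReal.ofReal_ne_top hE
    have h3 := ENNReal.toReal_mono (ENNReal.add_ne_top.2 ⟨h4, h5⟩) h1
    rw [ENNReal.toReal_add h4 h5, ENNReal.toReal_mul, ENNReal.toReal_mul, ENNReal.toReal_mul,
      ENNReal.toReal_ofReal (sq_nonneg θ)] at h3
    simpa using h3
  refine ⟨_, _, ENNReal.toReal_nonneg, ENNReal.toReal_nonneg, hstep F hF hF0 hEF hFM,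
    hstep G hG hG0 hEG hGM, ?_⟩
  have h := ou_product_contraction (tsupport F) (tsupport G) (isClosed_tsupport F).measurableSet
    (isClosed_tsupport G).measurableSet _ _ (hfm F hF) (hfm G hG)
    (fun x hx => by simp [image_eq_zero_of_notMem_tsupport hx])
    (fun x hx => by simp [image_eq_zero_of_notMem_tsupport hx])
    (max M₁ M₂) (2 * |R|) d θ hM (by positivity) hFM hGM hKR hd hKL hc hs hsd ha hb
  have h2 := ENNReal.toReal_mono (ENNReal.mul_ne_top ENNReal.ofReal_ne_top
    (ENNReal.mul_ne_top ha' hb')) h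
  rw [ENNReal.toReal_mul, ENNReal.toReal_mul, ENNReal.toReal_mul,
    ENNReal.toReal_ofReal (sq_nonneg _)] at h2
  refine h2.trans (le_of_eq ?_)
  ring
end

/-! ### Truncation and functions smooth on their positivity set -/

/-- Euclidean `n`-space. -/
abbrev Euc (n : ℕ) := EuclideanSpace ℝ (Fin n)

/-- Polar coordinates for the Lebesgue integral on Euclidean space. -/
lemma lintegral_polar {n : ℕ} (f : EuclideanSpace ℝ (Fin n) → ℝ≥0∞) (hf : Measurable f)
    (hn : 0 < n) :
    ∫⁻ x, f x = ∫⁻ r in Ioi (0:ℝ), ENNReal.ofReal (r ^ (n - 1)) *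
      ∫⁻ θ : sphere (0 : EuclideanSpace ℝ (Fin n)) 1, f (r • (θ : EuclideanSpace ℝ (Fin n)))
        ∂(volume : Measure (EuclideanSpace ℝ (Fin n))).toSphere := by
  have : Nonempty (Fin n) := ⟨⟨0, hn⟩⟩
  have hmp := Measure.measurePreserving_homeomorphUnitSphereProd (volume : Measure (Euc n))
  have hdim : Module.finrank ℝ (Euc n) = n := by simp
  rw [hdim] at hmp
  let F : sphere (0:Euc n) 1 × Ioi (0:ℝ) → ℝ≥0∞ := fun p => f ((p.2 : ℝ) • (p.1 : Euc n))
  have hF : Measurable F := by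
    have h : Measurable fun p : sphere (0:Euc n) 1 × Ioi (0:ℝ) => ((p.2 : ℝ) • (p.1 : Euc n)) := by
      fun_prop
    exact hf.comp h
  have hFr : ∀ x : ({0}ᶜ : Set (Euc n)), F (homeomorphUnitSphereProd (Euc n) x) = f x := by
    intro x
    simp only [F, homeomorphUnitSphereProd_apply_snd_coe, homeomorphUnitSphereProd_apply_fst_coe]
    rw [smul_smul, mul_inv_cancel₀ (norm_ne_zero_iff.2 x.2), one_smul]
  have hmeas : Measurable fun r : ℝ => ENNReal.ofReal (r ^ (n - 1)) *
      ∫⁻ θ : sphere (0:Euc n) 1, f (r • (θ : Euc n)) ∂(volume : Measure (Euc n)).toSphere := by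
    refine Measurable.mul (by fun_prop) ?_
    refine Measurable.lintegral_prod_right' (f := fun p : ℝ × sphere (0:Euc n) 1 =>
      f (p.1 • (p.2 : Euc n))) ?_
    have h : Measurable fun p : ℝ × sphere (0:Euc n) 1 => (p.1 • (p.2 : Euc n)) := by fun_prop
    exact hf.comp h
  calc ∫⁻ x, f x = ∫⁻ x in ({0}ᶜ : Set (Euc n)), f x := by
        rw [restrict_compl_singleton]
    _ = ∫⁻ x : ({0}ᶜ : Set (Euc n)), f x ∂(volume.comap Subtype.val) :=
        (lintegral_subtype_comap (measurableSet_singleton _).compl f).symm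
    _ = ∫⁻ x : ({0}ᶜ : Set (Euc n)), F (homeomorphUnitSphereProd (Euc n) x) ∂(volume.comap Subtype.val) :=
        lintegral_congr fun x => (hFr x).symm
    _ = ∫⁻ p, F p ∂((volume : Measure (Euc n)).toSphere.prod (Measure.volumeIoiPow (n - 1))) :=
        hmp.lintegral_comp hF
    _ = ∫⁻ r : Ioi (0:ℝ), ∫⁻ θ, F (θ, r) ∂(volume : Measure (Euc n)).toSphere
          ∂(Measure.volumeIoiPow (n - 1)) := lintegral_prod_symm _ hF.aemeasurable
    _ = ∫⁻ r : Ioi (0:ℝ), ENNReal.ofReal ((r:ℝ) ^ (n - 1)) *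
          ∫⁻ θ : sphere (0:Euc n) 1, f ((r:ℝ) • (θ : Euc n)) ∂(volume : Measure (Euc n)).toSphere
            ∂(Measure.comap Subtype.val volume) := by
        rw [Measure.volumeIoiPow, lintegral_withDensity_eq_lintegral_mul _ (by fun_prop)
          hF.lintegral_prod_left']
        rfl
    _ = _ := lintegral_subtype_comap measurableSet_Ioi (fun r : ℝ => ENNReal.ofReal (r ^ (n - 1)) *
          ∫⁻ θ : sphere (0:Euc n) 1, f (r • (θ : Euc n)) ∂(volume : Measure (Euc n)).toSphere)

lemma hasDerivAt_posPart_pow (k : ℕ) (t : ℝ) : HasDerivAt (fun t : ℝ => (max t 0) ^ (k + 1 + 1))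
    ((k + 2 : ℝ) * (max t 0) ^ (k + 1)) t := by
  rcases lt_trichotomy t 0 with ht | rfl | ht
  · have h0 : (fun t : ℝ => (max t 0) ^ (k + 1 + 1)) =ᶠ[nhds t] fun _ => 0 := by
      filter_upwards [Iio_mem_nhds ht] with s hs
      rw [max_eq_right (le_of_lt hs)]; simp
    have := (hasDerivAt_const t (0:ℝ)).congr_of_eventuallyEq h0
    have e : (k + 2 : ℝ) * (max t 0) ^ (k + 1) = 0 := by rw [max_eq_right ht.le]; simp
    rw [e]; exact this
  · rw [hasDerivAt_iff_isLittleO]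
    simp only [max_self, ne_eq, Nat.add_eq_zero_iff, one_ne_zero, and_false,
      not_false_eq_true, zero_pow, sub_zero, mul_zero, smul_zero]
    have h1 : (fun t : ℝ => (max t 0) ^ (k + 1 + 1)) =O[nhds 0] fun t : ℝ => t ^ (k + 1 + 1) := by
      refine Asymptotics.IsBigO.of_bound 1 (.of_forall fun t => ?_)
      rw [norm_pow, norm_pow, one_mul]
      refine pow_le_pow_left₀ (norm_nonneg _) ?_ _
      rw [Real.norm_eq_abs, Real.norm_eq_abs, abs_of_nonneg (le_max_right t 0)]
      exact max_le (le_abs_self t) (abs_nonneg t)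
    have h2 : (fun t : ℝ => t ^ (k + 1 + 1)) =o[nhds 0] fun t : ℝ => t := by
      simpa using Asymptotics.isLittleO_pow_pow (𝕜 := ℝ) (show 1 < k + 1 + 1 by omega)
    exact h1.trans_isLittleO h2
  · have h0 : (fun t : ℝ => (max t 0) ^ (k + 1 + 1)) =ᶠ[nhds t] fun s => s ^ (k + 1 + 1) := by
      filter_upwards [Ioi_mem_nhds ht] with s hs
      rw [max_eq_left (le_of_lt hs)]
    have := (hasDerivAt_pow (k + 1 + 1) t).congr_of_eventuallyEq h0
    have e : (k + 2 : ℝ) * (max t 0) ^ (k + 1) = ((k + 1 + 1 : ℕ) : ℝ) * t ^ (k + 1 + 1 - 1) := by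
      rw [max_eq_left ht.le, Nat.add_sub_cancel]; push_cast; ring
    rw [e]; exact this

lemma contDiff_posPart_pow (k : ℕ) : ContDiff ℝ k (fun t : ℝ => (max t 0) ^ (k + 1)) := by
  induction k with
  | zero =>
    have h : Continuous fun t : ℝ => max t 0 ^ (0 + 1) := by fun_prop
    exact (contDiff_zero (𝕜 := ℝ)).2 h
  | succ k ih =>
    have hd := hasDerivAt_posPart_pow k
    rw [show ((k + 1 : ℕ) : WithTop ℕ∞) = (k : WithTop ℕ∞) + 1 by push_cast; rfl,
      contDiff_succ_iff_deriv]
    refine ⟨fun t => (hd t).differentiableAt, by simp, ?_⟩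
    have : deriv (fun t : ℝ => (max t 0) ^ (k + 1 + 1)) =
      fun t => (k + 2 : ℝ) * (max t 0) ^ (k + 1) := funext fun t => (hd t).deriv
    rw [this]
    exact contDiff_const.mul ih

/-- The `C¹` truncation `t ↦ (t - ε)₊² / t`. -/
noncomputable def trunc1 (ε t : ℝ) : ℝ := max (t - ε) 0 ^ 2 / t

lemma trunc1_nonneg (ε t : ℝ) (ht : 0 ≤ t) : 0 ≤ trunc1 ε t := by unfold trunc1; positivity

lemma trunc1_zero {ε t : ℝ} (h : t ≤ ε) : trunc1 ε t = 0 := by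
  simp [trunc1, max_eq_right (sub_nonpos.2 h)]

lemma trunc1_antitone {ε ε' t : ℝ} (ht : 0 ≤ t) (h : ε' ≤ ε) : trunc1 ε t ≤ trunc1 ε' t := by
  unfold trunc1
  gcongr

lemma trunc1_le {ε t : ℝ} (hε : 0 ≤ ε) (ht : 0 ≤ t) : trunc1 ε t ≤ t := by
  have := trunc1_antitone ht hε
  refine this.trans ?_
  simp only [trunc1, sub_zero, max_eq_left ht]
  rcases ht.eq_or_lt with rfl | ht
  · simp
  · rw [sq, mul_div_assoc, div_self ht.ne', mul_one]

lemma trunc1_tendsto {ι : Type*} {l : Filter ι} {e : ι → ℝ} (he : Filter.Tendsto e l (nhds 0))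
    {t : ℝ} (ht : 0 ≤ t) : Filter.Tendsto (fun i => trunc1 (e i) t) l (nhds t) := by
  have h : Continuous fun ε => trunc1 ε t := by unfold trunc1; fun_prop
  have := (h.tendsto 0).comp he
  have h0 : trunc1 0 t = t := by
    simp only [trunc1, sub_zero, max_eq_left ht]
    rcases ht.eq_or_lt with rfl | ht
    · simp
    · rw [sq, mul_div_assoc, div_self ht.ne', mul_one]
  rwa [h0] at this

lemma trunc1_contDiffAt {ε t : ℝ} (ht : 0 < t) : ContDiffAt ℝ 1 (trunc1 ε) t := by
  unfold trunc1
  refine ContDiffAt.div ?_ contDiffAt_id ht.ne'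
  have := (contDiff_posPart_pow 1).comp (contDiff_id.sub (contDiff_const (c := ε)))
  exact this.contDiffAt

lemma trunc1_deriv {ε t : ℝ} (hε : 0 < ε) (ht : 0 < t) : |deriv (trunc1 ε) t| ≤ 1 := by
  have hd : DifferentiableAt ℝ (trunc1 ε) t := (trunc1_contDiffAt ht).differentiableAt one_ne_zero
  -- `trunc1 ε` is monotone and 1-Lipschitz on the positive half line
  have key : ∀ s s', 0 < s → s ≤ s' → |trunc1 ε s' - trunc1 ε s| ≤ 1 * |s' - s| := by
    intro s s' hs hss
    have hs' : 0 < s' := hs.trans_le hss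
    rw [one_mul, abs_of_nonneg (sub_nonneg.2 hss)]
    rcases le_or_gt s' ε with h | h
    · rw [trunc1_zero h, trunc1_zero (hss.trans h)]; simpa using hss
    · rcases le_or_gt s ε with h2 | h2
      · rw [trunc1_zero h2, sub_zero, abs_of_nonneg (trunc1_nonneg _ _ hs'.le)]
        simp only [trunc1, max_eq_left (sub_nonneg.2 h.le)]
        rw [div_le_iff₀ hs']
        nlinarith
      · simp only [trunc1, max_eq_left (sub_nonneg.2 h.le), max_eq_left (sub_nonneg.2 h2.le)]
        have e : (s' - ε) ^ 2 / s' - (s - ε) ^ 2 / s = (s' - s) * (1 - ε ^ 2 / (s * s')) := by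
          field_simp; ring
        have h3 : ε ^ 2 / (s * s') ≤ 1 := by
          rw [div_le_one (by positivity)]; nlinarith
        have h4 : 0 ≤ ε ^ 2 / (s * s') := by positivity
        rw [e, abs_of_nonneg (mul_nonneg (sub_nonneg.2 hss) (by linarith))]
        exact mul_le_of_le_one_right (sub_nonneg.2 hss) (by linarith)
  have := hd.hasDerivAt.le_of_lip' (C := 1) zero_le_one (by
    filter_upwards [Ioi_mem_nhds ht] with s (hs : 0 < s)
    rcases le_total t s with h | h
    · exact key t s ht h
    · rw [norm_sub_rev, norm_sub_rev s]; exact key s t hs h)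
  exact this

lemma contDiff_trunc1_comp {n : ℕ} {W : EuclideanSpace ℝ (Fin n) → ℝ} (hc : Continuous W)
    (hd : ContDiffOn ℝ 1 W {x | 0 < W x}) {ε : ℝ} (hε : 0 < ε) :
    ContDiff ℝ 1 fun x => trunc1 ε (W x) := by
  rw [contDiff_iff_contDiffAt]
  intro x
  rcases lt_or_ge (W x) ε with h | h
  · have : (fun x => trunc1 ε (W x)) =ᶠ[nhds x] fun _ => 0 := by
      filter_upwards [hc.continuousAt.eventually (Iio_mem_nhds h)] with y hy
      exact trunc1_zero (le_of_lt hy)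
    exact contDiffAt_const.congr_of_eventuallyEq this
  · have hx : 0 < W x := hε.trans_le h
    have hW := hd.contDiffAt ((isOpen_lt continuous_const hc).mem_nhds hx)
    exact (trunc1_contDiffAt hx).comp x hW

lemma trunc1_comp_fderiv_le {n : ℕ} {W : EuclideanSpace ℝ (Fin n) → ℝ} (hc : Continuous W)
    (hd : ContDiffOn ℝ 1 W {x | 0 < W x}) {ε : ℝ} (hε : 0 < ε)
    (μ : Measure (EuclideanSpace ℝ (Fin n))) :
    ∫⁻ x, ENNReal.ofReal (‖fderiv ℝ (fun x => trunc1 ε (W x)) x‖ ^ 2) ∂μ ≤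
      ∫⁻ x in {x | 0 < W x}, ENNReal.ofReal (‖fderiv ℝ W x‖ ^ 2) ∂μ := by
  have ho : IsOpen {x | 0 < W x} := isOpen_lt continuous_const hc
  rw [← lintegral_indicator ho.measurableSet]
  refine lintegral_mono fun x => ?_
  rcases lt_or_ge (W x) ε with h | h
  · have : (fun x => trunc1 ε (W x)) =ᶠ[nhds x] fun _ => 0 := by
      filter_upwards [hc.continuousAt.eventually (Iio_mem_nhds h)] with y hy
      exact trunc1_zero (le_of_lt hy)
    simp [this.fderiv_eq]
  · have hx : 0 < W x := hε.trans_le h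
    have hW := (hd.contDiffAt (ho.mem_nhds hx)).differentiableAt one_ne_zero
    have h1 := ((trunc1_contDiffAt (ε := ε) hx).differentiableAt one_ne_zero).hasDerivAt
    have h2 : fderiv ℝ (fun x => trunc1 ε (W x)) x = deriv (trunc1 ε) (W x) • fderiv ℝ W x :=
      (h1.comp_hasFDerivAt x hW.hasFDerivAt).fderiv
    rw [indicator_of_mem (show x ∈ {x | 0 < W x} from hx), h2, norm_smul]
    refine ENNReal.ofReal_le_ofReal (pow_le_pow_left₀ (by positivity) ?_ 2)
    exact mul_le_of_le_one_left (norm_nonneg _) (trunc1_deriv hε hx)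

lemma trunc1_comp_tsupport {n : ℕ} {W : EuclideanSpace ℝ (Fin n) → ℝ} (hc : Continuous W)
    {ε : ℝ} : tsupport (fun x => trunc1 ε (W x)) ⊆ {x | ε ≤ W x} := by
  refine closure_minimal (fun x hx => ?_) (isClosed_le continuous_const hc)
  by_contra h
  exact hx (trunc1_zero (le_of_lt (not_le.1 h)))

lemma trunc1_comp_compact {n : ℕ} {W : EuclideanSpace ℝ (Fin n) → ℝ}
    (h0 : Filter.Tendsto W (Filter.cocompact _) (nhds 0)) {ε : ℝ} (hε : 0 < ε) :
    HasCompactSupport (fun x => trunc1 ε (W x)) := by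
  have := h0.eventually (Iio_mem_nhds hε)
  obtain ⟨K, hK, hKs⟩ := Filter.mem_cocompact.1 this
  refine HasCompactSupport.intro hK fun x hx => trunc1_zero (le_of_lt (hKs hx))

lemma trunc1_comp_lintegral_tendsto {n : ℕ} {W : EuclideanSpace ℝ (Fin n) → ℝ}
    (hc : Continuous W) (hW0 : ∀ x, 0 ≤ W x) (μ : Measure (EuclideanSpace ℝ (Fin n))) :
    Filter.Tendsto (fun k : ℕ => ∫⁻ x, ENNReal.ofReal (trunc1 (1 / ((k:ℝ) + 1)) (W x)) ^ 2 ∂μ)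
      Filter.atTop (nhds (∫⁻ x, ENNReal.ofReal (W x) ^ 2 ∂μ)) := by
  have hm : ∀ ε, Measurable fun x => trunc1 ε (W x) := by
    intro ε
    unfold trunc1
    have := hc.measurable
    fun_prop
  refine lintegral_tendsto_of_tendsto_of_monotone
    (fun k => ((hm _).ennreal_ofReal.pow_const 2).aemeasurable) (.of_forall fun x => ?_)
    (.of_forall fun x => ?_)
  · intro k l hkl
    refine pow_le_pow_left₀ zero_le (ENNReal.ofReal_le_ofReal (trunc1_antitone (hW0 x) ?_)) 2
    have : (k:ℝ) ≤ l := by exact_mod_cast hkl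
    exact one_div_le_one_div_of_le (by positivity) (by linarith)
  · have := trunc1_tendsto (tendsto_one_div_add_atTop_nhds_zero_nat (𝕜 := ℝ)) (hW0 x)
    exact ENNReal.Tendsto.pow (ENNReal.tendsto_ofReal this)

/-- The Gaussian two-phase inequality for functions which are smooth only on their positivity
sets; obtained from the smooth case by truncation. -/
lemma gauss_two_phase_pos {n : ℕ} {V W : EuclideanSpace ℝ (Fin n) → ℝ}
    (hV : Continuous V) (hW : Continuous W) (hV0 : ∀ x, 0 ≤ V x) (hW0 : ∀ x, 0 ≤ W x)
    (hVd : ContDiffOn ℝ 1 V {x | 0 < V x}) (hWd : ContDiffOn ℝ 1 W {x | 0 < W x})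
    (hVt : Filter.Tendsto V (Filter.cocompact _) (nhds 0))
    (hWt : Filter.Tendsto W (Filter.cocompact _) (nhds 0))
    (hVW : ∀ x, V x * W x = 0)
    (hVf : ∫⁻ x, ENNReal.ofReal (V x) ^ 2
      ∂(ProbabilityTheory.stdGaussian (EuclideanSpace ℝ (Fin n))) ≠ ∞)
    (hWf : ∫⁻ x, ENNReal.ofReal (W x) ^ 2
      ∂(ProbabilityTheory.stdGaussian (EuclideanSpace ℝ (Fin n))) ≠ ∞) :
    2 * ((∫⁻ x, ENNReal.ofReal (V x) ^ 2
        ∂(ProbabilityTheory.stdGaussian (EuclideanSpace ℝ (Fin n)))) *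
      ∫⁻ x, ENNReal.ofReal (W x) ^ 2
        ∂(ProbabilityTheory.stdGaussian (EuclideanSpace ℝ (Fin n)))) ≤
    (∫⁻ x in {x | 0 < V x}, ENNReal.ofReal (‖fderiv ℝ V x‖ ^ 2)
        ∂(ProbabilityTheory.stdGaussian (EuclideanSpace ℝ (Fin n)))) *
      (∫⁻ x, ENNReal.ofReal (W x) ^ 2
        ∂(ProbabilityTheory.stdGaussian (EuclideanSpace ℝ (Fin n)))) +
    (∫⁻ x in {x | 0 < W x}, ENNReal.ofReal (‖fderiv ℝ W x‖ ^ 2)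
        ∂(ProbabilityTheory.stdGaussian (EuclideanSpace ℝ (Fin n)))) *
      (∫⁻ x, ENNReal.ofReal (V x) ^ 2
        ∂(ProbabilityTheory.stdGaussian (EuclideanSpace ℝ (Fin n)))) := by
  set γ := ProbabilityTheory.stdGaussian (EuclideanSpace ℝ (Fin n))
  have tV := trunc1_comp_lintegral_tendsto hV hV0 γ
  have tW := trunc1_comp_lintegral_tendsto hW hW0 γ
  have t := ENNReal.Tendsto.const_mul (a := 2) (ENNReal.Tendsto.mul tV (Or.inr hWf) tW (Or.inr hVf))
    (Or.inr ENNReal.ofNat_ne_top)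
  refine le_of_tendsto' t fun k => ?_
  have hε : (0:ℝ) < 1 / ((k:ℝ) + 1) := by positivity
  have hdis : Disjoint (tsupport fun x => trunc1 (1 / ((k:ℝ) + 1)) (V x))
      (tsupport fun x => trunc1 (1 / ((k:ℝ) + 1)) (W x)) := by
    rw [Set.disjoint_left]
    intro x h1 h2
    have h1 := trunc1_comp_tsupport hV h1
    have h2 := trunc1_comp_tsupport hW h2
    have : 0 < V x * W x := mul_pos (hε.trans_le h1) (hε.trans_le h2)
    exact this.ne' (hVW x)
  refine (gauss_two_phase _ _ (contDiff_trunc1_comp hV hVd hε) (contDiff_trunc1_comp hW hWd hε)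
    (fun x => trunc1_nonneg _ _ (hV0 x)) (fun x => trunc1_nonneg _ _ (hW0 x))
    (trunc1_comp_compact hVt hε) (trunc1_comp_compact hWt hε) hdis).trans ?_
  have lV : ∫⁻ x, ENNReal.ofReal (trunc1 (1 / ((k:ℝ) + 1)) (V x)) ^ 2 ∂γ ≤
      ∫⁻ x, ENNReal.ofReal (V x) ^ 2 ∂γ := lintegral_mono fun x =>
    pow_le_pow_left₀ zero_le (ENNReal.ofReal_le_ofReal (trunc1_le hε.le (hV0 x))) 2
  have lW : ∫⁻ x, ENNReal.ofReal (trunc1 (1 / ((k:ℝ) + 1)) (W x)) ^ 2 ∂γ ≤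
      ∫⁻ x, ENNReal.ofReal (W x) ^ 2 ∂γ := lintegral_mono fun x =>
    pow_le_pow_left₀ zero_le (ENNReal.ofReal_le_ofReal (trunc1_le hε.le (hW0 x))) 2
  exact add_le_add (mul_le_mul' (trunc1_comp_fderiv_le hV hVd hε γ) lW)
    (mul_le_mul' (trunc1_comp_fderiv_le hW hWd hε γ) lV)

/-! ### Functions in polar form and Gaussian moments -/

lemma hasFDerivAt_norm_euc {n : ℕ} {x : Euc n} (hx : x ≠ 0) :
    HasFDerivAt (fun y : Euc n => ‖y‖) (‖x‖⁻¹ • innerSL ℝ x) x := by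
  have h1 := (hasStrictFDerivAt_norm_sq x).hasFDerivAt
  have hx' : 0 < ‖x‖ := norm_pos_iff.2 hx
  have h2 := h1.sqrt (by positivity)
  have e : (fun y : Euc n => √(‖y‖ ^ 2)) = fun y => ‖y‖ := by
    ext y; exact Real.sqrt_sq (norm_nonneg y)
  rw [e] at h2
  have e2 : (1 / (2 * √(‖x‖ ^ 2))) • 2 • innerSL ℝ x = ‖x‖⁻¹ • innerSL ℝ x := by
    rw [Real.sqrt_sq hx'.le]
    ext z
    simp
    field_simp
  rw [← e2]; exact h2

/-- Pythagoras for the decomposition of a linear form into its radial and tangential part. -/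
lemma norm_sq_radial_tangential {n : ℕ} (D : Euc n →L[ℝ] ℝ) {θ : Euc n} (hθ : ‖θ‖ = 1) (a b : ℝ) :
    ‖a • innerSL ℝ θ + b • (D - D θ • innerSL ℝ θ)‖ ^ 2 = a ^ 2 + b ^ 2 * (‖D‖ ^ 2 - D θ ^ 2) := by
  obtain ⟨g, rfl⟩ : ∃ g : Euc n, D = innerSL ℝ g :=
    ⟨(InnerProductSpace.toDual ℝ (Euc n)).symm D, by
      ext z; simp⟩
  have e : a • innerSL ℝ θ + b • (innerSL ℝ g - innerSL ℝ g θ • innerSL ℝ θ) =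
      innerSL ℝ (a • θ + b • (g - (inner ℝ g θ) • θ)) := by
    ext z
    simp
  rw [e, innerSL_apply_norm, innerSL_apply_norm, innerSL_apply_apply]
  rw [← real_inner_self_eq_norm_sq, ← real_inner_self_eq_norm_sq]
  have h1 : inner ℝ θ θ = (1:ℝ) := by rw [real_inner_self_eq_norm_sq, hθ]; norm_num
  simp only [inner_add_left, inner_sub_left, inner_smul_left, inner_add_right, inner_sub_right,
    inner_smul_right, h1, real_inner_comm g θ]
  simp
  ring

/-- The function `ψ(|x|) v(x/|x|)`. -/
noncomputable def polarFun {n : ℕ} (ψ : ℝ → ℝ) (v : Euc n → ℝ) (x : Euc n) : ℝ :=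
  ψ ‖x‖ * v (‖x‖⁻¹ • x)

/-- The squared gradient of `ψ(|x|) v(x/|x|)` splits into the radial part `ψ'² v²` and `(ψ/r)²` times
the squared tangential gradient of `v`. -/
lemma norm_fderiv_polarFun {n : ℕ} {ψ : ℝ → ℝ} {v : Euc n → ℝ} {r ψ' : ℝ} {θ : Euc n}
    (hr : 0 < r) (hθ : ‖θ‖ = 1) (hψ : HasDerivAt ψ ψ' r) (hv : DifferentiableAt ℝ v θ) :
    ‖fderiv ℝ (polarFun ψ v) (r • θ)‖ ^ 2 =
      (ψ' * v θ) ^ 2 + (ψ r / r) ^ 2 * (‖fderiv ℝ v θ‖ ^ 2 - fderiv ℝ v θ θ ^ 2) := by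
  have hn : ‖r • θ‖ = r := by rw [norm_smul, hθ, Real.norm_of_nonneg hr.le, mul_one]
  have hx : r • θ ≠ 0 := by rw [← norm_ne_zero_iff, hn]; exact hr.ne'
  have hN := hasFDerivAt_norm_euc hx
  have e1 : ‖r • θ‖⁻¹ • innerSL ℝ (r • θ) = innerSL ℝ θ := by
    rw [hn]; ext z; simp [hr.ne']
  rw [e1] at hN
  have hψN : HasFDerivAt (fun y : Euc n => ψ ‖y‖) (ψ' • innerSL ℝ θ) (r • θ) :=
    HasDerivAt.comp_hasFDerivAt (r • θ) (by rw [hn]; exact hψ) hN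
  have hinv : HasFDerivAt (fun y : Euc n => ‖y‖⁻¹) ((-(r ^ 2)⁻¹) • innerSL ℝ θ) (r • θ) := by
    have := (hasDerivAt_inv hr.ne').comp_hasFDerivAt_of_eq (r • θ) hN hn.symm
    exact this
  have hdir := hinv.smul (hasFDerivAt_id (r • θ))
  have hpt : ‖r • θ‖⁻¹ • (r • θ) = θ := by rw [hn, smul_smul, inv_mul_cancel₀ hr.ne', one_smul]
  have hvd : HasFDerivAt (fun y : Euc n => v (‖y‖⁻¹ • y)) _ (r • θ) :=
    HasFDerivAt.comp (r • θ) (by rw [hpt]; exact hv.hasFDerivAt) hdir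
  have hall := hψN.mul hvd
  have hf : fderiv ℝ (polarFun ψ v) (r • θ) = (ψ' * v θ) • innerSL ℝ θ +
      (ψ r / r) • (fderiv ℝ v θ - fderiv ℝ v θ θ • innerSL ℝ θ) := by
    have : fderiv ℝ (polarFun ψ v) (r • θ) = _ := hall.fderiv
    rw [this]
    ext z
    simp [hn, smul_smul, hr.ne']
    field_simp
    ring
  rw [hf, norm_sq_radial_tangential _ hθ]

/-- Gaussian moments on the half line. -/
noncomputable def gaussMom (c p : ℝ) : ℝ≥0∞ :=
  ∫⁻ r in Ioi (0:ℝ), ENNReal.ofReal (r ^ p * Real.exp (-c * r ^ 2))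

lemma gaussMom_eq {c p : ℝ} (hc : 0 < c) (hp : -1 < p) :
    gaussMom c p = ENNReal.ofReal (c ^ (-(p + 1) / 2) * (1 / 2) * Real.Gamma ((p + 1) / 2)) := by
  have h := integral_rpow_mul_exp_neg_mul_rpow (p := 2) (q := p) (b := c) (by norm_num) hp hc
  have hi := integrableOn_rpow_mul_exp_neg_mul_sq hc hp
  simp only [Real.rpow_two] at h
  rw [← h, gaussMom, ofReal_integral_eq_lintegral_ofReal hi]
  filter_upwards [self_mem_ae_restrict measurableSet_Ioi] with r (hr : 0 < r)
  positivity

lemma gaussMom_ne_zero {c p : ℝ} (hc : 0 < c) (hp : -1 < p) : gaussMom c p ≠ 0 := by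
  rw [gaussMom_eq hc hp]
  have := Real.Gamma_pos_of_pos (show 0 < (p + 1) / 2 by linarith)
  have : 0 < c ^ (-(p + 1) / 2) * (1 / 2) * Real.Gamma ((p + 1) / 2) := by positivity
  simpa using this

lemma gaussMom_ne_top {c p : ℝ} (hc : 0 < c) (hp : -1 < p) : gaussMom c p ≠ ∞ := by
  rw [gaussMom_eq hc hp]; exact ENNReal.ofReal_ne_top

lemma gaussMom_add_two {c p : ℝ} (hc : 0 < c) (hp : -1 < p) :
    gaussMom c (p + 2) = ENNReal.ofReal ((p + 1) / (2 * c)) * gaussMom c p := by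
  have h0 : 0 < (p + 1) / 2 := by linarith
  have := Real.Gamma_pos_of_pos h0
  rw [gaussMom_eq hc hp, gaussMom_eq hc (by linarith), ← ENNReal.ofReal_mul (by
    apply div_nonneg <;> linarith)]
  congr 1
  rw [show (p + 2 + 1) / 2 = (p + 1) / 2 + 1 by ring, Real.Gamma_add_one h0.ne',
    show -(p + 2 + 1) / 2 = -(p + 1) / 2 - 1 by ring, Real.rpow_sub_one hc.ne']
  field_simp

/-! ### The radial profile -/

/-- The radial profile `r ↦ r^α exp(-δ r²)`. -/
noncomputable def radProf (α δ r : ℝ) : ℝ := r ^ α * Real.exp (-δ * r ^ 2)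

lemma radProf_nonneg {α δ r : ℝ} (hr : 0 ≤ r) : 0 ≤ radProf α δ r := by
  unfold radProf; positivity

lemma radProf_hasDerivAt {α δ r : ℝ} (hr : 0 < r) :
    HasDerivAt (radProf α δ) ((α / r - 2 * δ * r) * radProf α δ r) r := by
  have h1 := Real.hasDerivAt_rpow_const (x := r) (p := α) (Or.inl hr.ne')
  have h2 : HasDerivAt (fun r : ℝ => Real.exp (-δ * r ^ 2)) (Real.exp (-δ * r ^ 2) * (-δ * (2 * r))) r := by
    have := ((hasDerivAt_pow 2 r).const_mul (-δ)).exp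
    simpa using this
  have h3 := h1.mul h2
  have e : (α / r - 2 * δ * r) * radProf α δ r = α * r ^ (α - 1) * Real.exp (-δ * r ^ 2) +
      r ^ α * (Real.exp (-δ * r ^ 2) * (-δ * (2 * r))) := by
    rw [radProf, Real.rpow_sub_one hr.ne']; field_simp; ring
  rw [e]; exact h3

lemma radProf_tendsto_zero {α δ : ℝ} (hδ : 0 < δ) :
    Filter.Tendsto (radProf α δ) Filter.atTop (nhds 0) := by
  have h := rpow_mul_exp_neg_mul_sq_isLittleO_exp_neg hδ α
  refine h.trans_tendsto ?_
  have : Filter.Tendsto (fun x : ℝ => -(1/2) * x) Filter.atTop Filter.atBot :=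
    Filter.tendsto_id.const_mul_atTop_of_neg (by norm_num)
  exact Real.tendsto_exp_atBot.comp this

section
variable {n : ℕ} {v : Euc n → ℝ} {α δ : ℝ}

lemma norm_inv_smul_mem_sphere {x : Euc n} (hx : x ≠ 0) : ‖x‖⁻¹ • x ∈ sphere (0 : Euc n) 1 := by
  rw [mem_sphere_zero_iff_norm, norm_smul, norm_inv, norm_norm,
    inv_mul_cancel₀ (norm_ne_zero_iff.2 hx)]

lemma sphere_bound (hc : ContinuousOn v (sphere 0 1)) : ∃ M, 0 ≤ M ∧ ∀ x : Euc n, x ≠ 0 →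
    ‖v (‖x‖⁻¹ • x)‖ ≤ M := by
  obtain ⟨M, hM⟩ := (isCompact_sphere (0 : Euc n) 1).exists_bound_of_continuousOn hc
  exact ⟨max M 0, le_max_right _ _, fun x hx =>
    (hM _ (norm_inv_smul_mem_sphere hx)).trans (le_max_left _ _)⟩

lemma polarFun_radProf_zero (hα : 0 < α) : polarFun (radProf α δ) v 0 = 0 := by
  simp [polarFun, radProf, Real.zero_rpow hα.ne']

lemma polarFun_bound (hα : 0 < α) (hc : ContinuousOn v (sphere 0 1)) :
    ∃ M, 0 ≤ M ∧ ∀ x : Euc n, ‖polarFun (radProf α δ) v x‖ ≤ M * radProf α δ ‖x‖ := by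
  obtain ⟨M, hM0, hM⟩ := sphere_bound hc
  refine ⟨M, hM0, fun x => ?_⟩
  have h0 := radProf_nonneg (α := α) (δ := δ) (norm_nonneg x)
  rcases eq_or_ne x 0 with rfl | hx
  · rw [polarFun_radProf_zero hα, norm_zero]; positivity
  · rw [polarFun, norm_mul, Real.norm_of_nonneg h0, mul_comm]
    exact mul_le_mul_of_nonneg_right (hM x hx) h0

lemma polarFun_continuous (hα : 0 < α) (hc : ContinuousOn v (sphere 0 1)) :
    Continuous (polarFun (radProf α δ) v) := by
  rw [continuous_iff_continuousAt]
  have hψ : Continuous (radProf α δ) := by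
    unfold radProf
    exact (Real.continuous_rpow_const hα.le).mul (by fun_prop)
  intro x
  rcases eq_or_ne x 0 with rfl | hx
  · obtain ⟨M, hM0, hM⟩ := polarFun_bound (δ := δ) hα hc
    have h0 : Filter.Tendsto (fun x : Euc n => M * radProf α δ ‖x‖) (nhds 0) (nhds 0) := by
      have : Continuous fun x : Euc n => M * radProf α δ ‖x‖ := by fun_prop
      have := this.tendsto 0
      simpa [radProf, Real.zero_rpow hα.ne'] using this
    rw [ContinuousAt, polarFun_radProf_zero hα]
    exact squeeze_zero_norm hM h0
  · unfold polarFun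
    refine ContinuousAt.mul (by fun_prop) ?_
    have hopen : ({0}ᶜ : Set (Euc n)) ∈ nhds x := isOpen_compl_singleton.mem_nhds hx
    refine ContinuousOn.continuousAt (s := {0}ᶜ) (hc.comp ?_ fun y hy => norm_inv_smul_mem_sphere hy)
      hopen
    exact ContinuousOn.smul (continuousOn_id.norm.inv₀ fun y hy => norm_ne_zero_iff.2 hy)
      continuousOn_id

lemma polarFun_tendsto (hα : 0 < α) (hδ : 0 < δ) (hc : ContinuousOn v (sphere 0 1)) :
    Filter.Tendsto (polarFun (radProf α δ) v) (Filter.cocompact _) (nhds 0) := by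
  obtain ⟨M, hM0, hM⟩ := polarFun_bound (δ := δ) hα hc
  refine squeeze_zero_norm hM ?_
  have := ((radProf_tendsto_zero (α := α) hδ).comp
    (tendsto_norm_cocompact_atTop (E := Euc n))).const_mul M
  simpa using this

lemma polarFun_nonneg (hα : 0 < α) (hv : ∀ θ ∈ sphere (0 : Euc n) 1, 0 ≤ v θ) (x : Euc n) :
    0 ≤ polarFun (radProf α δ) v x := by
  rcases eq_or_ne x 0 with rfl | hx
  · rw [polarFun_radProf_zero hα]
  · exact mul_nonneg (radProf_nonneg (norm_nonneg _)) (hv _ (norm_inv_smul_mem_sphere hx))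

lemma polarFun_pos (hα : 0 < α) {x : Euc n} (h : 0 < polarFun (radProf α δ) v x) :
    x ≠ 0 ∧ 0 < v (‖x‖⁻¹ • x) := by
  refine ⟨?_, ?_⟩
  · rintro rfl; rw [polarFun_radProf_zero hα] at h; exact h.false
  · exact pos_of_mul_pos_right h (radProf_nonneg (norm_nonneg _))

lemma polarFun_contDiffOn (hα : 0 < α)
    (hd : ∀ θ ∈ sphere (0 : Euc n) 1, 0 < v θ → ContDiffAt ℝ 1 v θ) :
    ContDiffOn ℝ 1 (polarFun (radProf α δ) v) {x | 0 < polarFun (radProf α δ) v x} := by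
  intro x hx
  obtain ⟨h0, hv⟩ := polarFun_pos hα hx
  refine ContDiffAt.contDiffWithinAt ?_
  have hN : ContDiffAt ℝ 1 (fun y : Euc n => ‖y‖) x := contDiffAt_norm ℝ h0
  have h0' : ‖x‖ ≠ 0 := norm_ne_zero_iff.2 h0
  unfold polarFun radProf
  refine ContDiffAt.mul (ContDiffAt.mul (hN.rpow_const_of_ne h0') ?_) ?_
  · exact (contDiffAt_const.mul (hN.pow 2)).exp
  · exact ContDiffAt.comp x (hd _ (norm_inv_smul_mem_sphere h0) hv)
      ((hN.inv h0').smul contDiffAt_id)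

end

/-! ### The Friedland–Hayman inequality -/

/-- Surface measure on the unit sphere. -/
noncomputable abbrev sphMeas (n : ℕ) : Measure (sphere (0 : Euc n) 1) :=
  (volume : Measure (Euc n)).toSphere

/-- The squared `L²` norm of `v` on the unit sphere. -/
noncomputable def sphQ {n : ℕ} (v : Euc n → ℝ) : ℝ≥0∞ :=
  ∫⁻ θ : sphere (0 : Euc n) 1, ENNReal.ofReal (v θ) ^ 2 ∂sphMeas n

/-- The tangential Dirichlet energy of `v` on the positivity set of `v` in the unit sphere. -/
noncomputable def sphE {n : ℕ} (v : Euc n → ℝ) : ℝ≥0∞ :=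
  ∫⁻ θ : sphere (0 : Euc n) 1, {θ : sphere (0 : Euc n) 1 | 0 < v θ}.indicator
    (fun θ => ENNReal.ofReal (‖fderiv ℝ v θ‖ ^ 2 - fderiv ℝ v θ θ ^ 2)) θ ∂sphMeas n

lemma stdGaussian_polar (n : ℕ) (hn : 0 < n) : ∃ κ : ℝ≥0∞, κ ≠ 0 ∧ κ ≠ ∞ ∧
    ∀ f : Euc n → ℝ≥0∞, Measurable f → ∫⁻ x, f x ∂(ProbabilityTheory.stdGaussian (Euc n)) =
      κ * ∫⁻ r in Ioi (0:ℝ), ENNReal.ofReal (r ^ (n - 1) * Real.exp (-r ^ 2 / 2)) *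
        ∫⁻ θ : sphere (0 : Euc n) 1, f (r • (θ : Euc n)) ∂sphMeas n := by
  obtain ⟨κ, h0, ht, hκ⟩ := stdGaussian_density n
  refine ⟨κ, h0, ht, fun f hf => ?_⟩
  have hm : Measurable fun x : Euc n => ENNReal.ofReal (Real.exp (-‖x‖ ^ 2 / 2)) := by fun_prop
  rw [hκ, lintegral_smul_measure, smul_eq_mul, lintegral_withDensity_eq_lintegral_mul _ hm hf,
    lintegral_polar _ (hm.mul hf) hn]
  congr 1
  refine setLIntegral_congr_fun measurableSet_Ioi fun r (hr : 0 < r) => ?_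
  simp only [Pi.mul_apply]
  have : ∀ θ : sphere (0 : Euc n) 1, ‖r • (θ : Euc n)‖ = r := fun θ => by
    rw [norm_smul, norm_eq_of_mem_sphere, Real.norm_of_nonneg hr.le, mul_one]
  simp only [this]
  rw [lintegral_const_mul' _ _ ENNReal.ofReal_ne_top, ← mul_assoc,
    ← ENNReal.ofReal_mul (by positivity)]

lemma polarFun_smul {n : ℕ} {ψ : ℝ → ℝ} {v : Euc n → ℝ} {r : ℝ} (hr : 0 < r)
    (θ : sphere (0 : Euc n) 1) : polarFun ψ v (r • (θ : Euc n)) = ψ r * v θ := by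
  rw [polarFun, norm_smul, norm_eq_of_mem_sphere, Real.norm_of_nonneg hr.le, mul_one, smul_smul,
    inv_mul_cancel₀ hr.ne', one_smul]

lemma radProf_sq {n : ℕ} {α δ r : ℝ} (hn : 1 ≤ n) (hr : 0 < r) :
    r ^ (n - 1) * Real.exp (-r ^ 2 / 2) * radProf α δ r ^ 2 =
      r ^ (2 * α + n - 3 + 2) * Real.exp (-(2 * δ + 1 / 2) * r ^ 2) := by
  have e1 : r ^ (n - 1) = r ^ ((n:ℝ) - 1) := by
    rw [← Real.rpow_natCast, Nat.cast_sub hn, Nat.cast_one]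
  have e2 : r ^ (2 * α + n - 3 + 2) = r ^ ((n:ℝ) - 1) * (r ^ α * r ^ α) := by
    rw [← Real.rpow_add hr, ← Real.rpow_add hr]; ring_nf
  have e3 : Real.exp (-(2 * δ + 1 / 2) * r ^ 2) =
      Real.exp (-r ^ 2 / 2) * (Real.exp (-δ * r ^ 2) * Real.exp (-δ * r ^ 2)) := by
    rw [← Real.exp_add, ← Real.exp_add]; ring_nf
  rw [e1, e2, e3, radProf]; ring

/-- The weighted integral of `ψ'²` for the radial profile `ψ`. -/
noncomputable def derivMom (n : ℕ) (α δ : ℝ) : ℝ≥0∞ :=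
  ∫⁻ r in Ioi (0:ℝ), ENNReal.ofReal (r ^ (n - 1) * Real.exp (-r ^ 2 / 2) *
    ((α / r - 2 * δ * r) * radProf α δ r) ^ 2)

lemma derivMom_add {n : ℕ} {α δ : ℝ} (hn : 2 ≤ n) (hα : 0 < α) (hδ : 0 < δ) :
    derivMom n α δ + ENNReal.ofReal (4 * α * δ) * gaussMom (2 * δ + 1 / 2) (2 * α + n - 3 + 2) =
    ENNReal.ofReal (α ^ 2) * gaussMom (2 * δ + 1 / 2) (2 * α + n - 3) +
    ENNReal.ofReal (4 * δ ^ 2) * gaussMom (2 * δ + 1 / 2) (2 * α + n - 3 + 2 + 2) := by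
  unfold derivMom gaussMom
  rw [← lintegral_const_mul' _ _ ENNReal.ofReal_ne_top,
    ← lintegral_const_mul' _ _ ENNReal.ofReal_ne_top,
    ← lintegral_const_mul' _ _ ENNReal.ofReal_ne_top,
    ← lintegral_add_right _ (by fun_prop), ← lintegral_add_right _ (by fun_prop)]
  refine setLIntegral_congr_fun measurableSet_Ioi fun r (hr : 0 < r) => ?_
  have p0 := Real.rpow_pos_of_pos hr (2 * α + n - 3)
  have e0 : ∀ q : ℝ, r ^ (q + 2) = r ^ q * r ^ 2 := fun q => by
    rw [Real.rpow_add hr, Real.rpow_two]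
  have key : r ^ (n - 1) * Real.exp (-r ^ 2 / 2) * ((α / r - 2 * δ * r) * radProf α δ r) ^ 2 =
      (α / r - 2 * δ * r) ^ 2 * (r ^ (2 * α + n - 3 + 2) * Real.exp (-(2 * δ + 1 / 2) * r ^ 2)) := by
    rw [← radProf_sq (by omega) hr]; ring
  rw [key, ← ENNReal.ofReal_mul (by positivity), ← ENNReal.ofReal_mul (by positivity),
    ← ENNReal.ofReal_mul (by positivity), ← ENNReal.ofReal_add (by positivity) (by positivity),
    ← ENNReal.ofReal_add (by positivity) (by positivity), e0 (_ + 2), e0 (2 * α + n - 3)]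
  congr 1
  generalize r ^ (2 * α + n - 3) = P
  field_simp
  ring

/-- The radial profile realises the Gaussian Rayleigh quotient `α + O(δ²)` on functions whose
spherical part has eigenvalue at most `α (α + n - 2)`. -/
lemma derivMom_eq {n : ℕ} {α δ : ℝ} (hn : 2 ≤ n) (hα : 0 < α) (hδ : 0 < δ) :
    derivMom n α δ + ENNReal.ofReal (α * (α + n - 2)) * gaussMom (2 * δ + 1 / 2) (2 * α + n - 3) =
    ENNReal.ofReal (α + 4 * δ ^ 2 * (2 * α + n) / (1 + 4 * δ)) *
      gaussMom (2 * δ + 1 / 2) (2 * α + n - 3 + 2) := by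
  have hn' : (2:ℝ) ≤ n := by exact_mod_cast hn
  have hc : 0 < 2 * δ + 1 / 2 := by positivity
  have hp : -1 < 2 * α + n - 3 := by linarith
  have h := derivMom_add hn hα hδ
  rw [gaussMom_add_two hc (p := 2 * α + n - 3 + 2) (by linarith), gaussMom_add_two hc hp] at h
  rw [gaussMom_add_two hc hp]
  have hm := gaussMom_ne_top hc hp
  generalize gaussMom (2 * δ + 1 / 2) (2 * α + n - 3) = m at h hm ⊢
  lift m to NNReal using hm
  have hD : derivMom n α δ ≠ ∞ := by
    intro hD
    rw [hD, top_add] at h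
    have : ∀ a : ℝ, ENNReal.ofReal a ≠ ∞ := fun _ => ENNReal.ofReal_ne_top
    exact ENNReal.add_ne_top.2 ⟨ENNReal.mul_ne_top (this _) ENNReal.coe_ne_top,
      ENNReal.mul_ne_top (this _) (ENNReal.mul_ne_top (this _) (ENNReal.mul_ne_top (this _)
        ENNReal.coe_ne_top))⟩ h.symm
  generalize derivMom n α δ = d at h hD ⊢
  lift d to NNReal using hD
  rw [← ENNReal.ofReal_coe_nnreal (p := m), ← ENNReal.ofReal_coe_nnreal (p := d)] at h ⊢
  have q1 : 0 ≤ (2 * α + n - 3 + 1) / (2 * (2 * δ + 1 / 2)) := by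
    apply div_nonneg <;> linarith
  have q2 : 0 ≤ (2 * α + n - 3 + 2 + 1) / (2 * (2 * δ + 1 / 2)) := by
    apply div_nonneg <;> linarith
  have q3 : 0 ≤ α * (α + n - 2) := mul_nonneg hα.le (by linarith)
  have q4 : 0 ≤ α + 4 * δ ^ 2 * (2 * α + n) / (1 + 4 * δ) := by positivity
  have m0 := m.2
  have d0 := d.2
  rw [← ENNReal.ofReal_mul q1, ← ENNReal.ofReal_mul (by positivity),
    ← ENNReal.ofReal_mul q2, ← ENNReal.ofReal_mul (by positivity),
    ← ENNReal.ofReal_mul (by positivity), ← ENNReal.ofReal_add (by positivity) (by positivity),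
    ← ENNReal.ofReal_add (by positivity) (by positivity),
    ENNReal.ofReal_eq_ofReal_iff (by positivity) (by positivity)] at h
  rw [← ENNReal.ofReal_mul q3, ← ENNReal.ofReal_mul q1, ← ENNReal.ofReal_mul q4,
    ← ENNReal.ofReal_add (by positivity) (by positivity)]
  congr 1
  have : (d:ℝ) = α ^ 2 * m + 4 * δ ^ 2 * ((2 * α + n - 3 + 2 + 1) / (2 * (2 * δ + 1 / 2)) *
    ((2 * α + n - 3 + 1) / (2 * (2 * δ + 1 / 2)) * m)) -
    4 * α * δ * ((2 * α + n - 3 + 1) / (2 * (2 * δ + 1 / 2)) * m) := by linarith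
  rw [this, show 2 * (2 * δ + 1 / 2) = 1 + 4 * δ by ring]
  field_simp
  ring

section
variable {n : ℕ} {v : Euc n → ℝ} {α δ : ℝ}

lemma sphQ_measurable (hc : ContinuousOn v (sphere 0 1)) :
    Measurable fun θ : sphere (0 : Euc n) 1 => ENNReal.ofReal (v θ) ^ 2 :=
  (continuousOn_iff_continuous_domRestrict.1 hc).measurable.ennreal_ofReal.pow_const 2

lemma sphQ_ne_top (hc : ContinuousOn v (sphere 0 1)) : sphQ v ≠ ∞ := by
  obtain ⟨M, hM⟩ := (isCompact_sphere (0 : Euc n) 1).exists_bound_of_continuousOn hc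
  have h1 : sphQ v ≤ ∫⁻ θ : sphere (0 : Euc n) 1, ENNReal.ofReal M ^ 2 ∂sphMeas n :=
    lintegral_mono fun θ => pow_le_pow_left₀ zero_le
      (ENNReal.ofReal_le_ofReal ((le_abs_self _).trans (hM θ θ.2))) 2
  refine ne_top_of_le_ne_top ?_ h1
  rw [lintegral_const]
  exact ENNReal.mul_ne_top (by simp) (measure_ne_top _ _)

lemma polarFun_gauss_Q (hn : 1 ≤ n) (hα : 0 < α) (hc : ContinuousOn v (sphere 0 1)) {κ : ℝ≥0∞}
    (hκ : ∀ f : Euc n → ℝ≥0∞, Measurable f → ∫⁻ x, f x ∂(ProbabilityTheory.stdGaussian (Euc n)) =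
      κ * ∫⁻ r in Ioi (0:ℝ), ENNReal.ofReal (r ^ (n - 1) * Real.exp (-r ^ 2 / 2)) *
        ∫⁻ θ : sphere (0 : Euc n) 1, f (r • (θ : Euc n)) ∂sphMeas n) :
    ∫⁻ x, ENNReal.ofReal (polarFun (radProf α δ) v x) ^ 2
      ∂(ProbabilityTheory.stdGaussian (Euc n)) =
    κ * (gaussMom (2 * δ + 1 / 2) (2 * α + n - 3 + 2) * sphQ v) := by
  have hm := (polarFun_continuous (δ := δ) hα hc).measurable.ennreal_ofReal.pow_const 2
  rw [hκ _ hm]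
  congr 1
  rw [gaussMom, ← lintegral_mul_const _ (by fun_prop)]
  refine setLIntegral_congr_fun measurableSet_Ioi fun r (hr : 0 < r) => ?_
  simp only [polarFun_smul hr, ← radProf_sq hn hr]
  have h0 : 0 ≤ radProf α δ r := radProf_nonneg hr.le
  simp only [ENNReal.ofReal_mul h0, mul_pow]
  rw [lintegral_const_mul _ (sphQ_measurable hc), sphQ, ← mul_assoc, ← ENNReal.ofReal_pow h0,
    ← ENNReal.ofReal_mul (by positivity)]

/-- Upper bound for the Gaussian Dirichlet energy of `|x|^α exp(-δ|x|²) v(x/|x|)`. -/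
lemma polarFun_gauss_E (hn : 2 ≤ n) (hα : 0 < α) (hδ : 0 < δ) (hc : ContinuousOn v (sphere 0 1))
    (hd : ∀ θ ∈ sphere (0 : Euc n) 1, 0 < v θ → ContDiffAt ℝ 1 v θ) {κ : ℝ≥0∞}
    (hE : sphE v ≤ ENNReal.ofReal (α * (α + n - 2)) * sphQ v)
    (hκ : ∀ f : Euc n → ℝ≥0∞, Measurable f → ∫⁻ x, f x ∂(ProbabilityTheory.stdGaussian (Euc n)) =
      κ * ∫⁻ r in Ioi (0:ℝ), ENNReal.ofReal (r ^ (n - 1) * Real.exp (-r ^ 2 / 2)) *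
        ∫⁻ θ : sphere (0 : Euc n) 1, f (r • (θ : Euc n)) ∂sphMeas n) :
    ∫⁻ x in {x | 0 < polarFun (radProf α δ) v x},
      ENNReal.ofReal (‖fderiv ℝ (polarFun (radProf α δ) v) x‖ ^ 2)
      ∂(ProbabilityTheory.stdGaussian (Euc n)) ≤
    κ * (ENNReal.ofReal (α + 4 * δ ^ 2 * (2 * α + n) / (1 + 4 * δ)) *
      (gaussMom (2 * δ + 1 / 2) (2 * α + n - 3 + 2) * sphQ v)) := by
  have ho : IsOpen {x | 0 < polarFun (radProf α δ) v x} :=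
    isOpen_lt continuous_const (polarFun_continuous hα hc)
  have hm : Measurable ({x | 0 < polarFun (radProf α δ) v x}.indicator fun x =>
      ENNReal.ofReal (‖fderiv ℝ (polarFun (radProf α δ) v) x‖ ^ 2)) :=
    Measurable.indicator (by
      have := measurable_fderiv ℝ (polarFun (radProf α δ) v)
      fun_prop) ho.measurableSet
  rw [← lintegral_indicator ho.measurableSet, hκ _ hm]
  refine mul_le_mul_right ?_ κ
  calc ∫⁻ r in Ioi (0:ℝ), ENNReal.ofReal (r ^ (n - 1) * Real.exp (-r ^ 2 / 2)) *
        ∫⁻ θ : sphere (0 : Euc n) 1, {x | 0 < polarFun (radProf α δ) v x}.indicator (fun x =>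
          ENNReal.ofReal (‖fderiv ℝ (polarFun (radProf α δ) v) x‖ ^ 2)) (r • (θ : Euc n)) ∂sphMeas n
      ≤ ∫⁻ r in Ioi (0:ℝ), (ENNReal.ofReal (r ^ (n - 1) * Real.exp (-r ^ 2 / 2) *
          ((α / r - 2 * δ * r) * radProf α δ r) ^ 2) * sphQ v +
          ENNReal.ofReal (r ^ (2 * α + n - 3) * Real.exp (-(2 * δ + 1 / 2) * r ^ 2)) * sphE v) := by
        refine setLIntegral_mono' measurableSet_Ioi fun r (hr : 0 < r) => ?_
        have h1 : ∫⁻ θ : sphere (0 : Euc n) 1,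
            {x | 0 < polarFun (radProf α δ) v x}.indicator (fun x =>
            ENNReal.ofReal (‖fderiv ℝ (polarFun (radProf α δ) v) x‖ ^ 2)) (r • (θ : Euc n))
              ∂sphMeas n ≤
            ENNReal.ofReal (((α / r - 2 * δ * r) * radProf α δ r) ^ 2) * sphQ v +
            ENNReal.ofReal ((radProf α δ r / r) ^ 2) * sphE v := by
          rw [sphQ, sphE, ← lintegral_const_mul _ (sphQ_measurable hc),
            ← lintegral_const_mul' _ _ ENNReal.ofReal_ne_top,
            ← lintegral_add_left ((sphQ_measurable hc).const_mul _)]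
          refine lintegral_mono fun θ => ?_
          by_cases hv : 0 < v θ
          · have hψ : 0 < radProf α δ r := by unfold radProf; positivity
            have hmem : r • (θ : Euc n) ∈ {x | 0 < polarFun (radProf α δ) v x} := by
              change 0 < polarFun (radProf α δ) v (r • (θ : Euc n))
              rw [polarFun_smul hr]; positivity
            have hle : 0 ≤ ‖fderiv ℝ v θ‖ ^ 2 - fderiv ℝ v θ θ ^ 2 := by
              have := (fderiv ℝ v θ).le_opNorm θ
              rw [norm_eq_of_mem_sphere, mul_one, Real.norm_eq_abs] at this
              rw [sub_nonneg, ← sq_abs]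
              exact pow_le_pow_left₀ (abs_nonneg _) this 2
            rw [indicator_of_mem hmem, indicator_of_mem (show θ ∈ {θ : sphere (0 : Euc n) 1 |
              0 < v θ} from hv), norm_fderiv_polarFun hr (norm_eq_of_mem_sphere θ)
              (radProf_hasDerivAt hr) ((hd θ θ.2 hv).differentiableAt one_ne_zero),
              ENNReal.ofReal_add (by positivity) (by positivity), mul_pow (_ * _) (v θ),
              ENNReal.ofReal_mul (by positivity), ENNReal.ofReal_pow hv.le,
              ENNReal.ofReal_mul (by positivity)]
          · have hmem : r • (θ : Euc n) ∉ {x | 0 < polarFun (radProf α δ) v x} := by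
              intro h
              change 0 < polarFun (radProf α δ) v (r • (θ : Euc n)) at h
              rw [polarFun_smul hr] at h
              exact hv (pos_of_mul_pos_right h (radProf_nonneg hr.le))
            rw [indicator_of_notMem hmem]
            exact zero_le
        refine (mul_le_mul_right h1 _).trans (le_of_eq ?_)
        rw [mul_add, ← mul_assoc, ← mul_assoc, ← ENNReal.ofReal_mul (by positivity),
          ← ENNReal.ofReal_mul (by positivity)]
        congr 3
        rw [div_pow, ← mul_div_assoc, radProf_sq (by omega) hr, Real.rpow_add hr, Real.rpow_two]
        field_simp
    _ = derivMom n α δ * sphQ v + gaussMom (2 * δ + 1 / 2) (2 * α + n - 3) * sphE v := by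
        have hma : Measurable fun r : ℝ => ENNReal.ofReal (r ^ (n - 1) * Real.exp (-r ^ 2 / 2) *
          ((α / r - 2 * δ * r) * radProf α δ r) ^ 2) := by unfold radProf; fun_prop
        rw [lintegral_add_left (hma.mul_const _), lintegral_mul_const _ hma,
          lintegral_mul_const _ (by fun_prop)]
        rfl
    _ ≤ derivMom n α δ * sphQ v + gaussMom (2 * δ + 1 / 2) (2 * α + n - 3) *
          (ENNReal.ofReal (α * (α + n - 2)) * sphQ v) := by gcongr
    _ = (derivMom n α δ + ENNReal.ofReal (α * (α + n - 2)) *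
          gaussMom (2 * δ + 1 / 2) (2 * α + n - 3)) * sphQ v := by ring
    _ = _ := by rw [derivMom_eq hn hα hδ, mul_assoc]

end

/-- The spherical form of the Friedland–Hayman inequality: if two functions on the unit sphere have
disjoint positivity sets and Rayleigh quotients at most `α (α + n - 2)` and `β (β + n - 2)`, then
the characteristic exponents satisfy `α + β ≥ 2`. -/
lemma friedland_hayman {n : ℕ} (hn : 2 ≤ n) {v w : Euc n → ℝ} {α β : ℝ} (hα : 0 < α) (hβ : 0 < β)
    (hvc : ContinuousOn v (sphere 0 1)) (hwc : ContinuousOn w (sphere 0 1))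
    (hv0 : ∀ θ ∈ sphere (0 : Euc n) 1, 0 ≤ v θ) (hw0 : ∀ θ ∈ sphere (0 : Euc n) 1, 0 ≤ w θ)
    (hvd : ∀ θ ∈ sphere (0 : Euc n) 1, 0 < v θ → ContDiffAt ℝ 1 v θ)
    (hwd : ∀ θ ∈ sphere (0 : Euc n) 1, 0 < w θ → ContDiffAt ℝ 1 w θ)
    (hvw : ∀ θ ∈ sphere (0 : Euc n) 1, v θ * w θ = 0)
    (hv : sphQ v ≠ 0) (hw : sphQ w ≠ 0)
    (hvE : sphE v ≤ ENNReal.ofReal (α * (α + n - 2)) * sphQ v)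
    (hwE : sphE w ≤ ENNReal.ofReal (β * (β + n - 2)) * sphQ w) : 2 ≤ α + β := by
  obtain ⟨κ, hκ0, hκt, hκ⟩ := stdGaussian_polar n (by omega)
  have hn' : (2:ℝ) ≤ n := by exact_mod_cast hn
  have key : ∀ δ : ℝ, 0 < δ → 2 ≤ α + 4 * δ ^ 2 * (2 * α + n) / (1 + 4 * δ) +
      (β + 4 * δ ^ 2 * (2 * β + n) / (1 + 4 * δ)) := by
    intro δ hδ
    have hc : 0 < 2 * δ + 1 / 2 := by positivity
    have Qv := polarFun_gauss_Q (δ := δ) (by omega) hα hvc hκ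
    have Qw := polarFun_gauss_Q (δ := δ) (by omega) hβ hwc hκ
    have Ev := polarFun_gauss_E hn hα hδ hvc hvd hvE hκ
    have Ew := polarFun_gauss_E hn hβ hδ hwc hwd hwE hκ
    have fin : ∀ {γ : ℝ} {u : Euc n → ℝ}, 0 < γ → sphQ u ≠ ∞ →
        κ * (gaussMom (2 * δ + 1 / 2) (2 * γ + n - 3 + 2) * sphQ u) ≠ ∞ := fun hγ hu =>
      ENNReal.mul_ne_top hκt (ENNReal.mul_ne_top (gaussMom_ne_top hc (by linarith)) hu)
    have pos : ∀ {γ : ℝ} {u : Euc n → ℝ}, 0 < γ → sphQ u ≠ 0 →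
        κ * (gaussMom (2 * δ + 1 / 2) (2 * γ + n - 3 + 2) * sphQ u) ≠ 0 := fun hγ hu =>
      mul_ne_zero hκ0 (mul_ne_zero (gaussMom_ne_zero hc (by linarith)) hu)
    have main := gauss_two_phase_pos (polarFun_continuous (δ := δ) hα hvc)
      (polarFun_continuous (δ := δ) hβ hwc) (polarFun_nonneg hα hv0) (polarFun_nonneg hβ hw0)
      (polarFun_contDiffOn hα hvd) (polarFun_contDiffOn hβ hwd) (polarFun_tendsto hα hδ hvc)
      (polarFun_tendsto hβ hδ hwc) (fun x => by
        rcases eq_or_ne x 0 with rfl | hx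
        · rw [polarFun_radProf_zero hα, zero_mul]
        · have := hvw _ (norm_inv_smul_mem_sphere hx)
          simp only [polarFun]
          rw [mul_mul_mul_comm, this, mul_zero])
      (by rw [Qv]; exact fin hα (sphQ_ne_top hvc)) (by rw [Qw]; exact fin hβ (sphQ_ne_top hwc))
    rw [Qv, Qw] at main
    rw [mul_left_comm κ] at Ev Ew
    have hA := fin hα (sphQ_ne_top hvc)
    have hB := fin hβ (sphQ_ne_top hwc)
    have hA0 := pos hα hv
    have hB0 := pos hβ hw
    generalize κ * (gaussMom (2 * δ + 1 / 2) (2 * α + n - 3 + 2) * sphQ v) = A at *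
    generalize κ * (gaussMom (2 * δ + 1 / 2) (2 * β + n - 3 + 2) * sphQ w) = B at *
    have h2 := main.trans (add_le_add (mul_le_mul_left Ev B) (mul_le_mul_left Ew A))
    have q1 : 0 ≤ α + 4 * δ ^ 2 * (2 * α + n) / (1 + 4 * δ) := by positivity
    have q2 : 0 ≤ β + 4 * δ ^ 2 * (2 * β + n) / (1 + 4 * δ) := by positivity
    have e : ∀ a b : ℝ≥0∞, a * A * B + b * B * A = (a + b) * (A * B) := fun a b => by ring
    rw [e, ← ENNReal.ofReal_add q1 q2,
      ENNReal.mul_le_mul_iff_left (mul_ne_zero hA0 hB0) (ENNReal.mul_ne_top hA hB)] at h2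
    rwa [← ENNReal.ofReal_ofNat, ENNReal.ofReal_le_ofReal_iff (by positivity)] at h2
  have t : Filter.Tendsto (fun δ : ℝ => α + 4 * δ ^ 2 * (2 * α + n) / (1 + 4 * δ) +
      (β + 4 * δ ^ 2 * (2 * β + n) / (1 + 4 * δ))) (nhdsWithin 0 (Ioi 0)) (nhds (α + β)) := by
    have hc : ContinuousAt (fun δ : ℝ => α + 4 * δ ^ 2 * (2 * α + n) / (1 + 4 * δ) +
      (β + 4 * δ ^ 2 * (2 * β + n) / (1 + 4 * δ))) 0 := by
      fun_prop (disch := norm_num)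
    have := hc.tendsto.mono_left (nhdsWithin_le_nhds (s := Ioi 0))
    simpa using this
  exact ge_of_tendsto t (by filter_upwards [self_mem_nhdsWithin] with δ hδ using key δ hδ)

/-! ### Rotation invariance and calculus of spherical integrals -/

open scoped Pointwise in
/-- The surface measure is invariant under linear isometries. -/
lemma toSphere_integral_isometry {n : ℕ} (R : Euc n ≃ₗᵢ[ℝ] Euc n) (f : Euc n → ℝ) :
    ∫ θ : sphere (0 : Euc n) 1, f (R θ) ∂sphMeas n = ∫ θ : sphere (0 : Euc n) 1, f θ ∂sphMeas n := by
  have hmem : ∀ (T : Euc n ≃ₗᵢ[ℝ] Euc n) (θ : sphere (0 : Euc n) 1), T θ ∈ sphere (0 : Euc n) 1 :=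
    fun T θ => by simp
  let S : sphere (0 : Euc n) 1 ≃ₜ sphere (0 : Euc n) 1 :=
    { toFun := fun θ => ⟨R θ, hmem R θ⟩
      invFun := fun θ => ⟨R.symm θ, hmem R.symm θ⟩
      left_inv := fun θ => by simp
      right_inv := fun θ => by simp
      continuous_toFun := by fun_prop
      continuous_invFun := by fun_prop }
  have hmp : MeasurePreserving S (sphMeas n) (sphMeas n) := by
    refine ⟨S.measurable, ?_⟩
    ext s hs
    rw [Measure.map_apply S.measurable hs, Measure.toSphere_apply' _ (S.measurable hs),
      Measure.toSphere_apply' _ hs]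
    congr 1
    have e : Ioo (0:ℝ) 1 • (Subtype.val '' (S ⁻¹' s)) = R ⁻¹' (Ioo (0:ℝ) 1 • (Subtype.val '' s)) := by
      ext x
      simp only [Set.mem_smul, Set.mem_preimage, Set.mem_image]
      constructor
      · rintro ⟨r, hr, y, ⟨θ, hθ, rfl⟩, rfl⟩
        exact ⟨r, hr, R θ, ⟨S θ, hθ, rfl⟩, by simp⟩
      · rintro ⟨r, hr, y, ⟨θ, hθ, rfl⟩, h⟩
        refine ⟨r, hr, R.symm θ, ⟨S.symm θ, by simpa using hθ, rfl⟩, ?_⟩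
        apply R.injective
        simpa using h
    rw [e]
    exact R.measurePreserving.measure_preimage_emb R.toHomeomorph.measurableEmbedding _
  exact hmp.integral_comp S.measurableEmbedding (fun θ : sphere (0 : Euc n) 1 => f θ)

/-- Rotation by the angle `t` in the plane spanned by `a` and `b`, when these are orthonormal. -/
noncomputable def planeRot {n : ℕ} (a b : Euc n) (t : ℝ) : Euc n →ₗ[ℝ] Euc n where
  toFun x := x + (Real.cos t - 1) • (inner ℝ a x • a + inner ℝ b x • b) +
    Real.sin t • (inner ℝ b x • a - inner ℝ a x • b)
  map_add' x y := by
    simp only [inner_add_right]; module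
  map_smul' c x := by
    simp only [inner_smul_right, RingHom.id_apply]; module

lemma planeRot_norm {n : ℕ} {a b : Euc n} (ha : ‖a‖ = 1) (hb : ‖b‖ = 1) (hab : inner ℝ a b = 0)
    (t : ℝ) (x : Euc n) : ‖planeRot a b t x‖ = ‖x‖ := by
  have ha' : inner ℝ a a = (1:ℝ) := by rw [real_inner_self_eq_norm_sq, ha]; norm_num
  have hb' : inner ℝ b b = (1:ℝ) := by rw [real_inner_self_eq_norm_sq, hb]; norm_num
  have hba : inner ℝ b a = (0:ℝ) := by rw [real_inner_comm, hab]
  rw [← sq_eq_sq₀ (norm_nonneg _) (norm_nonneg _), ← real_inner_self_eq_norm_sq,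
    ← real_inner_self_eq_norm_sq]
  simp only [planeRot, LinearMap.coe_mk, AddHom.coe_mk, inner_add_left, inner_add_right,
    inner_sub_left, inner_sub_right, inner_smul_left, inner_smul_right, ha', hb', hab, hba,
    real_inner_comm a x, real_inner_comm b x]
  simp
  have := Real.sin_sq_add_cos_sq t
  rw [show Real.sin t ^ 2 = Real.sin t * Real.sin t by ring] at this
  generalize (inner ℝ a x : ℝ) = p at *
  generalize (inner ℝ b x : ℝ) = q at *
  linear_combination (p ^ 2 + q ^ 2) * this

/-- `planeRot` as an isometry. -/
noncomputable def planeRotEquiv {n : ℕ} {a b : Euc n} (ha : ‖a‖ = 1) (hb : ‖b‖ = 1)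
    (hab : inner ℝ a b = 0) (t : ℝ) : Euc n ≃ₗᵢ[ℝ] Euc n :=
  (LinearIsometry.mk (planeRot a b t) (planeRot_norm ha hb hab t)).toLinearIsometryEquiv rfl

lemma planeRotEquiv_apply {n : ℕ} {a b : Euc n} (ha : ‖a‖ = 1) (hb : ‖b‖ = 1)
    (hab : inner ℝ a b = 0) (t : ℝ) (x : Euc n) : planeRotEquiv ha hb hab t x =
    x + (Real.cos t - 1) • (inner ℝ a x • a + inner ℝ b x • b) +
    Real.sin t • (inner ℝ b x • a - inner ℝ a x • b) := rfl

/-- Differentiation under the integral over the sphere. -/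
lemma hasDerivAt_sphere_integral {n : ℕ} {k k' : ℝ → sphere (0 : Euc n) 1 → ℝ} {a b t : ℝ}
    (ht : t ∈ Ioo a b) (hk : ∀ s ∈ Ioo a b, Continuous (k s))
    (hk' : ContinuousOn (Function.uncurry k') (Ioo a b ×ˢ univ))
    (hd : ∀ s ∈ Ioo a b, ∀ θ, HasDerivAt (fun s => k s θ) (k' s θ) s) :
    HasDerivAt (fun s => ∫ θ, k s θ ∂sphMeas n) (∫ θ, k' t θ ∂sphMeas n) t := by
  obtain ⟨ε, hε, hsub⟩ := nhds_basis_closedBall.mem_iff.1 (Ioo_mem_nhds ht.1 ht.2)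
  have hcpt : IsCompact (closedBall t ε ×ˢ (univ : Set (sphere (0 : Euc n) 1))) :=
    (isCompact_closedBall t ε).prod isCompact_univ
  obtain ⟨M, hM⟩ := hcpt.exists_bound_of_continuousOn (hk'.mono (prod_mono hsub subset_rfl))
  have hkt' : ∀ s ∈ Ioo a b, Continuous (k' s) := by
    intro s hs
    have : Continuous fun θ : sphere (0 : Euc n) 1 => ((s, θ) : ℝ × sphere (0 : Euc n) 1) := by
      fun_prop
    exact hk'.comp_continuous this fun θ => ⟨hs, mem_univ _⟩
  refine (hasDerivAt_integral_of_dominated_loc_of_deriv_le (bound := fun _ => M)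
    (closedBall_mem_nhds t hε) ?_ ?_ ?_ ?_ (integrable_const M) ?_).2
  · filter_upwards [Ioo_mem_nhds ht.1 ht.2] with s hs using (hk s hs).aestronglyMeasurable
  · exact (hk t ht).integrable_of_hasCompactSupport (HasCompactSupport.of_compactSpace _)
  · exact (hkt' t ht).aestronglyMeasurable
  · exact .of_forall fun θ s hs => hM (s, θ) ⟨hs, mem_univ _⟩
  · exact .of_forall fun θ s hs => hd s (hsub hs) θ

lemma continuousOn_sphere_integral {n : ℕ} {k : ℝ → sphere (0 : Euc n) 1 → ℝ} {s : Set ℝ}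
    (hs : IsOpen s) (hk : ContinuousOn (Function.uncurry k) (s ×ˢ univ)) :
    ContinuousOn (fun t => ∫ θ, k t θ ∂sphMeas n) s := by
  intro t ht
  obtain ⟨ε, hε, hsub⟩ := nhds_basis_closedBall.mem_iff.1 (hs.mem_nhds ht)
  have hcpt : IsCompact (closedBall t ε ×ˢ (univ : Set (sphere (0 : Euc n) 1))) :=
    (isCompact_closedBall t ε).prod isCompact_univ
  obtain ⟨M, hM⟩ := hcpt.exists_bound_of_continuousOn (hk.mono (prod_mono hsub subset_rfl))
  refine ContinuousAt.continuousWithinAt ?_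
  refine continuousAt_of_dominated (bound := fun _ => M) ?_ ?_ (integrable_const M) ?_
  · filter_upwards [hs.mem_nhds ht] with r hr
    have : Continuous fun θ : sphere (0 : Euc n) 1 => ((r, θ) : ℝ × sphere (0 : Euc n) 1) := by
      fun_prop
    exact (hk.comp_continuous this fun θ => ⟨hr, mem_univ _⟩ :
      Continuous fun θ => k r θ).aestronglyMeasurable
  · filter_upwards [closedBall_mem_nhds t hε] with r hr
    exact .of_forall fun θ => hM (r, θ) ⟨hr, mem_univ _⟩
  · refine .of_forall fun θ => ?_
    have h1 : ContinuousAt (Function.uncurry k) (t, θ) :=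
      hk.continuousAt ((hs.prod isOpen_univ).mem_nhds ⟨ht, mem_univ _⟩)
    have h2 : ContinuousAt (fun r : ℝ => ((r, θ) : ℝ × sphere (0 : Euc n) 1)) t := by fun_prop
    exact ContinuousAt.comp (f := fun r : ℝ => ((r, θ) : ℝ × sphere (0 : Euc n) 1)) h1 h2

/-! ### The Laplacian integrated over spheres -/

/-- The infinitesimal rotation `x ↦ x_j e_i - x_i e_j`. -/
noncomputable def infRot {n : ℕ} (i j : Fin n) (x : Euc n) : Euc n :=
  x j • EuclideanSpace.single i (1:ℝ) - x i • EuclideanSpace.single j (1:ℝ)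

lemma euc_sum_single {n : ℕ} (x : Euc n) :
    x = ∑ i, x i • (EuclideanSpace.single i (1:ℝ) : Euc n) := by
  ext k
  simp [Pi.single_apply]

lemma clm_apply_euc {n : ℕ} (L : Euc n →L[ℝ] ℝ) (x : Euc n) :
    L x = ∑ i, x i * L (EuclideanSpace.single i (1:ℝ)) := by
  conv_lhs => rw [euc_sum_single x]
  simp

/-- The sum of the squares of the infinitesimal rotations, evaluated on first and second
derivatives. -/
lemma sum_infRot {n : ℕ} (H : Euc n →L[ℝ] Euc n →L[ℝ] ℝ) (L : Euc n →L[ℝ] ℝ) (x : Euc n) :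
    ∑ i, ∑ j, (H (infRot i j x) (infRot i j x) + L (infRot i j (infRot i j x))) =
    2 * (‖x‖ ^ 2 * ∑ i, H (EuclideanSpace.single i (1:ℝ)) (EuclideanSpace.single i (1:ℝ)) -
      H x x - (n - 1) * L x) := by
  have hxx : H x x = ∑ i, ∑ j, x i * x j * H (EuclideanSpace.single i (1:ℝ))
      (EuclideanSpace.single j (1:ℝ)) := by
    conv_lhs => rw [clm_apply_euc (H x)]
    rw [Finset.sum_comm]
    refine Finset.sum_congr rfl fun j _ => ?_
    have := clm_apply_euc (H.flip (EuclideanSpace.single j (1:ℝ))) x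
    simp only [ContinuousLinearMap.flip_apply] at this
    rw [this, Finset.mul_sum]
    exact Finset.sum_congr rfl fun i _ => by ring
  have hLx := clm_apply_euc L x
  have hn : ‖x‖ ^ 2 = ∑ j, x j ^ 2 := by
    rw [EuclideanSpace.norm_sq_eq]; simp
  have t : ∀ i j, H (infRot i j x) (infRot i j x) + L (infRot i j (infRot i j x)) =
      x j ^ 2 * H (EuclideanSpace.single i (1:ℝ)) (EuclideanSpace.single i (1:ℝ)) +
      x i ^ 2 * H (EuclideanSpace.single j (1:ℝ)) (EuclideanSpace.single j (1:ℝ)) -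
      x i * x j * H (EuclideanSpace.single i (1:ℝ)) (EuclideanSpace.single j (1:ℝ)) -
      x j * x i * H (EuclideanSpace.single j (1:ℝ)) (EuclideanSpace.single i (1:ℝ)) +
      ((if i = j then 2 * (x i * L (EuclideanSpace.single i (1:ℝ))) else 0) -
        x i * L (EuclideanSpace.single i (1:ℝ)) - x j * L (EuclideanSpace.single j (1:ℝ))) := by
    intro i j
    rcases eq_or_ne i j with rfl | hij
    · simp [infRot]; ring
    · simp [infRot, hij, hij.symm]; ring
  simp only [t, Finset.sum_add_distrib, Finset.sum_sub_distrib]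
  have c1 : ∑ i, ∑ j, x j ^ 2 * H (EuclideanSpace.single i (1:ℝ)) (EuclideanSpace.single i (1:ℝ)) =
      ‖x‖ ^ 2 * ∑ i, H (EuclideanSpace.single i (1:ℝ)) (EuclideanSpace.single i (1:ℝ)) := by
    rw [hn, Finset.mul_sum]
    exact Finset.sum_congr rfl fun i _ => by rw [Finset.sum_mul]
  have c2 : ∑ i, ∑ j, x i ^ 2 * H (EuclideanSpace.single j (1:ℝ)) (EuclideanSpace.single j (1:ℝ)) =
      ‖x‖ ^ 2 * ∑ i, H (EuclideanSpace.single i (1:ℝ)) (EuclideanSpace.single i (1:ℝ)) := by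
    rw [Finset.sum_comm, c1]
  have c3 : ∑ i, ∑ j, x j * x i * H (EuclideanSpace.single j (1:ℝ)) (EuclideanSpace.single i (1:ℝ)) =
      H x x := by rw [Finset.sum_comm, hxx]
  rw [c1, c2, c3, ← hxx]
  have c4 : ∑ i : Fin n, ∑ j : Fin n, x i * L (EuclideanSpace.single i (1:ℝ)) = n * L x := by
    rw [hLx, Finset.mul_sum]; simp
  have c5 : ∑ i : Fin n, ∑ j : Fin n, x j * L (EuclideanSpace.single j (1:ℝ)) = n * L x := by
    rw [Finset.sum_comm, c4]
  have c6 : ∑ i : Fin n, ∑ j : Fin n,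
      (if i = j then 2 * (x i * L (EuclideanSpace.single i (1:ℝ))) else 0) = 2 * L x := by
    rw [hLx, Finset.mul_sum]; simp
  rw [c4, c5, c6]
  ring

lemma smul_sphere_mem_ball {n : ℕ} {s : ℝ} (hs : s ∈ Ioo (-1 : ℝ) 1) (θ : sphere (0 : Euc n) 1) :
    s • (θ : Euc n) ∈ ball (0 : Euc n) 1 := by
  rw [mem_ball_zero_iff, norm_smul, norm_eq_of_mem_sphere, mul_one]
  exact abs_lt.2 hs

/-- Derivatives along a plane rotation field have zero mean over spheres. -/
lemma integral_planeRot_eq_zero {n : ℕ} {g : Euc n → ℝ} (hg : ContDiffOn ℝ 1 g (ball 0 1)) {s : ℝ}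
    (hs : s ∈ Ioo (-1 : ℝ) 1) {a b : Euc n} (ha : ‖a‖ = 1) (hb : ‖b‖ = 1)
    (hab : inner ℝ a b = (0:ℝ)) :
    ∫ θ : sphere (0 : Euc n) 1, fderiv ℝ g (s • (θ : Euc n))
      (inner ℝ b (s • (θ : Euc n)) • a - inner ℝ a (s • (θ : Euc n)) • b) ∂sphMeas n = 0 := by
  obtain ⟨R, hR⟩ : ∃ R : ℝ → (Euc n ≃ₗᵢ[ℝ] Euc n), ∀ t x, R t x =
      x + (Real.cos t - 1) • (inner ℝ a x • a + inner ℝ b x • b) +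
      Real.sin t • (inner ℝ b x • a - inner ℝ a x • b) :=
    ⟨planeRotEquiv ha hb hab, planeRotEquiv_apply ha hb hab⟩
  obtain ⟨R', hR'⟩ : ∃ R' : ℝ → Euc n → Euc n, ∀ t x, R' t x =
      (-Real.sin t) • (inner ℝ a x • a + inner ℝ b x • b) +
      Real.cos t • (inner ℝ b x • a - inner ℝ a x • b) := ⟨_, fun _ _ => rfl⟩
  have hRd : ∀ t x, HasDerivAt (fun t => R t x) (R' t x) t := by
    intro t x
    have h1 := ((Real.hasDerivAt_cos t).sub_const 1).smul_const (inner ℝ a x • a + inner ℝ b x • b)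
    have h2 := (Real.hasDerivAt_sin t).smul_const (inner ℝ b x • a - inner ℝ a x • b)
    have h3 := (h1.const_add x).add h2
    rw [hR']
    refine h3.congr_of_eventuallyEq (.of_forall fun t => ?_)
    simp [hR]
  have hRb : ∀ t (θ : sphere (0 : Euc n) 1), R t (s • (θ : Euc n)) ∈ ball (0 : Euc n) 1 := by
    intro t θ
    rw [mem_ball_zero_iff, LinearIsometryEquiv.norm_map, ← mem_ball_zero_iff]
    exact smul_sphere_mem_ball hs θ
  have hRc : Continuous fun p : ℝ × sphere (0 : Euc n) 1 => R p.1 (s • (p.2 : Euc n)) := by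
    simp only [hR]; fun_prop
  have hRc' : Continuous fun p : ℝ × sphere (0 : Euc n) 1 => R' p.1 (s • (p.2 : Euc n)) := by
    simp only [hR']; fun_prop
  have hgc := hg.continuousOn_fderiv_of_isOpen isOpen_ball le_rfl
  have c1 : ∀ t ∈ Ioo (-1 : ℝ) 1, Continuous fun θ : sphere (0 : Euc n) 1 =>
      g (R t (s • (θ : Euc n))) := fun t _ =>
    hg.continuousOn.comp_continuous (f := fun θ : sphere (0 : Euc n) 1 => R t (s • (θ : Euc n)))
      (by fun_prop) fun θ => hRb t θ
  have c2 : Continuous fun p : ℝ × sphere (0 : Euc n) 1 =>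
      fderiv ℝ g (R p.1 (s • (p.2 : Euc n))) (R' p.1 (s • (p.2 : Euc n))) :=
    (hgc.comp_continuous hRc fun p => hRb p.1 p.2).clm_apply hRc'
  have c3 : ∀ t ∈ Ioo (-1 : ℝ) 1, ∀ θ : sphere (0 : Euc n) 1,
      HasDerivAt (fun t => g (R t (s • (θ : Euc n))))
        (fderiv ℝ g (R t (s • (θ : Euc n))) (R' t (s • (θ : Euc n)))) t := fun t _ θ => by
    have h1 := (hg.contDiffAt (isOpen_ball.mem_nhds (hRb t θ))).differentiableAt one_ne_zero
    exact h1.hasFDerivAt.comp_hasDerivAt t (hRd t _)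
  have hD := hasDerivAt_sphere_integral (n := n) (a := -1) (b := 1) (t := 0)
    (k := fun t θ => g (R t (s • (θ : Euc n))))
    (k' := fun t θ => fderiv ℝ g (R t (s • (θ : Euc n))) (R' t (s • (θ : Euc n)))) (by norm_num)
    c1 c2.continuousOn c3
  have hconst : (fun t => ∫ θ : sphere (0 : Euc n) 1, g (R t (s • (θ : Euc n))) ∂sphMeas n) =
      fun _ => ∫ θ : sphere (0 : Euc n) 1, g (s • (θ : Euc n)) ∂sphMeas n := by
    ext t
    have := toSphere_integral_isometry (R t) (fun x => g (s • x))
    simpa using this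
  rw [hconst] at hD
  have h0 := hD.unique (hasDerivAt_const 0 _)
  rw [← h0]
  refine integral_congr_ae (.of_forall fun θ => ?_)
  have e1 : R 0 (s • (θ : Euc n)) = s • (θ : Euc n) := by simp [hR]
  have e2 : R' 0 (s • (θ : Euc n)) =
      inner ℝ b (s • (θ : Euc n)) • a - inner ℝ a (s • (θ : Euc n)) • b := by
    simp [hR']
  simp only [e1, e2]

lemma integral_infRot_eq_zero {n : ℕ} {g : Euc n → ℝ} (hg : ContDiffOn ℝ 1 g (ball 0 1)) {s : ℝ}
    (hs : s ∈ Ioo (-1 : ℝ) 1) (i j : Fin n) :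
    ∫ θ : sphere (0 : Euc n) 1, fderiv ℝ g (s • (θ : Euc n)) (infRot i j (s • (θ : Euc n)))
      ∂sphMeas n = 0 := by
  rcases eq_or_ne i j with rfl | hij
  · simp [infRot]
  have h := integral_planeRot_eq_zero hg hs (a := EuclideanSpace.single i (1:ℝ))
    (b := EuclideanSpace.single j (1:ℝ)) (by simp) (by simp)
    (by rw [EuclideanSpace.inner_single_left]; simp [hij])
  rw [← h]
  refine integral_congr_ae (.of_forall fun θ => ?_)
  simp only [infRot, EuclideanSpace.inner_single_left, map_one, one_mul]

section
variable {n : ℕ} {w : Euc n → ℝ}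

lemma contDiffOn_fderiv_ball (hw : ContDiffOn ℝ 2 w (ball 0 1)) :
    ContDiffOn ℝ 1 (fderiv ℝ w) (ball 0 1) :=
  hw.fderiv_of_isOpen isOpen_ball (by norm_num)

/-- The Laplacian as the trace of the second Fréchet derivative. -/
lemma lapl_eq_sum (hw : ContDiffOn ℝ 2 w (ball 0 1)) {x : Euc n} (hx : x ∈ ball (0 : Euc n) 1) :
    lapl w x = ∑ i, fderiv ℝ (fderiv ℝ w) x (EuclideanSpace.single i (1:ℝ))
      (EuclideanSpace.single i (1:ℝ)) := by
  unfold lapl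
  refine Finset.sum_congr rfl fun i _ => ?_
  have h1 := ((contDiffOn_fderiv_ball hw).contDiffAt (isOpen_ball.mem_nhds hx)).differentiableAt
    one_ne_zero
  have h2 := h1.hasFDerivAt.clm_apply (hasFDerivAt_const (EuclideanSpace.single i (1:ℝ) : Euc n) x)
  rw [h2.fderiv]
  simp

/-- The Laplacian in polar coordinates, integrated over the sphere of radius `s`. -/
lemma integral_lapl_sphere (hw : ContDiffOn ℝ 2 w (ball 0 1)) {s : ℝ} (hs : s ∈ Ioo (-1 : ℝ) 1) :
    s ^ 2 * ∫ θ : sphere (0 : Euc n) 1, lapl w (s • (θ : Euc n)) ∂sphMeas n =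
      s ^ 2 * (∫ θ : sphere (0 : Euc n) 1, fderiv ℝ (fderiv ℝ w) (s • (θ : Euc n)) θ θ ∂sphMeas n) +
      (n - 1) * (s * ∫ θ : sphere (0 : Euc n) 1, fderiv ℝ w (s • (θ : Euc n)) θ ∂sphMeas n) := by
  have hw1 := contDiffOn_fderiv_ball hw
  have hb := fun θ => smul_sphere_mem_ball (n := n) hs θ
  have hc : Continuous fun θ : sphere (0 : Euc n) 1 => s • (θ : Euc n) := by fun_prop
  have hθ : Continuous fun θ : sphere (0 : Euc n) 1 => (θ : Euc n) := by fun_prop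
  have hc1 : Continuous fun θ : sphere (0 : Euc n) 1 => fderiv ℝ w (s • (θ : Euc n)) :=
    hw1.continuousOn.comp_continuous hc hb
  have hc2 : Continuous fun θ : sphere (0 : Euc n) 1 => fderiv ℝ (fderiv ℝ w) (s • (θ : Euc n)) :=
    (hw1.continuousOn_fderiv_of_isOpen isOpen_ball le_rfl).comp_continuous hc hb
  have int : ∀ {k : sphere (0 : Euc n) 1 → ℝ}, Continuous k → Integrable k (sphMeas n) := fun hk =>
    hk.integrable_of_hasCompactSupport (HasCompactSupport.of_compactSpace _)
  have hJl : ∀ i j : Fin n, ∃ J : Euc n →L[ℝ] Euc n, ∀ x, J x = infRot i j x := fun i j =>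
    ⟨(EuclideanSpace.proj (𝕜 := ℝ) j).smulRight (EuclideanSpace.single i (1:ℝ)) -
      (EuclideanSpace.proj (𝕜 := ℝ) i).smulRight (EuclideanSpace.single j (1:ℝ)), fun x => by
        simp [infRot]⟩
  have hz : ∀ i j : Fin n, ∫ θ : sphere (0 : Euc n) 1,
      (fderiv ℝ (fderiv ℝ w) (s • (θ : Euc n)) (infRot i j (s • (θ : Euc n)))
        (infRot i j (s • (θ : Euc n))) +
        fderiv ℝ w (s • (θ : Euc n)) (infRot i j (infRot i j (s • (θ : Euc n))))) ∂sphMeas n = 0 := by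
    intro i j
    obtain ⟨J, hJ⟩ := hJl i j
    have hg : ContDiffOn ℝ 1 (fun x => fderiv ℝ w x (J x)) (ball 0 1) :=
      hw1.clm_apply J.contDiff.contDiffOn
    rw [← integral_infRot_eq_zero hg hs i j]
    refine integral_congr_ae (.of_forall fun θ => ?_)
    have h1 := (hw1.contDiffAt (isOpen_ball.mem_nhds (hb θ))).differentiableAt one_ne_zero
    have h2 := h1.hasFDerivAt.clm_apply (J.hasFDerivAt (x := s • (θ : Euc n)))
    simp only [h2.fderiv, ← hJ]
    simp [add_comm]
    ring
  have hcont : ∀ i j : Fin n, Continuous fun θ : sphere (0 : Euc n) 1 =>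
      (fderiv ℝ (fderiv ℝ w) (s • (θ : Euc n)) (infRot i j (s • (θ : Euc n)))
        (infRot i j (s • (θ : Euc n))) +
        fderiv ℝ w (s • (θ : Euc n)) (infRot i j (infRot i j (s • (θ : Euc n))))) := by
    intro i j
    obtain ⟨J, hJ⟩ := hJl i j
    simp only [← hJ]
    exact ((hc2.clm_apply (by fun_prop)).clm_apply (by fun_prop)).add (hc1.clm_apply (by fun_prop))
  have hsum : ∫ θ : sphere (0 : Euc n) 1, ∑ i, ∑ j,
      (fderiv ℝ (fderiv ℝ w) (s • (θ : Euc n)) (infRot i j (s • (θ : Euc n)))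
        (infRot i j (s • (θ : Euc n))) +
        fderiv ℝ w (s • (θ : Euc n)) (infRot i j (infRot i j (s • (θ : Euc n))))) ∂sphMeas n = 0 := by
    rw [integral_finsetSum _ fun i _ => int (continuous_finsetSum _ fun j _ => hcont i j)]
    refine Finset.sum_eq_zero fun i _ => ?_
    rw [integral_finsetSum _ fun j _ => int (hcont i j)]
    exact Finset.sum_eq_zero fun j _ => hz i j
  simp only [sum_infRot, ← lapl_eq_sum hw (hb _)] at hsum
  have hn : ∀ θ : sphere (0 : Euc n) 1, ‖s • (θ : Euc n)‖ ^ 2 = s ^ 2 := fun θ => by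
    rw [norm_smul, norm_eq_of_mem_sphere, mul_one, Real.norm_eq_abs, sq_abs]
  simp only [hn, map_smul, smul_apply, smul_eq_mul] at hsum
  have hcl : Continuous fun θ : sphere (0 : Euc n) 1 => lapl w (s • (θ : Euc n)) := by
    simp only [lapl_eq_sum hw (hb _)]
    exact continuous_finsetSum _ fun i _ =>
      (hc2.clm_apply continuous_const).clm_apply continuous_const
  have hcA : Continuous fun θ : sphere (0 : Euc n) 1 => fderiv ℝ (fderiv ℝ w) (s • (θ : Euc n)) θ θ :=
    (hc2.clm_apply hθ).clm_apply hθ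
  have hcB : Continuous fun θ : sphere (0 : Euc n) 1 => fderiv ℝ w (s • (θ : Euc n)) θ :=
    hc1.clm_apply hθ
  rw [integral_const_mul, integral_sub (int (by fun_prop)) (int (by fun_prop)),
    integral_sub (int (by fun_prop)) (int (by fun_prop)), integral_const_mul, integral_const_mul,
    integral_const_mul, integral_const_mul, integral_const_mul] at hsum
  linarith

end

/-! ### Green formula with weight -/

section
variable {n : ℕ} {w : Euc n → ℝ}

lemma integrable_sphere {k : sphere (0 : Euc n) 1 → ℝ} (hk : Continuous k) :
    Integrable k (sphMeas n) :=
  hk.integrable_of_hasCompactSupport (HasCompactSupport.of_compactSpace _)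

lemma continuousOn_lapl (hw : ContDiffOn ℝ 2 w (ball 0 1)) : ContinuousOn (lapl w) (ball 0 1) := by
  have h : ContinuousOn (fun x => ∑ i, fderiv ℝ (fderiv ℝ w) x (EuclideanSpace.single i (1:ℝ))
      (EuclideanSpace.single i (1:ℝ))) (ball 0 1) :=
    continuousOn_finsetSum _ fun i _ =>
      ((((contDiffOn_fderiv_ball hw).continuousOn_fderiv_of_isOpen isOpen_ball le_rfl).clm_apply
        continuousOn_const).clm_apply continuousOn_const)
  exact h.congr fun x hx => lapl_eq_sum hw hx

/-- Green's formula for the weight `|x|^(2-n)` in polar form; this weight is, up to a constant, the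
fundamental solution when `n ≥ 3`. -/
lemma integral_radial_lapl (hw : ContDiffOn ℝ 2 w (ball 0 1)) {r : ℝ} (hr : r ∈ Ioo (0 : ℝ) 1) :
    ∫ s in (0:ℝ)..r, s * ∫ θ : sphere (0 : Euc n) 1, lapl w (s • (θ : Euc n)) ∂sphMeas n =
      r * (∫ θ : sphere (0 : Euc n) 1, fderiv ℝ w (r • (θ : Euc n)) θ ∂sphMeas n) +
      (n - 2) * ((∫ θ : sphere (0 : Euc n) 1, w (r • (θ : Euc n)) ∂sphMeas n) -
        ∫ θ : sphere (0 : Euc n) 1, w ((0:ℝ) • (θ : Euc n)) ∂sphMeas n) := by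
  have hw1 := contDiffOn_fderiv_ball hw
  have hw2 := hw1.continuousOn_fderiv_of_isOpen isOpen_ball le_rfl
  have hmap : MapsTo (fun p : ℝ × sphere (0 : Euc n) 1 => p.1 • (p.2 : Euc n))
      (Ioo (-1 : ℝ) 1 ×ˢ univ) (ball 0 1) := fun p hp => smul_sphere_mem_ball hp.1 p.2
  have hpc : Continuous fun p : ℝ × sphere (0 : Euc n) 1 => p.1 • (p.2 : Euc n) := by fun_prop
  have hp2 : Continuous fun p : ℝ × sphere (0 : Euc n) 1 => (p.2 : Euc n) := by fun_prop
  have hsm : ∀ s (θ : sphere (0 : Euc n) 1), HasDerivAt (fun s : ℝ => s • (θ : Euc n)) (θ : Euc n) s := by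
    intro s θ
    simpa using (hasDerivAt_id s).smul_const (θ : Euc n)
  have hsc : ∀ s : ℝ, Continuous fun θ : sphere (0 : Euc n) 1 => s • (θ : Euc n) := by
    intro s; fun_prop
  have hθ : Continuous fun θ : sphere (0 : Euc n) 1 => (θ : Euc n) := by fun_prop
  have k1 : ContinuousOn (fun p : ℝ × sphere (0 : Euc n) 1 =>
      fderiv ℝ w (p.1 • (p.2 : Euc n)) p.2) (Ioo (-1 : ℝ) 1 ×ˢ univ) :=
    (hw1.continuousOn.comp hpc.continuousOn hmap).clm_apply hp2.continuousOn
  have k2 : ContinuousOn (fun p : ℝ × sphere (0 : Euc n) 1 =>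
      fderiv ℝ (fderiv ℝ w) (p.1 • (p.2 : Euc n)) p.2 p.2) (Ioo (-1 : ℝ) 1 ×ˢ univ) :=
    ((hw2.comp hpc.continuousOn hmap).clm_apply hp2.continuousOn).clm_apply hp2.continuousOn
  have k3 : ContinuousOn (fun p : ℝ × sphere (0 : Euc n) 1 =>
      lapl w (p.1 • (p.2 : Euc n))) (Ioo (-1 : ℝ) 1 ×ˢ univ) :=
    (continuousOn_lapl hw).comp hpc.continuousOn hmap
  have hG : ∀ s ∈ Ioo (-1 : ℝ) 1, HasDerivAt
      (fun s => ∫ θ : sphere (0 : Euc n) 1, w (s • (θ : Euc n)) ∂sphMeas n)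
      (∫ θ : sphere (0 : Euc n) 1, fderiv ℝ w (s • (θ : Euc n)) θ ∂sphMeas n) s := by
    intro s hs
    refine hasDerivAt_sphere_integral (k := fun s (θ : sphere (0 : Euc n) 1) => w (s • (θ : Euc n)))
      (k' := fun s (θ : sphere (0 : Euc n) 1) => fderiv ℝ w (s • (θ : Euc n)) θ) hs ?_ k1 ?_
    · exact fun s hs => hw.continuousOn.comp_continuous (hsc s) (smul_sphere_mem_ball hs)
    · intro s hs θ
      have h1 := (hw.contDiffAt (isOpen_ball.mem_nhds (smul_sphere_mem_ball hs θ))).differentiableAt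
        two_ne_zero
      exact h1.hasFDerivAt.comp_hasDerivAt s (hsm s θ)
  have hN : ∀ s ∈ Ioo (-1 : ℝ) 1, HasDerivAt
      (fun s => ∫ θ : sphere (0 : Euc n) 1, fderiv ℝ w (s • (θ : Euc n)) θ ∂sphMeas n)
      (∫ θ : sphere (0 : Euc n) 1, fderiv ℝ (fderiv ℝ w) (s • (θ : Euc n)) θ θ ∂sphMeas n) s := by
    intro s hs
    refine hasDerivAt_sphere_integral (k := fun s (θ : sphere (0 : Euc n) 1) => fderiv ℝ w (s • (θ : Euc n)) θ)
      (k' := fun s (θ : sphere (0 : Euc n) 1) => fderiv ℝ (fderiv ℝ w) (s • (θ : Euc n)) θ θ) hs ?_ k2 ?_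
    · exact fun s hs => (hw1.continuousOn.comp_continuous (hsc s) (smul_sphere_mem_ball hs)).clm_apply hθ
    · intro s hs θ
      have h1 := (hw1.contDiffAt (isOpen_ball.mem_nhds (smul_sphere_mem_ball hs θ))).differentiableAt
        one_ne_zero
      have h2 := h1.hasFDerivAt.comp_hasDerivAt s (hsm s θ)
      simpa using h2.clm_apply (hasDerivAt_const s (θ : Euc n))
  have hF : ∀ s ∈ Ioo (-1 : ℝ) 1, HasDerivAt
      (fun s => s * (∫ θ : sphere (0 : Euc n) 1, fderiv ℝ w (s • (θ : Euc n)) θ ∂sphMeas n) +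
        (n - 2) * ∫ θ : sphere (0 : Euc n) 1, w (s • (θ : Euc n)) ∂sphMeas n)
      (1 * (∫ θ : sphere (0 : Euc n) 1, fderiv ℝ w (s • (θ : Euc n)) θ ∂sphMeas n) +
        s * (∫ θ : sphere (0 : Euc n) 1, fderiv ℝ (fderiv ℝ w) (s • (θ : Euc n)) θ θ ∂sphMeas n) +
        (n - 2) * (∫ θ : sphere (0 : Euc n) 1, fderiv ℝ w (s • (θ : Euc n)) θ ∂sphMeas n)) s :=
    fun s hs => ((hasDerivAt_id s).mul (hN s hs)).add ((hG s hs).const_mul ((n:ℝ) - 2))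
  have hsub : Icc (0:ℝ) r ⊆ Ioo (-1 : ℝ) 1 := fun s hs => ⟨by linarith [hs.1], by linarith [hs.2, hr.2]⟩
  have hcD : ContinuousOn (fun s : ℝ => s * ∫ θ : sphere (0 : Euc n) 1, lapl w (s • (θ : Euc n))
      ∂sphMeas n) (Ioo (-1 : ℝ) 1) :=
    continuousOn_id.mul (continuousOn_sphere_integral
      (k := fun s (θ : sphere (0 : Euc n) 1) => lapl w (s • (θ : Euc n))) isOpen_Ioo k3)
  have := intervalIntegral.integral_eq_sub_of_hasDerivAt_of_le hr.1.le
    (f := fun s => s * (∫ θ : sphere (0 : Euc n) 1, fderiv ℝ w (s • (θ : Euc n)) θ ∂sphMeas n) +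
        (n - 2) * ∫ θ : sphere (0 : Euc n) 1, w (s • (θ : Euc n)) ∂sphMeas n)
    (f' := fun s : ℝ => s * ∫ θ : sphere (0 : Euc n) 1, lapl w (s • (θ : Euc n)) ∂sphMeas n)
    (fun s hs => (hF s (hsub hs)).continuousAt.continuousWithinAt)
    (fun s hs => by
      have h1 := hF s (hsub (Ioo_subset_Icc_self hs))
      have h2 := integral_lapl_sphere hw (hsub (Ioo_subset_Icc_self hs))
      have h3 : s ≠ 0 := hs.1.ne'
      refine h1.congr_deriv (mul_left_cancel₀ h3 ?_)
      linear_combination -h2)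
    (ContinuousOn.intervalIntegrable (by rw [uIcc_of_le hr.1.le]; exact hcD.mono hsub))
  rw [this]
  ring

/-- For a nonnegative subharmonic function the value at the centre in Green's formula may be
dropped. -/
lemma lintegral_radial_lapl_le (hn : 2 ≤ n) (hw : ContDiffOn ℝ 2 w (ball 0 1))
    (hw0 : ∀ x ∈ ball (0 : Euc n) 1, 0 ≤ w x) (hl : ∀ x ∈ ball (0 : Euc n) 1, 0 ≤ lapl w x)
    {r : ℝ} (hr : r ∈ Ioo (0 : ℝ) 1) :
    ∫⁻ s in Ioo 0 r, ENNReal.ofReal s * ∫⁻ θ : sphere (0 : Euc n) 1,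
      ENNReal.ofReal (lapl w (s • (θ : Euc n))) ∂sphMeas n ≤
    ENNReal.ofReal (r * (∫ θ : sphere (0 : Euc n) 1, fderiv ℝ w (r • (θ : Euc n)) θ ∂sphMeas n) +
      (n - 2) * ∫ θ : sphere (0 : Euc n) 1, w (r • (θ : Euc n)) ∂sphMeas n) := by
  have hsub : Icc (0:ℝ) r ⊆ Ioo (-1 : ℝ) 1 := fun s hs => ⟨by linarith [hs.1], by linarith [hs.2, hr.2]⟩
  have hsc : ∀ s : ℝ, Continuous fun θ : sphere (0 : Euc n) 1 => s • (θ : Euc n) := by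
    intro s; fun_prop
  have hmap : MapsTo (fun p : ℝ × sphere (0 : Euc n) 1 => p.1 • (p.2 : Euc n))
      (Ioo (-1 : ℝ) 1 ×ˢ univ) (ball 0 1) := fun p hp => smul_sphere_mem_ball hp.1 p.2
  have hpc : Continuous fun p : ℝ × sphere (0 : Euc n) 1 => p.1 • (p.2 : Euc n) := by fun_prop
  have hcD : ContinuousOn (fun s : ℝ => s * ∫ θ : sphere (0 : Euc n) 1, lapl w (s • (θ : Euc n))
      ∂sphMeas n) (Ioo (-1 : ℝ) 1) :=
    continuousOn_id.mul (continuousOn_sphere_integral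
      (k := fun s (θ : sphere (0 : Euc n) 1) => lapl w (s • (θ : Euc n))) isOpen_Ioo
      ((continuousOn_lapl hw).comp hpc.continuousOn hmap))
  have e1 : ∫⁻ s in Ioo 0 r, ENNReal.ofReal s * ∫⁻ θ : sphere (0 : Euc n) 1,
      ENNReal.ofReal (lapl w (s • (θ : Euc n))) ∂sphMeas n =
      ∫⁻ s in Ioo 0 r, ENNReal.ofReal (s * ∫ θ : sphere (0 : Euc n) 1, lapl w (s • (θ : Euc n))
        ∂sphMeas n) := by
    refine setLIntegral_congr_fun measurableSet_Ioo fun s hs => ?_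
    have hs' := hsub (Ioo_subset_Icc_self hs)
    rw [← ofReal_integral_eq_lintegral_ofReal (f := fun θ : sphere (0 : Euc n) 1 =>
      lapl w (s • (θ : Euc n))) (integrable_sphere
      ((continuousOn_lapl hw).comp_continuous (hsc s) (smul_sphere_mem_ball hs')))
      (.of_forall fun θ => hl _ (smul_sphere_mem_ball hs' θ)), ENNReal.ofReal_mul hs.1.le]
  rw [e1, ← ofReal_integral_eq_lintegral_ofReal]
  · refine ENNReal.ofReal_le_ofReal ?_
    rw [← integral_Ioc_eq_integral_Ioo, ← intervalIntegral.integral_of_le hr.1.le,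
      integral_radial_lapl hw hr]
    have h0 : 0 ≤ ∫ θ : sphere (0 : Euc n) 1, w ((0:ℝ) • (θ : Euc n)) ∂sphMeas n :=
      integral_nonneg fun θ => hw0 _ (smul_sphere_mem_ball (by norm_num) θ)
    have h2 : (2:ℝ) ≤ n := by exact_mod_cast hn
    nlinarith
  · exact ((hcD.mono hsub).integrableOn_compact isCompact_Icc).mono_set Ioo_subset_Icc_self
  · refine (ae_restrict_iff' measurableSet_Ioo).2 (.of_forall fun s hs => ?_)
    exact mul_nonneg hs.1.le (integral_nonneg fun θ =>
      hl _ (smul_sphere_mem_ball (hsub (Ioo_subset_Icc_self hs)) θ))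

end

/-! ### Truncation of harmonic functions -/

/-- The `C²` truncation `t ↦ (t - ε)₊³ / (2 * t)` of `t² / 2`. -/
noncomputable def trunc2 (ε t : ℝ) : ℝ := max (t - ε) 0 ^ 3 / (2 * t)

/-- The first derivative of `trunc2 ε`. -/
noncomputable def trunc2' (ε t : ℝ) : ℝ :=
  3 * max (t - ε) 0 ^ 2 / (2 * t) - max (t - ε) 0 ^ 3 / (2 * t ^ 2)

/-- The second derivative of `trunc2 ε`. -/
noncomputable def trunc2'' (ε t : ℝ) : ℝ := 1 - (1 - max (t - ε) 0 / t) ^ 3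

section
variable {ε t : ℝ}

lemma trunc2_zero (h : t ≤ ε) : trunc2 ε t = 0 := by
  simp [trunc2, max_eq_right (sub_nonpos.2 h)]

lemma hasDerivAt_posPart_sub_pow (k : ℕ) (ε t : ℝ) :
    HasDerivAt (fun t : ℝ => (max (t - ε) 0) ^ (k + 1 + 1))
      ((k + 2 : ℝ) * (max (t - ε) 0) ^ (k + 1)) t := by
  have := (hasDerivAt_posPart_pow k (t - ε)).comp t ((hasDerivAt_id t).sub_const ε)
  rw [mul_one] at this
  exact this

lemma trunc2_hasDerivAt (ht : 0 < t) : HasDerivAt (trunc2 ε) (trunc2' ε t) t := by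
  have h := (hasDerivAt_posPart_sub_pow 1 ε t).div ((hasDerivAt_id t).const_mul 2)
    (by simpa using ht.ne')
  refine h.congr_deriv ?_
  simp only [trunc2', id]
  have := ht.ne'
  push_cast
  field_simp
  ring

lemma trunc2'_hasDerivAt (ht : 0 < t) : HasDerivAt (trunc2' ε) (trunc2'' ε t) t := by
  have h1 := ((hasDerivAt_posPart_sub_pow 0 ε t).const_mul 3).div ((hasDerivAt_id t).const_mul 2)
    (by simpa using ht.ne')
  have h2 := (hasDerivAt_posPart_sub_pow 1 ε t).div ((hasDerivAt_pow 2 t).const_mul 2)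
    (by simpa using ht.ne')
  refine (h1.sub h2).congr_deriv ?_
  simp only [trunc2'', id]
  have := ht.ne'
  push_cast
  field_simp
  ring

lemma trunc2_contDiffAt (ht : 0 < t) : ContDiffAt ℝ 2 (trunc2 ε) t := by
  have h1 : ContDiffAt ℝ 2 (fun t : ℝ => max (t - ε) 0 ^ 3) t := by
    have := (contDiff_posPart_pow 2).comp (contDiff_id.sub (contDiff_const (c := ε)))
    exact this.contDiffAt
  exact h1.div (contDiffAt_const.mul contDiffAt_id) (by simpa using ht.ne')

lemma trunc_ratio (hε : 0 ≤ ε) (ht : 0 < t) :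
    0 ≤ max (t - ε) 0 / t ∧ max (t - ε) 0 / t ≤ 1 :=
  ⟨by positivity, by rw [div_le_one ht]; exact max_le (by linarith) ht.le⟩

lemma trunc2_nonneg (ht : 0 ≤ t) : 0 ≤ trunc2 ε t := by unfold trunc2; positivity

lemma trunc2_le (hε : 0 ≤ ε) (ht : 0 < t) : trunc2 ε t ≤ t ^ 2 / 2 := by
  obtain ⟨h0, h1⟩ := trunc_ratio hε ht
  have e : trunc2 ε t = t ^ 2 / 2 * (max (t - ε) 0 / t) ^ 3 := by
    unfold trunc2; have := ht.ne'; field_simp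
  rw [e]
  exact mul_le_of_le_one_right (by positivity) (pow_le_one₀ h0 h1)

lemma trunc2'_mem (hε : 0 ≤ ε) (ht : 0 < t) : 0 ≤ trunc2' ε t ∧ trunc2' ε t ≤ t := by
  obtain ⟨h0, h1⟩ := trunc_ratio hε ht
  have e : trunc2' ε t = t * ((3 * (max (t - ε) 0 / t) ^ 2 - (max (t - ε) 0 / t) ^ 3) / 2) := by
    unfold trunc2'; have := ht.ne'; field_simp
  rw [e]
  generalize max (t - ε) 0 / t = ρ at *
  refine ⟨mul_nonneg ht.le ?_, mul_le_of_le_one_right ht.le ?_⟩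
  · nlinarith [mul_nonneg (sq_nonneg ρ) (sub_nonneg.2 h1)]
  · nlinarith [mul_nonneg (sq_nonneg (1 - ρ)) h0, sq_nonneg (1 - ρ)]

lemma trunc2''_mem (hε : 0 ≤ ε) (ht : 0 < t) : 0 ≤ trunc2'' ε t := by
  obtain ⟨h0, h1⟩ := trunc_ratio hε ht
  unfold trunc2''
  have : (1 - max (t - ε) 0 / t) ^ 3 ≤ 1 := pow_le_one₀ (by linarith) (by linarith)
  linarith

lemma trunc2''_antitone {ε' : ℝ} (h : ε' ≤ ε) (hε : 0 ≤ ε') (ht : 0 < t) :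
    trunc2'' ε t ≤ trunc2'' ε' t := by
  obtain ⟨h0, h1⟩ := trunc_ratio hε ht
  unfold trunc2''
  have : max (t - ε) 0 / t ≤ max (t - ε') 0 / t := by gcongr
  have : (1 - max (t - ε') 0 / t) ^ 3 ≤ (1 - max (t - ε) 0 / t) ^ 3 :=
    pow_le_pow_left₀ (by linarith) (by linarith) 3
  linarith

lemma trunc2''_tendsto (ht : 0 < t) :
    Filter.Tendsto (fun k : ℕ => trunc2'' (1 / ((k:ℝ) + 1)) t) Filter.atTop (nhds 1) := by
  have h : Continuous fun ε : ℝ => trunc2'' ε t := by unfold trunc2''; fun_prop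
  have h1 := (h.tendsto 0).comp (tendsto_one_div_add_atTop_nhds_zero_nat (𝕜 := ℝ))
  have h2 : trunc2'' 0 t = 1 := by
    simp [trunc2'', max_eq_left ht.le, ht.ne']
  rwa [h2] at h1

end

lemma sum_sq_apply_single {n : ℕ} (L : Euc n →L[ℝ] ℝ) :
    ∑ i, L (EuclideanSpace.single i (1:ℝ)) ^ 2 = ‖L‖ ^ 2 := by
  obtain ⟨g, rfl⟩ := (InnerProductSpace.toDual ℝ (Euc n)).surjective L
  rw [LinearIsometryEquiv.norm_map, EuclideanSpace.norm_sq_eq]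
  refine Finset.sum_congr rfl fun i _ => ?_
  simp [EuclideanSpace.inner_single_right]

/-- The set where `u` is positive, inside the unit ball. -/
def posSet {n : ℕ} (u : Euc n → ℝ) : Set (Euc n) := {x ∈ ball (0 : Euc n) 1 | 0 < u x}

section
variable {n : ℕ} {u : Euc n → ℝ}

lemma isOpen_posSet (hc : ContinuousOn u (ball 0 1)) : IsOpen (posSet u) :=
  hc.isOpen_inter_preimage isOpen_ball isOpen_Ioi

lemma harm_contDiffAt (hc : ContinuousOn u (ball 0 1)) (hh : IsHarmonicOn u (posSet u))
    {x : Euc n} (hx : x ∈ posSet u) : ContDiffAt ℝ 2 u x :=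
  hh.1.contDiffAt ((isOpen_posSet hc).mem_nhds hx)

variable {ε : ℝ}

lemma trunc2_comp_eventually_zero (hc : ContinuousOn u (ball 0 1)) (hε : 0 < ε) {x : Euc n}
    (hx : x ∈ ball (0 : Euc n) 1) (h0 : u x ≤ 0) :
    (fun y => trunc2 ε (u y)) =ᶠ[nhds x] fun _ => 0 := by
  have h1 := hc.continuousAt (isOpen_ball.mem_nhds hx)
  filter_upwards [h1.eventually (Iio_mem_nhds (h0.trans_lt hε))] with y hy
  exact trunc2_zero (le_of_lt hy)

lemma trunc2_comp_contDiffOn (hc : ContinuousOn u (ball 0 1)) (hh : IsHarmonicOn u (posSet u))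
    (hε : 0 < ε) : ContDiffOn ℝ 2 (fun y => trunc2 ε (u y)) (ball 0 1) := by
  intro x hx
  refine ContDiffAt.contDiffWithinAt ?_
  rcases lt_or_ge 0 (u x) with h | h
  · exact ContDiffAt.comp x (trunc2_contDiffAt h) (harm_contDiffAt hc hh ⟨hx, h⟩)
  · exact contDiffAt_const.congr_of_eventuallyEq (trunc2_comp_eventually_zero hc hε hx h)

lemma trunc2_comp_fderiv (hc : ContinuousOn u (ball 0 1)) (hh : IsHarmonicOn u (posSet u))
    {x : Euc n} (hx : x ∈ posSet u) :
    fderiv ℝ (fun y => trunc2 ε (u y)) x = trunc2' ε (u x) • fderiv ℝ u x :=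
  ((trunc2_hasDerivAt hx.2).comp_hasFDerivAt x
    ((harm_contDiffAt hc hh hx).differentiableAt two_ne_zero).hasFDerivAt).fderiv

/-- The truncation of a harmonic function is subharmonic, with an explicit Laplacian. -/
lemma trunc2_comp_lapl (hc : ContinuousOn u (ball 0 1)) (hh : IsHarmonicOn u (posSet u))
    {x : Euc n} (hx : x ∈ posSet u) :
    lapl (fun y => trunc2 ε (u y)) x = trunc2'' ε (u x) * ‖fderiv ℝ u x‖ ^ 2 := by
  have hU := (isOpen_posSet hc).mem_nhds hx
  have hu := harm_contDiffAt hc hh hx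
  have hu1 : DifferentiableAt ℝ (fderiv ℝ u) x :=
    (hu.fderiv_right (m := 1) (by norm_num)).differentiableAt one_ne_zero
  have key : ∀ i : Fin n, fderiv ℝ (fun y => fderiv ℝ (fun y => trunc2 ε (u y)) y
      (EuclideanSpace.single i (1:ℝ))) x (EuclideanSpace.single i (1:ℝ)) =
      trunc2'' ε (u x) * fderiv ℝ u x (EuclideanSpace.single i (1:ℝ)) ^ 2 +
      trunc2' ε (u x) * fderiv ℝ (fun y => fderiv ℝ u y (EuclideanSpace.single i (1:ℝ))) x
        (EuclideanSpace.single i (1:ℝ)) := by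
    intro i
    have e : (fun y => fderiv ℝ (fun y => trunc2 ε (u y)) y (EuclideanSpace.single i (1:ℝ)))
        =ᶠ[nhds x] fun y => trunc2' ε (u y) * fderiv ℝ u y (EuclideanSpace.single i (1:ℝ)) := by
      filter_upwards [hU] with y hy
      rw [trunc2_comp_fderiv hc hh hy]
      simp
    rw [e.fderiv_eq]
    have d1 := (trunc2'_hasDerivAt (ε := ε) hx.2).comp_hasFDerivAt x
      (hu.differentiableAt two_ne_zero).hasFDerivAt
    have d2 : DifferentiableAt ℝ (fun y => fderiv ℝ u y (EuclideanSpace.single i (1:ℝ))) x :=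
      hu1.clm_apply (differentiableAt_const _)
    have d3 := d1.mul d2.hasFDerivAt
    have e3 : fderiv ℝ (fun y => trunc2' ε (u y) * fderiv ℝ u y (EuclideanSpace.single i (1:ℝ))) x =
      _ := d3.fderiv
    rw [e3]
    simp
    ring
  unfold lapl
  rw [Finset.sum_congr rfl fun i _ => key i, Finset.sum_add_distrib, ← Finset.mul_sum,
    ← Finset.mul_sum, sum_sq_apply_single]
  have := hh.2 x hx
  unfold lapl at this
  rw [this]; ring

lemma trunc2_comp_lapl_zero (hc : ContinuousOn u (ball 0 1)) (hε : 0 < ε)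
    {x : Euc n} (hx : x ∈ ball (0 : Euc n) 1) (h0 : u x ≤ 0) :
    lapl (fun y => trunc2 ε (u y)) x = 0 := by
  unfold lapl
  refine Finset.sum_eq_zero fun i _ => ?_
  have h := (trunc2_comp_eventually_zero hc hε hx h0).fderiv (𝕜 := ℝ)
  have e : (fun y => fderiv ℝ (fun y => trunc2 ε (u y)) y (EuclideanSpace.single i (1:ℝ)))
        =ᶠ[nhds x] fun y => 0 := by
    filter_upwards [h] with y hy
    rw [hy]; simp
  rw [e.fderiv_eq]; simp

end

/-! ### The energy inequality -/

section
variable {n : ℕ} {u : Euc n → ℝ}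

lemma measurable_lapl (f : Euc n → ℝ) : Measurable (lapl f) := by
  unfold lapl
  exact Finset.measurable_sum _ fun i _ => measurable_fderiv_apply_const ℝ _ _

lemma measurable_smul_sphere :
    Measurable fun p : ℝ × sphere (0 : Euc n) 1 => p.1 • (p.2 : Euc n) := by
  have : Continuous fun p : ℝ × sphere (0 : Euc n) 1 => p.1 • (p.2 : Euc n) := by fun_prop
  exact this.measurable

lemma measurable_sphere_lintegral {f : Euc n → ℝ≥0∞} (hf : Measurable f) :
    Measurable fun s : ℝ => ∫⁻ θ : sphere (0 : Euc n) 1, f (s • (θ : Euc n)) ∂sphMeas n :=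
  (hf.comp measurable_smul_sphere).lintegral_prod_right'

/-- The squared gradient of `u` on its positivity set, zero elsewhere. -/
noncomputable def gradSq (u : Euc n → ℝ) : Euc n → ℝ≥0∞ :=
  (posSet u).indicator fun x => ENNReal.ofReal (‖fderiv ℝ u x‖ ^ 2)

lemma measurable_gradSq (hc : ContinuousOn u (ball 0 1)) : Measurable (gradSq u) :=
  Measurable.indicator ((measurable_fderiv ℝ u).norm.pow_const 2).ennreal_ofReal
    (isOpen_posSet hc).measurableSet

/-- As `ε → 0` the Laplacians of the truncations of `u` increase to `|∇u|²`, the Laplacian of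
`u² / 2`. -/
lemma gradSq_eq_iSup (hc : ContinuousOn u (ball 0 1)) (hh : IsHarmonicOn u (posSet u))
    {x : Euc n} (hx : x ∈ ball (0 : Euc n) 1) :
    gradSq u x = ⨆ k : ℕ, ENNReal.ofReal (lapl (fun y => trunc2 (1 / ((k:ℝ) + 1)) (u y)) x) := by
  rcases lt_or_ge 0 (u x) with h | h
  · have hx' : x ∈ posSet u := ⟨hx, h⟩
    simp only [gradSq, indicator_of_mem hx', trunc2_comp_lapl hc hh hx']
    refine tendsto_nhds_unique ?_ (tendsto_atTop_iSup ?_)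
    · refine ENNReal.tendsto_ofReal ?_
      simpa using (trunc2''_tendsto h).mul_const (‖fderiv ℝ u x‖ ^ 2)
    · intro k l hkl
      refine ENNReal.ofReal_le_ofReal (mul_le_mul_of_nonneg_right ?_ (sq_nonneg _))
      exact trunc2''_antitone (one_div_le_one_div_of_le (by positivity) (by gcongr))
        (by positivity) h
  · have hx' : x ∉ posSet u := fun h' => absurd h'.2 (not_lt.2 h)
    have : ∀ k : ℕ, lapl (fun y => trunc2 (1 / ((k:ℝ) + 1)) (u y)) x = 0 := fun k =>
      trunc2_comp_lapl_zero hc (by positivity) hx h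
    simp only [gradSq, indicator_of_notMem hx', this, ENNReal.ofReal_zero, ciSup_const]

lemma ofReal_lapl_trunc_mono (hc : ContinuousOn u (ball 0 1)) (hh : IsHarmonicOn u (posSet u))
    {x : Euc n} (hx : x ∈ ball (0 : Euc n) 1) (k : ℕ) :
    ENNReal.ofReal (lapl (fun y => trunc2 (1 / ((k:ℝ) + 1)) (u y)) x) ≤
    ENNReal.ofReal (lapl (fun y => trunc2 (1 / (((k.succ : ℕ):ℝ) + 1)) (u y)) x) := by
  rcases lt_or_ge 0 (u x) with h | h
  · have hx' : x ∈ posSet u := ⟨hx, h⟩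
    rw [trunc2_comp_lapl hc hh hx', trunc2_comp_lapl hc hh hx']
    refine ENNReal.ofReal_le_ofReal (mul_le_mul_of_nonneg_right ?_ (sq_nonneg _))
    exact trunc2''_antitone (one_div_le_one_div_of_le (by positivity) (by push_cast; linarith))
        (by positivity) h
  · rw [trunc2_comp_lapl_zero hc (by positivity) hx h]; simp

/-- The energy inequality for the truncated function, uniformly in the truncation parameter. -/
lemma trunc_energy_le (hn : 2 ≤ n) (hc : ContinuousOn u (ball 0 1))
    (h0 : ∀ x ∈ ball (0 : Euc n) 1, 0 ≤ u x) (hh : IsHarmonicOn u (posSet u))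
    {ε : ℝ} (hε : 0 < ε) {r : ℝ} (hr : r ∈ Ioo (0 : ℝ) 1) :
    ∫⁻ s in Ioo 0 r, ENNReal.ofReal s * ∫⁻ θ : sphere (0 : Euc n) 1,
      ENNReal.ofReal (lapl (fun y => trunc2 ε (u y)) (s • (θ : Euc n))) ∂sphMeas n ≤
    ENNReal.ofReal r * (∫⁻ θ : sphere (0 : Euc n) 1, ENNReal.ofReal (u (r • (θ : Euc n))) *
        (posSet u).indicator (fun x => ENNReal.ofReal |fderiv ℝ u x θ|) (r • (θ : Euc n)) ∂sphMeas n) +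
      ENNReal.ofReal (((n:ℝ) - 2) / 2) *
        ∫⁻ θ : sphere (0 : Euc n) 1, ENNReal.ofReal (u (r • (θ : Euc n))) ^ 2 ∂sphMeas n := by
  have hw := trunc2_comp_contDiffOn hc hh hε
  have hr' : r ∈ Ioo (-1 : ℝ) 1 := ⟨by linarith [hr.1], hr.2⟩
  have hb := fun θ => smul_sphere_mem_ball (n := n) hr' θ
  have h2 : (2:ℝ) ≤ n := by exact_mod_cast hn
  have hw0 : ∀ x ∈ ball (0 : Euc n) 1, 0 ≤ trunc2 ε (u x) := fun x hx => trunc2_nonneg (h0 x hx)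
  have hl : ∀ x ∈ ball (0 : Euc n) 1, 0 ≤ lapl (fun y => trunc2 ε (u y)) x := by
    intro x hx
    rcases lt_or_ge 0 (u x) with h | h
    · rw [trunc2_comp_lapl hc hh ⟨hx, h⟩]
      exact mul_nonneg (trunc2''_mem hε.le h) (sq_nonneg _)
    · rw [trunc2_comp_lapl_zero hc hε hx h]
  have hsc : Continuous fun θ : sphere (0 : Euc n) 1 => r • (θ : Euc n) := by fun_prop
  have hθ : Continuous fun θ : sphere (0 : Euc n) 1 => (θ : Euc n) := by fun_prop
  have cN : Continuous fun θ : sphere (0 : Euc n) 1 =>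
      fderiv ℝ (fun y => trunc2 ε (u y)) (r • (θ : Euc n)) θ :=
    ((contDiffOn_fderiv_ball hw).continuousOn.comp_continuous hsc hb).clm_apply hθ
  have cG : Continuous fun θ : sphere (0 : Euc n) 1 => trunc2 ε (u (r • (θ : Euc n))) :=
    hw.continuousOn.comp_continuous hsc hb
  refine (lintegral_radial_lapl_le hn hw hw0 hl hr).trans ?_
  refine ENNReal.ofReal_add_le.trans (add_le_add ?_ ?_)
  · rw [ENNReal.ofReal_mul hr.1.le]
    gcongr
    calc ENNReal.ofReal (∫ θ : sphere (0 : Euc n) 1,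
          fderiv ℝ (fun y => trunc2 ε (u y)) (r • (θ : Euc n)) θ ∂sphMeas n)
        ≤ ENNReal.ofReal (∫ θ : sphere (0 : Euc n) 1,
          |fderiv ℝ (fun y => trunc2 ε (u y)) (r • (θ : Euc n)) θ| ∂sphMeas n) := by
          refine ENNReal.ofReal_le_ofReal (integral_mono (integrable_sphere cN)
            (integrable_sphere cN.abs) fun θ => le_abs_self _)
      _ = ∫⁻ θ : sphere (0 : Euc n) 1,
          ENNReal.ofReal |fderiv ℝ (fun y => trunc2 ε (u y)) (r • (θ : Euc n)) θ| ∂sphMeas n :=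
          ofReal_integral_eq_lintegral_ofReal (integrable_sphere cN.abs)
            (.of_forall fun θ => abs_nonneg _)
      _ ≤ _ := by
          refine lintegral_mono fun θ => ?_
          rcases lt_or_ge 0 (u (r • (θ : Euc n))) with h | h
          · have hx' : r • (θ : Euc n) ∈ posSet u := ⟨hb θ, h⟩
            rw [indicator_of_mem hx', trunc2_comp_fderiv hc hh hx', ← ENNReal.ofReal_mul h.le]
            refine ENNReal.ofReal_le_ofReal ?_
            rw [smul_apply, smul_eq_mul, abs_mul, abs_of_nonneg (trunc2'_mem hε.le h).1]
            exact mul_le_mul_of_nonneg_right (trunc2'_mem hε.le h).2 (abs_nonneg _)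
          · rw [((trunc2_comp_eventually_zero hc hε (hb θ) h).fderiv_eq (𝕜 := ℝ))]
            simp
  · rw [ENNReal.ofReal_mul (by linarith), ofReal_integral_eq_lintegral_ofReal (integrable_sphere cG)
      (.of_forall fun θ => hw0 _ (hb θ))]
    rw [← lintegral_const_mul' _ _ ENNReal.ofReal_ne_top, ← lintegral_const_mul' _ _ ENNReal.ofReal_ne_top]
    refine lintegral_mono fun θ => ?_
    have hu := h0 _ (hb θ)
    rw [← ENNReal.ofReal_pow hu, ← ENNReal.ofReal_mul (by linarith),
      ← ENNReal.ofReal_mul (by linarith)]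
    refine ENNReal.ofReal_le_ofReal ?_
    have h3 : trunc2 ε (u (r • (θ : Euc n))) ≤ u (r • (θ : Euc n)) ^ 2 / 2 := by
      rcases hu.lt_or_eq with h | h
      · exact trunc2_le hε.le h
      · rw [trunc2_zero (by rw [← h]; exact hε.le)]; positivity
    nlinarith

/-- The integral over `B_r` of `|∇u|² |x|^(2-n)` on the positivity set of `u`, in polar
coordinates. -/
noncomputable def radEnergy (u : Euc n → ℝ) (r : ℝ) : ℝ≥0∞ :=
  ∫⁻ s in Ioo 0 r, ENNReal.ofReal s * ∫⁻ θ : sphere (0 : Euc n) 1, gradSq u (s • (θ : Euc n)) ∂sphMeas n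

/-- The energy inequality
`∫_{B_r} |∇u|² |x|^(2-n) ≤ r ∫ u |∂_r u| + (n - 2)/2 ∫ u²`, the right-hand integrals being over the
unit sphere with `u` and `∂_r u` evaluated at radius `r`. -/
lemma radEnergy_le (hn : 2 ≤ n) (hc : ContinuousOn u (ball 0 1))
    (h0 : ∀ x ∈ ball (0 : Euc n) 1, 0 ≤ u x) (hh : IsHarmonicOn u (posSet u))
    {r : ℝ} (hr : r ∈ Ioo (0 : ℝ) 1) :
    radEnergy u r ≤
    ENNReal.ofReal r * (∫⁻ θ : sphere (0 : Euc n) 1, ENNReal.ofReal (u (r • (θ : Euc n))) *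
        (posSet u).indicator (fun x => ENNReal.ofReal |fderiv ℝ u x θ|) (r • (θ : Euc n)) ∂sphMeas n) +
      ENNReal.ofReal (((n:ℝ) - 2) / 2) *
        ∫⁻ θ : sphere (0 : Euc n) 1, ENNReal.ofReal (u (r • (θ : Euc n))) ^ 2 ∂sphMeas n := by
  have hsb : ∀ s ∈ Ioo 0 r, ∀ θ : sphere (0 : Euc n) 1, s • (θ : Euc n) ∈ ball (0 : Euc n) 1 :=
    fun s hs θ => smul_sphere_mem_ball ⟨by linarith [hs.1], by linarith [hs.2, hr.2]⟩ θ
  have hm : ∀ k : ℕ, Measurable fun x => ENNReal.ofReal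
      (lapl (fun y => trunc2 (1 / ((k:ℝ) + 1)) (u y)) x) := fun k => (measurable_lapl _).ennreal_ofReal
  have e1 : radEnergy u r = ∫⁻ s in Ioo 0 r, ⨆ k : ℕ, ENNReal.ofReal s *
      ∫⁻ θ : sphere (0 : Euc n) 1, ENNReal.ofReal
        (lapl (fun y => trunc2 (1 / ((k:ℝ) + 1)) (u y)) (s • (θ : Euc n))) ∂sphMeas n := by
    refine setLIntegral_congr_fun measurableSet_Ioo fun s hs => ?_
    rw [← ENNReal.mul_iSup, ← lintegral_iSup_ae]
    · congr 1
      exact lintegral_congr fun θ => gradSq_eq_iSup hc hh (hsb s hs θ)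
    · intro k
      exact (hm k).comp (by fun_prop)
    · exact fun k => .of_forall fun θ => ofReal_lapl_trunc_mono hc hh (hsb s hs θ) k
  rw [e1, lintegral_iSup_ae]
  · exact iSup_le fun k => trunc_energy_le hn hc h0 hh (by positivity) hr
  · exact fun k => ENNReal.measurable_ofReal.mul (measurable_sphere_lintegral (hm k))
  · intro k
    refine (ae_restrict_iff' measurableSet_Ioo).2 (.of_forall fun s hs => ?_)
    refine mul_le_mul_right (lintegral_mono fun θ => ?_) _
    exact ofReal_lapl_trunc_mono hc hh (hsb s hs θ) k

end

/-! ### The characteristic exponent of a slice -/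

section
variable {n : ℕ} {u : Euc n → ℝ}

lemma measurable_radial_deriv (u : Euc n → ℝ) (s : ℝ) :
    Measurable fun θ : sphere (0 : Euc n) 1 => fderiv ℝ u (s • (θ : Euc n)) θ := by
  have e : (fun θ : sphere (0 : Euc n) 1 => fderiv ℝ u (s • (θ : Euc n)) θ) =
      fun θ : sphere (0 : Euc n) 1 => ∑ i, (θ : Euc n) i * fderiv ℝ u (s • (θ : Euc n)) (EuclideanSpace.single i (1:ℝ)) :=
    funext fun θ => clm_apply_euc _ _
  rw [e]
  refine Finset.measurable_sum _ fun i _ => Measurable.mul ?_ ?_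
  · have : Continuous fun θ : sphere (0 : Euc n) 1 => (θ : Euc n) i := by fun_prop
    exact this.measurable
  · have : Continuous fun θ : sphere (0 : Euc n) 1 => s • (θ : Euc n) := by fun_prop
    exact (measurable_fderiv_apply_const ℝ u (EuclideanSpace.single i (1:ℝ))).comp this.measurable

lemma continuousOn_slice (hc : ContinuousOn u (ball 0 1)) {s : ℝ} (hs : s ∈ Ioo (0:ℝ) 1) :
    ContinuousOn (fun y => u (s • y)) (sphere (0 : Euc n) 1) := by
  refine hc.comp (by fun_prop) fun θ hθ => ?_
  exact smul_sphere_mem_ball (n := n) ⟨by linarith [hs.1], hs.2⟩ ⟨θ, hθ⟩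

/-- The absolute value of the radial derivative of `u` on the positive part of the sphere of radius `s`. -/
noncomputable def radialAbs (u : Euc n → ℝ) (s : ℝ) (θ : sphere (0 : Euc n) 1) : ℝ≥0∞ :=
  (posSet u).indicator (fun x => ENNReal.ofReal |fderiv ℝ u x θ|) (s • (θ : Euc n))

lemma measurable_radialAbs (hc : ContinuousOn u (ball 0 1)) (s : ℝ) :
    Measurable (radialAbs u s) := by
  have h : Continuous fun θ : sphere (0 : Euc n) 1 => s • (θ : Euc n) := by fun_prop
  have hm : MeasurableSet ((fun θ : sphere (0 : Euc n) 1 => s • (θ : Euc n)) ⁻¹' posSet u) :=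
    h.measurable (isOpen_posSet hc).measurableSet
  exact Measurable.indicator (f := fun θ : sphere (0 : Euc n) 1 =>
    ENNReal.ofReal |fderiv ℝ u (s • (θ : Euc n)) θ|)
    (measurable_radial_deriv u s).abs.ennreal_ofReal hm

/-- Splitting of the gradient into its tangential and radial parts. -/
lemma sphE_slice_add (hc : ContinuousOn u (ball 0 1)) (hh : IsHarmonicOn u (posSet u))
    {s : ℝ} (hs : s ∈ Ioo (0:ℝ) 1) :
    sphE (fun y => u (s • y)) +
      ENNReal.ofReal (s ^ 2) * ∫⁻ θ : sphere (0 : Euc n) 1, radialAbs u s θ ^ 2 ∂sphMeas n =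
    ENNReal.ofReal (s ^ 2) * ∫⁻ θ : sphere (0 : Euc n) 1, gradSq u (s • (θ : Euc n)) ∂sphMeas n := by
  unfold sphE
  rw [← lintegral_const_mul' _ _ ENNReal.ofReal_ne_top, ← lintegral_const_mul' _ _ ENNReal.ofReal_ne_top,
    ← lintegral_add_right _ (((measurable_radialAbs hc s).pow_const 2).const_mul _)]
  refine lintegral_congr fun θ => ?_
  have hb := smul_sphere_mem_ball (n := n) ⟨by linarith [hs.1], hs.2⟩ θ
  by_cases h : 0 < u (s • (θ : Euc n))
  · have hx : s • (θ : Euc n) ∈ posSet u := ⟨hb, h⟩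
    have hθ : θ ∈ {θ : sphere (0 : Euc n) 1 | 0 < u (s • (θ : Euc n))} := h
    have hd : fderiv ℝ (fun y => u (s • y)) (θ : Euc n) = s • fderiv ℝ u (s • (θ : Euc n)) := by
      have h1 := ((harm_contDiffAt hc hh hx).differentiableAt two_ne_zero).hasFDerivAt
      have h2 : HasFDerivAt (fun y : Euc n => s • y) (s • ContinuousLinearMap.id ℝ (Euc n)) (θ : Euc n) :=
        (hasFDerivAt_id _).const_smul s
      have h3 : fderiv ℝ (fun y => u (s • y)) (θ : Euc n) = _ := (h1.comp (θ : Euc n) h2).fderiv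
      rw [h3]
      ext y
      simp
    rw [indicator_of_mem hθ, hd]
    simp only [radialAbs, gradSq, indicator_of_mem hx]
    have hle : fderiv ℝ u (s • (θ : Euc n)) θ ^ 2 ≤ ‖fderiv ℝ u (s • (θ : Euc n))‖ ^ 2 := by
      have := (fderiv ℝ u (s • (θ : Euc n))).le_opNorm (θ : Euc n)
      rw [norm_eq_of_mem_sphere, mul_one, Real.norm_eq_abs] at this
      rw [← sq_abs]
      gcongr
    rw [← ENNReal.ofReal_pow (abs_nonneg _), sq_abs, ← ENNReal.ofReal_mul (sq_nonneg _),
      ← ENNReal.ofReal_mul (sq_nonneg _), ← ENNReal.ofReal_add _ (by positivity)]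
    · congr 1
      rw [norm_smul, smul_apply, smul_eq_mul, mul_pow, mul_pow, Real.norm_eq_abs, sq_abs]
      ring
    · rw [norm_smul, smul_apply, smul_eq_mul, mul_pow, mul_pow, Real.norm_eq_abs, sq_abs]
      nlinarith [sq_nonneg s]
  · have hx : s • (θ : Euc n) ∉ posSet u := fun h' => h h'.2
    have hθ : θ ∉ {θ : sphere (0 : Euc n) 1 | 0 < u (s • (θ : Euc n))} := h
    rw [indicator_of_notMem hθ]
    simp [radialAbs, gradSq, indicator_of_notMem hx]

/-- At a radius `s` where the spherical energy is finite, the logarithmic derivative of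
`radEnergy u` is at least `2α / s`, where `α` is the characteristic exponent of the slice of `u`:
the nonnegative root of `α (α + n - 2) = E / Q` with `E / Q` the spherical Rayleigh quotient. -/
lemma exists_exponent (hn : 2 ≤ n) (hc : ContinuousOn u (ball 0 1))
    (h0 : ∀ x ∈ ball (0 : Euc n) 1, 0 ≤ u x) (hh : IsHarmonicOn u (posSet u))
    {s : ℝ} (hs : s ∈ Ioo (0:ℝ) 1)
    (hS : ∫⁻ θ : sphere (0 : Euc n) 1, gradSq u (s • (θ : Euc n)) ∂sphMeas n ≠ ∞)
    (hA : radEnergy u s ≠ 0) :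
    sphQ (fun y => u (s • y)) ≠ 0 ∧ ∃ α : ℝ, 0 ≤ α ∧
      sphE (fun y => u (s • y)) ≤ ENNReal.ofReal (α * (α + n - 2)) * sphQ (fun y => u (s • y)) ∧
      2 * α * (radEnergy u s).toReal ≤
        s ^ 2 * (∫⁻ θ : sphere (0 : Euc n) 1, gradSq u (s • (θ : Euc n)) ∂sphMeas n).toReal := by
  have hcs := continuousOn_slice hc hs
  have hQt := sphQ_ne_top hcs
  have hsplit := sphE_slice_add hc hh hs
  have hen := radEnergy_le hn hc h0 hh hs
  have hum : Measurable fun θ : sphere (0 : Euc n) 1 => ENNReal.ofReal (u (s • (θ : Euc n))) :=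
    (continuousOn_iff_continuous_domRestrict.1 hcs).measurable.ennreal_ofReal
  have hcsw := lintegral_cauchy_schwarz (sphMeas n) (fun θ => ENNReal.ofReal (u (s • (θ : Euc n))))
    (radialAbs u s) hum.aemeasurable (measurable_radialAbs hc s).aemeasurable
  have eQ : ∫⁻ θ : sphere (0 : Euc n) 1, ENNReal.ofReal (u (s • (θ : Euc n))) ^ 2 ∂sphMeas n =
    sphQ (fun y => u (s • y)) := rfl
  have eX : (∫⁻ θ : sphere (0 : Euc n) 1, ENNReal.ofReal (u (s • (θ : Euc n))) *
        (posSet u).indicator (fun x => ENNReal.ofReal |fderiv ℝ u x θ|) (s • (θ : Euc n)) ∂sphMeas n) =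
      ∫⁻ θ : sphere (0 : Euc n) 1, ENNReal.ofReal (u (s • (θ : Euc n))) * radialAbs u s θ ∂sphMeas n := rfl
  rw [eX, eQ] at hen
  rw [eQ] at hcsw
  generalize (∫⁻ θ : sphere (0 : Euc n) 1, gradSq u (s • (θ : Euc n)) ∂sphMeas n) = S at *
  generalize (∫⁻ θ : sphere (0 : Euc n) 1, radialAbs u s θ ^ 2 ∂sphMeas n) = R at *
  generalize (∫⁻ θ : sphere (0 : Euc n) 1, ENNReal.ofReal (u (s • (θ : Euc n))) * radialAbs u s θ
    ∂sphMeas n) = X at *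
  generalize sphQ (fun y => u (s • y)) = Q at *
  generalize sphE (fun y => u (s • y)) = E at *
  generalize radEnergy u s = A at *
  clear eQ eX
  have hs2 : 0 < s ^ 2 := by have := hs.1; positivity
  have hRHS : ENNReal.ofReal (s ^ 2) * S ≠ ∞ := ENNReal.mul_ne_top ENNReal.ofReal_ne_top hS
  have hEt : E ≠ ∞ := ne_top_of_le_ne_top hRHS (by rw [← hsplit]; exact le_self_add)
  have hRt : R ≠ ∞ := by
    intro h
    rw [h, ENNReal.mul_top (by simpa using hs.1.ne'), add_top] at hsplit
    exact hRHS hsplit.symm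
  have hXt : X ≠ ∞ := by
    intro h
    rw [h] at hcsw
    simp only [ENNReal.top_pow two_ne_zero, top_le_iff] at hcsw
    exact ENNReal.mul_ne_top hQt hRt hcsw
  have hAt : A ≠ ∞ := ne_top_of_le_ne_top (ENNReal.add_ne_top.2
    ⟨ENNReal.mul_ne_top ENNReal.ofReal_ne_top hXt, ENNReal.mul_ne_top ENNReal.ofReal_ne_top hQt⟩) hen
  lift S to NNReal using hS
  lift R to NNReal using hRt
  lift X to NNReal using hXt
  lift Q to NNReal using hQt
  lift E to NNReal using hEt
  lift A to NNReal using hAt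
  have h2 : (2:ℝ) ≤ n := by exact_mod_cast hn
  have r1 : (E:ℝ) + s ^ 2 * R = s ^ 2 * S := by
    have := congrArg ENNReal.toReal hsplit
    rw [ENNReal.toReal_add (by simp) (ENNReal.mul_ne_top ENNReal.ofReal_ne_top (by simp))] at this
    simpa [ENNReal.toReal_mul, ENNReal.toReal_ofReal hs2.le] using this
  have r2 : (X:ℝ) ^ 2 ≤ Q * R := by exact_mod_cast hcsw
  have r3 : (A:ℝ) ≤ s * X + (n - 2) / 2 * Q := by
    have hne : ENNReal.ofReal s * (X : ℝ≥0∞) + ENNReal.ofReal (((n:ℝ) - 2) / 2) * (Q : ℝ≥0∞) ≠ ∞ :=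
      ENNReal.add_ne_top.2 ⟨ENNReal.mul_ne_top ENNReal.ofReal_ne_top (by simp),
        ENNReal.mul_ne_top ENNReal.ofReal_ne_top (by simp)⟩
    have := ENNReal.toReal_mono hne hen
    rw [ENNReal.toReal_add (ENNReal.mul_ne_top ENNReal.ofReal_ne_top (by simp))
      (ENNReal.mul_ne_top ENNReal.ofReal_ne_top (by simp))] at this
    simpa [ENNReal.toReal_mul, ENNReal.toReal_ofReal hs.1.le,
      ENNReal.toReal_ofReal (show (0:ℝ) ≤ (n - 2) / 2 by linarith)] using this
  have hQ0 : Q ≠ 0 := by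
    rintro rfl
    have hX : (X:ℝ) = 0 := by
      have : (X:ℝ) ^ 2 ≤ 0 := by simpa using r2
      exact pow_eq_zero_iff two_ne_zero |>.1 (le_antisymm this (sq_nonneg _))
    rw [hX] at r3
    have : (A:ℝ) ≤ 0 := by simpa using r3
    exact hA (by exact_mod_cast le_antisymm this A.2)
  have hQ : (0:ℝ) < Q := by exact_mod_cast pos_iff_ne_zero.2 hQ0
  refine ⟨by exact_mod_cast hQ0, ?_⟩
  obtain ⟨α, hα, hαe⟩ : ∃ α : ℝ, 0 ≤ α ∧ α * (α + n - 2) = E / Q := by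
    have hd : (0:ℝ) ≤ E / Q := by positivity
    have hD : 0 ≤ ((n:ℝ) - 2) ^ 2 + 4 * (E / Q) := by positivity
    refine ⟨(-(n - 2) + Real.sqrt ((n - 2) ^ 2 + 4 * (E / Q))) / 2, ?_, ?_⟩
    · have : (n:ℝ) - 2 ≤ Real.sqrt ((n - 2) ^ 2 + 4 * (E / Q)) := Real.le_sqrt_of_sq_le (by linarith)
      linarith
    · have := Real.sq_sqrt hD
      linear_combination this / 4
  refine ⟨α, hα, ?_, ?_⟩
  · rw [hαe, ← ENNReal.ofReal_coe_nnreal (p := Q), ← ENNReal.ofReal_mul (by positivity),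
      div_mul_cancel₀ _ hQ.ne', ENNReal.ofReal_coe_nnreal]
  · simp only [ENNReal.coe_toReal]
    rw [← r1]
    have hE : (E:ℝ) = α * (α + n - 2) * Q := by rw [hαe, div_mul_cancel₀ _ hQ.ne']
    -- `2 α s X ≤ s² X² / Q + α² Q`, and `X² ≤ Q R`
    have h3 : 2 * α * s * X ≤ s ^ 2 * R + α ^ 2 * Q := by
      have h4 : s ^ 2 * (X:ℝ) ^ 2 ≤ s ^ 2 * (Q * R) := by gcongr
      have h5 := sq_nonneg (s * X - α * Q)
      refine le_of_mul_le_mul_right ?_ hQ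
      nlinarith
    have h6 : 2 * α * A ≤ 2 * α * (s * X + (n - 2) / 2 * Q) :=
      mul_le_mul_of_nonneg_left r3 (by positivity)
    rw [hE]
    linarith

end

/-! ### Monotonicity -/

section
variable {n : ℕ} {u : Euc n → ℝ}

/-- The factors of the functional in polar coordinates: the weight `|x|^(2-n)` cancels all but one
power of the radial density `s^(n-1)`. -/
lemma acf_eq_radEnergy (hn : 2 ≤ n) (hc : ContinuousOn u (ball 0 1)) {r : ℝ} (hr : r < 1) :
    ∫⁻ x in ball (0 : Euc n) r ∩ {x | 0 < u x},
      ENNReal.ofReal (‖fderiv ℝ u x‖ ^ 2 * ‖x‖ ^ ((2:ℝ) - (n:ℝ))) = radEnergy u r := by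
  have hset : ball (0 : Euc n) r ∩ {x | 0 < u x} = ball (0 : Euc n) r ∩ posSet u := by
    ext x
    constructor
    · exact fun h => ⟨h.1, ball_subset_ball hr.le h.1, h.2⟩
    · exact fun h => ⟨h.1, h.2.2⟩
  have hms : MeasurableSet (ball (0 : Euc n) r ∩ posSet u) :=
    measurableSet_ball.inter (isOpen_posSet hc).measurableSet
  have hF : Measurable fun x : Euc n =>
      ENNReal.ofReal (‖fderiv ℝ u x‖ ^ 2 * ‖x‖ ^ ((2:ℝ) - (n:ℝ))) :=
    (((measurable_fderiv ℝ u).norm.pow_const 2).mul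
      (measurable_norm.pow_const _)).ennreal_ofReal
  rw [hset, ← lintegral_indicator hms, lintegral_polar _ (hF.indicator hms) (by omega)]
  have e : radEnergy u r = ∫⁻ s in Ioi (0:ℝ), (Ioo 0 r).indicator (fun s => ENNReal.ofReal s *
      ∫⁻ θ : sphere (0 : Euc n) 1, gradSq u (s • (θ : Euc n)) ∂sphMeas n) s := by
    rw [setLIntegral_indicator measurableSet_Ioo,
      inter_eq_left.2 (show Ioo 0 r ⊆ Ioi (0:ℝ) from fun s hs => hs.1)]
    rfl
  rw [e]
  refine setLIntegral_congr_fun measurableSet_Ioi fun s (hs : 0 < s) => ?_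
  have hnorm : ∀ θ : sphere (0 : Euc n) 1, ‖s • (θ : Euc n)‖ = s := fun θ => by
    rw [norm_smul, norm_eq_of_mem_sphere, mul_one, Real.norm_of_nonneg hs.le]
  rcases lt_or_ge s r with h | h
  · rw [indicator_of_mem (show s ∈ Ioo 0 r from ⟨hs, h⟩)]
    have e1 : ∀ θ : sphere (0 : Euc n) 1, (ball (0 : Euc n) r ∩ posSet u).indicator (fun x =>
        ENNReal.ofReal (‖fderiv ℝ u x‖ ^ 2 * ‖x‖ ^ ((2:ℝ) - (n:ℝ)))) (s • (θ : Euc n)) =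
        ENNReal.ofReal (s ^ ((2:ℝ) - (n:ℝ))) * gradSq u (s • (θ : Euc n)) := by
      intro θ
      have hb : s • (θ : Euc n) ∈ ball (0 : Euc n) r := by rw [mem_ball_zero_iff, hnorm]; exact h
      by_cases hx : s • (θ : Euc n) ∈ posSet u
      · rw [indicator_of_mem (show s • (θ : Euc n) ∈ ball (0 : Euc n) r ∩ posSet u from ⟨hb, hx⟩),
          gradSq, indicator_of_mem hx, hnorm, mul_comm, ENNReal.ofReal_mul (by positivity)]
      · rw [indicator_of_notMem (fun h' => hx h'.2), gradSq, indicator_of_notMem hx, mul_zero]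
    rw [lintegral_congr e1, lintegral_const_mul' _ _ ENNReal.ofReal_ne_top, ← mul_assoc,
      ← ENNReal.ofReal_mul (by positivity)]
    congr 2
    rw [← Real.rpow_natCast, ← Real.rpow_add hs, Nat.cast_sub (by omega)]
    conv_rhs => rw [← Real.rpow_one s]
    congr 1
    push_cast
    ring
  · rw [indicator_of_notMem (fun h' : s ∈ Ioo 0 r => absurd h'.2 (not_lt.2 h))]
    have e1 : ∀ θ : sphere (0 : Euc n) 1, (ball (0 : Euc n) r ∩ posSet u).indicator (fun x =>
        ENNReal.ofReal (‖fderiv ℝ u x‖ ^ 2 * ‖x‖ ^ ((2:ℝ) - (n:ℝ)))) (s • (θ : Euc n)) = 0 := by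
      intro θ
      refine indicator_of_notMem (fun h' => ?_) _
      have := mem_ball_zero_iff.1 h'.1
      rw [hnorm] at this
      exact absurd this (not_lt.2 h)
    rw [lintegral_congr e1]
    simp

lemma radEnergy_mono {r₁ r₂ : ℝ} (h : r₁ ≤ r₂) : radEnergy u r₁ ≤ radEnergy u r₂ :=
  lintegral_mono_set (Ioo_subset_Ioo_right h)

/-- The density of `radEnergy u` with respect to the radius, as a real number. -/
noncomputable def radDens (u : Euc n → ℝ) (s : ℝ) : ℝ :=
  (ENNReal.ofReal s * ∫⁻ θ : sphere (0 : Euc n) 1, gradSq u (s • (θ : Euc n)) ∂sphMeas n).toReal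

lemma measurable_radDens_aux (hc : ContinuousOn u (ball 0 1)) : Measurable fun s : ℝ =>
    ENNReal.ofReal s * ∫⁻ θ : sphere (0 : Euc n) 1, gradSq u (s • (θ : Euc n)) ∂sphMeas n :=
  ENNReal.measurable_ofReal.mul (measurable_sphere_lintegral (measurable_gradSq hc))

lemma radDens_ae_lt_top (hc : ContinuousOn u (ball 0 1)) {r : ℝ} (ht : radEnergy u r ≠ ∞) :
    ∀ᵐ s ∂(volume.restrict (Ioo 0 r)),
      ENNReal.ofReal s * ∫⁻ θ : sphere (0 : Euc n) 1, gradSq u (s • (θ : Euc n)) ∂sphMeas n < ∞ :=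
  ae_lt_top (measurable_radDens_aux hc) ht

lemma radDens_intervalIntegrable (hc : ContinuousOn u (ball 0 1)) {r : ℝ} (hr : 0 ≤ r)
    (ht : radEnergy u r ≠ ∞) : IntervalIntegrable (radDens u) volume 0 r := by
  rw [intervalIntegrable_iff_integrableOn_Ioo_of_le hr]
  exact integrable_toReal_of_lintegral_ne_top (measurable_radDens_aux hc).aemeasurable ht

lemma integral_radDens (hc : ContinuousOn u (ball 0 1)) {r : ℝ} (hr : 0 ≤ r)
    (ht : radEnergy u r ≠ ∞) : ∫ s in (0:ℝ)..r, radDens u s = (radEnergy u r).toReal := by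
  rw [intervalIntegral.integral_of_le hr, integral_Ioc_eq_integral_Ioo]
  exact integral_toReal (measurable_radDens_aux hc).aemeasurable (radDens_ae_lt_top hc ht)

end

/-- If `a = ∫ f` and `b = ∫ g` satisfy `4 a b ≤ s (a b)'` almost everywhere, then `a b / s⁴` does not
decrease. The primitives `a` and `b` are only absolutely continuous. -/
lemma quotient_mono {f g : ℝ → ℝ} {r₁ r₂ : ℝ} (h1 : 0 < r₁) (h12 : r₁ ≤ r₂)
    (hf : IntervalIntegrable f volume 0 r₂) (hg : IntervalIntegrable g volume 0 r₂)
    (h : ∀ᵐ s, s ∈ Ioo r₁ r₂ → 4 * ((∫ t in (0:ℝ)..s, f t) * ∫ t in (0:ℝ)..s, g t) ≤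
      s * (f s * (∫ t in (0:ℝ)..s, g t) + (∫ t in (0:ℝ)..s, f t) * g s)) :
    (r₁ ^ 4)⁻¹ * ((∫ t in (0:ℝ)..r₁, f t) * ∫ t in (0:ℝ)..r₁, g t) ≤
    (r₂ ^ 4)⁻¹ * ((∫ t in (0:ℝ)..r₂, f t) * ∫ t in (0:ℝ)..r₂, g t) := by
  have h2 : 0 ≤ r₂ := h1.le.trans h12
  have hsub : uIcc r₁ r₂ ⊆ uIcc 0 r₂ := by
    rw [uIcc_of_le h12, uIcc_of_le h2]; exact Icc_subset_Icc_left h1.le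
  have acf := (hf.absolutelyContinuousOnInterval_intervalIntegral (c := 0) (by simp)).mono hsub
  have acg := (hg.absolutelyContinuousOnInterval_intervalIntegral (c := 0) (by simp)).mono hsub
  have acp : AbsolutelyContinuousOnInterval (fun s : ℝ => (s ^ 4)⁻¹) r₁ r₂ := by
    refine ContDiffOn.absolutelyContinuousOnInterval fun s hs => ?_
    rw [uIcc_of_le h12] at hs
    have hs0 : s ≠ 0 := (h1.trans_le hs.1).ne'
    exact ((contDiffAt_id.pow 4).inv (pow_ne_zero 4 hs0)).contDiffWithinAt
  have ac := acp.mul (acf.mul acg)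
  have hint := ac.integral_deriv_eq_sub
  have hnn : 0 ≤ ∫ s in r₁..r₂, deriv ((fun s : ℝ => (s ^ 4)⁻¹) *
      ((fun x => ∫ v in (0:ℝ)..x, f v) * fun x => ∫ v in (0:ℝ)..x, g v)) s := by
    rw [intervalIntegral.integral_of_le h12, integral_Ioc_eq_integral_Ioo]
    refine integral_nonneg_of_ae ?_
    refine (ae_restrict_iff' measurableSet_Ioo).2 ?_
    filter_upwards [h, hf.ae_hasDerivAt_integral, hg.ae_hasDerivAt_integral] with s hs hfs hgs hmem
    have hs' : s ∈ uIcc 0 r₂ := hsub (by rw [uIcc_of_le h12]; exact Ioo_subset_Icc_self hmem)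
    have d1 := hfs hs' 0 (by simp)
    have d2 := hgs hs' 0 (by simp)
    have hs0 : 0 < s := h1.trans hmem.1
    have d3 : HasDerivAt (fun s : ℝ => (s ^ 4)⁻¹) (-(4 * s ^ 3) / (s ^ 4) ^ 2) s := by
      exact ((hasDerivAt_pow 4 s).inv (pow_ne_zero 4 hs0.ne')).congr_deriv (by norm_num)
    have d4 := d3.mul (d1.mul d2)
    rw [d4.deriv]
    have key := hs hmem
    simp only [Pi.zero_apply, Pi.mul_apply]
    generalize (∫ t in (0:ℝ)..s, f t) = a at *
    generalize (∫ t in (0:ℝ)..s, g t) = b at *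
    have e : -(4 * s ^ 3) / (s ^ 4) ^ 2 * (a * b) + (s ^ 4)⁻¹ * (f s * b + a * g s) =
        (s ^ 5)⁻¹ * (s * (f s * b + a * g s) - 4 * (a * b)) := by
      field_simp
      ring
    rw [e]
    exact mul_nonneg (by positivity) (by linarith)
  rw [hint] at hnn
  simpa using hnn

/-- The monotonicity in the case where both energies are positive and finite. -/
lemma radEnergy_product_mono {n : ℕ} (hn : 2 ≤ n) {u v : Euc n → ℝ}
    (huc : ContinuousOn u (ball 0 1)) (hvc : ContinuousOn v (ball 0 1))
    (hu0 : ∀ x ∈ ball (0 : Euc n) 1, 0 ≤ u x) (hv0 : ∀ x ∈ ball (0 : Euc n) 1, 0 ≤ v x)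
    (huv : ∀ x ∈ ball (0 : Euc n) 1, u x * v x = 0)
    (huh : IsHarmonicOn u (posSet u)) (hvh : IsHarmonicOn v (posSet v))
    {r₁ r₂ : ℝ} (h1 : 0 < r₁) (h12 : r₁ ≤ r₂) (h2 : r₂ < 1)
    (hut : radEnergy u r₂ ≠ ∞) (hvt : radEnergy v r₂ ≠ ∞)
    (hun : radEnergy u r₁ ≠ 0) (hvn : radEnergy v r₁ ≠ 0) :
    (r₁ ^ 4)⁻¹ * ((radEnergy u r₁).toReal * (radEnergy v r₁).toReal) ≤
    (r₂ ^ 4)⁻¹ * ((radEnergy u r₂).toReal * (radEnergy v r₂).toReal) := by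
  have hr2 : 0 ≤ r₂ := h1.le.trans h12
  have tu : ∀ {s}, s ≤ r₂ → radEnergy u s ≠ ∞ := fun hs => ne_top_of_le_ne_top hut (radEnergy_mono hs)
  have tv : ∀ {s}, s ≤ r₂ → radEnergy v s ≠ ∞ := fun hs => ne_top_of_le_ne_top hvt (radEnergy_mono hs)
  have := quotient_mono h1 h12 (radDens_intervalIntegrable huc hr2 hut)
    (radDens_intervalIntegrable hvc hr2 hvt) ?_
  · rwa [integral_radDens huc h1.le (tu h12), integral_radDens hvc h1.le (tv h12),
      integral_radDens huc hr2 hut, integral_radDens hvc hr2 hvt] at this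
  have au := (ae_restrict_iff' measurableSet_Ioo).1 (radDens_ae_lt_top huc hut)
  have av := (ae_restrict_iff' measurableSet_Ioo).1 (radDens_ae_lt_top hvc hvt)
  filter_upwards [au, av] with s hus hvs hs
  have hs0 : 0 < s := h1.trans hs.1
  have hs1 : s ∈ Ioo (0:ℝ) 1 := ⟨hs0, hs.2.trans h2⟩
  have hne : ENNReal.ofReal s ≠ 0 := by simpa using hs0
  have fin : ∀ {S : ℝ≥0∞}, ENNReal.ofReal s * S < ∞ → S ≠ ∞ := by
    rintro S h rfl
    rw [ENNReal.mul_top hne] at h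
    exact lt_irrefl _ h
  obtain ⟨hQu, α, hα, hEu, hAu⟩ := exists_exponent hn huc hu0 huh hs1 (fin (hus ⟨hs0, hs.2⟩))
    fun h => hun (le_antisymm ((radEnergy_mono hs.1.le).trans h.le) zero_le)
  obtain ⟨hQv, β, hβ, hEv, hAv⟩ := exists_exponent hn hvc hv0 hvh hs1 (fin (hvs ⟨hs0, hs.2⟩))
    fun h => hvn (le_antisymm ((radEnergy_mono hs.1.le).trans h.le) zero_le)
  have hn2 : (2:ℝ) ≤ n := by exact_mod_cast hn
  have hball : ∀ θ ∈ sphere (0 : Euc n) 1, s • θ ∈ ball (0 : Euc n) 1 := fun θ hθ =>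
    smul_sphere_mem_ball (n := n) ⟨by linarith, hs1.2⟩ ⟨θ, hθ⟩
  have hsm : ∀ θ : Euc n, ContDiffAt ℝ 1 (fun y : Euc n => s • y) θ := fun θ =>
    (contDiff_const_smul s).contDiffAt
  have hαβ : 2 ≤ α + β := by
    -- the exponents may vanish, so both are enlarged by a small `η`
    refine le_of_forall_pos_le_add fun η hη => ?_
    have mono : ∀ γ : ℝ, 0 ≤ γ → γ * (γ + n - 2) ≤ (γ + η / 2) * (γ + η / 2 + n - 2) := by
      intro γ hγ
      exact mul_le_mul (by linarith) (by linarith) (by linarith) (by linarith)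
    have := friedland_hayman hn (v := fun y => u (s • y)) (w := fun y => v (s • y))
      (α := α + η / 2) (β := β + η / 2) (by linarith) (by linarith)
      (continuousOn_slice huc hs1) (continuousOn_slice hvc hs1)
      (fun θ hθ => hu0 _ (hball θ hθ)) (fun θ hθ => hv0 _ (hball θ hθ))
      (fun θ hθ h => ContDiffAt.comp θ ((harm_contDiffAt huc huh ⟨hball θ hθ, h⟩).of_le
        (by norm_num)) (hsm θ))
      (fun θ hθ h => ContDiffAt.comp θ ((harm_contDiffAt hvc hvh ⟨hball θ hθ, h⟩).of_le
        (by norm_num)) (hsm θ))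
      (fun θ hθ => huv _ (hball θ hθ)) hQu hQv
      (hEu.trans (mul_le_mul_left (ENNReal.ofReal_le_ofReal (mono α hα)) _))
      (hEv.trans (mul_le_mul_left (ENNReal.ofReal_le_ofReal (mono β hβ)) _))
    linarith
  rw [integral_radDens huc hs0.le (tu hs.2.le), integral_radDens hvc hs0.le (tv hs.2.le)]
  simp only [radDens, ENNReal.toReal_mul, ENNReal.toReal_ofReal hs0.le]
  have ha : 0 ≤ (radEnergy u s).toReal := ENNReal.toReal_nonneg
  have hb : 0 ≤ (radEnergy v s).toReal := ENNReal.toReal_nonneg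
  generalize (radEnergy u s).toReal = a at *
  generalize (radEnergy v s).toReal = b at *
  have m1 := mul_le_mul_of_nonneg_right hAu hb
  have m2 := mul_le_mul_of_nonneg_right hAv ha
  have m3 := mul_le_mul_of_nonneg_right hαβ (mul_nonneg ha hb)
  nlinarith

theorem stmt8 (n : ℕ) (hn : 3 ≤ n)
    (hp hm : EuclideanSpace ℝ (Fin n) → ℝ)
    (hpc : ContinuousOn hp (ball (0 : EuclideanSpace ℝ (Fin n)) 1))
    (hmc : ContinuousOn hm (ball (0 : EuclideanSpace ℝ (Fin n)) 1))
    (hpn : ∀ x ∈ ball (0 : EuclideanSpace ℝ (Fin n)) 1, 0 ≤ hp x)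
    (hmn : ∀ x ∈ ball (0 : EuclideanSpace ℝ (Fin n)) 1, 0 ≤ hm x)
    (hprod : ∀ x ∈ ball (0 : EuclideanSpace ℝ (Fin n)) 1, hp x * hm x = 0)
    (hph : IsHarmonicOn hp {x ∈ ball (0 : EuclideanSpace ℝ (Fin n)) 1 | 0 < hp x})
    (hmh : IsHarmonicOn hm {x ∈ ball (0 : EuclideanSpace ℝ (Fin n)) 1 | 0 < hm x}) :
    ∀ r₁ r₂ : ℝ, 0 < r₁ → r₁ ≤ r₂ → r₂ < 1 →
      acfPhi n hp hm r₁ ≤ acfPhi n hp hm r₂ := by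
  intro r₁ r₂ h1 h12 h2
  have hn2 : 2 ≤ n := by omega
  unfold acfPhi
  rw [acf_eq_radEnergy hn2 hpc (h12.trans_lt h2), acf_eq_radEnergy hn2 hmc (h12.trans_lt h2),
    acf_eq_radEnergy hn2 hpc h2, acf_eq_radEnergy hn2 hmc h2]
  by_cases hun : radEnergy hp r₁ = 0
  · simp [hun]
  by_cases hvn : radEnergy hm r₁ = 0
  · simp [hvn]
  -- with both energies nonzero, an infinite energy at `r₂` makes the right side infinite
  have hun2 : radEnergy hp r₂ ≠ 0 := fun h =>
    hun (le_antisymm ((radEnergy_mono h12).trans h.le) zero_le)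
  have hvn2 : radEnergy hm r₂ ≠ 0 := fun h =>
    hvn (le_antisymm ((radEnergy_mono h12).trans h.le) zero_le)
  have hi : (ENNReal.ofReal (r₂ ^ 4))⁻¹ ≠ 0 := ENNReal.inv_ne_zero.2 ENNReal.ofReal_ne_top
  by_cases hut : radEnergy hp r₂ = ∞
  · rw [hut, ENNReal.mul_top hi, ENNReal.top_mul hvn2]; exact le_top
  by_cases hvt : radEnergy hm r₂ = ∞
  · rw [hvt, ENNReal.mul_top (mul_ne_zero hi hun2)]; exact le_top
  have key := radEnergy_product_mono hn2 hpc hmc hpn hmn hprod hph hmh h1 h12 h2 hut hvt hun hvn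
  have conv : ∀ {r : ℝ}, 0 < r → r ≤ r₂ →
      (ENNReal.ofReal (r ^ 4))⁻¹ * radEnergy hp r * radEnergy hm r =
      ENNReal.ofReal ((r ^ 4)⁻¹ * ((radEnergy hp r).toReal * (radEnergy hm r).toReal)) := by
    intro r hr hr2
    have t1 : radEnergy hp r ≠ ∞ := ne_top_of_le_ne_top hut (radEnergy_mono hr2)
    have t2 : radEnergy hm r ≠ ∞ := ne_top_of_le_ne_top hvt (radEnergy_mono hr2)
    rw [ENNReal.ofReal_mul (by positivity), ENNReal.ofReal_mul ENNReal.toReal_nonneg,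
      ENNReal.ofReal_toReal t1, ENNReal.ofReal_toReal t2, ENNReal.ofReal_inv_of_pos (by positivity),
      mul_assoc]
  rw [conv h1 h12, conv (h1.trans_le h12) le_rfl]
  exact ENNReal.ofReal_le_ofReal key
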